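/- Every n-vertex (n ≥ 2) planar graph containing no Theta graph on 6 vertices as a subgraph has at most (18/7)n - 27/7 edges. -/

import Mathlib

open SimpleGraph

/-- `H` is a minor of `G`: there is an assignment of disjoint connected branch sets
of `G` to the vertices of `H` realizing all edges of `H`. -/
def HasMinor {V : Type*} {W : Type*} (G : SimpleGraph V) (H : SimpleGraph W) : Prop :=
  ∃ f : V → Option W,
    (∀ w : W, ∃ v, f v = some w) ∧
    (∀ w : W, (G.induce {v | f v = some w}).Preconnected) ∧
    (∀ w₁ w₂ : W, H.Adj w₁ w₂ →
      ∃ v₁ v₂, f v₁ = some w₁ ∧ f v₂ = some w₂ ∧ G.Adj v₁ v₂)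

/-- Planarity, via Wagner's theorem: no `K₅` minor and no `K₃,₃` minor. -/
def IsPlanar {V : Type*} (G : SimpleGraph V) : Prop :=
  ¬ HasMinor G (completeGraph (Fin 5)) ∧
    ¬ HasMinor G (completeBipartiteGraph (Fin 3) (Fin 3))

/-- `G` contains a Theta graph on 6 vertices: a 6-cycle together with a chord
joining two non-consecutive vertices of the cycle. -/
def HasTheta6 {V : Type*} (G : SimpleGraph V) : Prop :=
  ∃ v : Fin 6 → V, Function.Injective v ∧
    (∀ i : Fin 6, G.Adj (v i) (v (i + 1))) ∧
    ∃ i j : Fin 6, i ≠ j ∧ j ≠ i + 1 ∧ i ≠ j + 1 ∧ G.Adj (v i) (v j)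

/-!
A planar graph satisfies MacLane's condition: its cycle space over the field with two elements is
generated by a family of cycles of which at most two run through any edge. Let `G` be a planar graph
violating this with as few edges as possible, and `xy` an edge. The members of such a family for
`G / xy` that avoid the contracted vertex turn out to be pairwise edge-disjoint, so `G - x - y` is a
cactus. Together with the degree conditions that minimality imposes, this leaves only `K₅` and
`K₃,₃`. A sparse basis together with its sum, the outer face, is then the family of faces of a
planar graph, and the dimension of the cycle space gives Euler's inequality `e + 2 ≤ f + n` for it.

The theorem follows by induction on `n`, a vertex of degree at most two being deleted and a graph
with a cut vertex being split there. Otherwise, if there are at least seven faces, every face of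
length 4, 5 or more sends charge 2, 3 or 5 across each of its edges. As there is no `Θ₆`, the faces
close to a triangle are so restricted that triangles receive charge at least 3 on average over a
block of triangles sharing edges. Comparing `36 + (charge sent)` with `11 · (length)` face by face
yields `18 f ≤ 11 e`, which with Euler's inequality gives `7 e + 36 ≤ 18 n`.
-/

/-! ### Minors, contractions and planarity -/

section Planarity

variable {U V W : Type*} {H : SimpleGraph U} {G : SimpleGraph V} {K : SimpleGraph W}

/-- Minors pull back along a partial map with connected fibres through which every edge lifts. The
map need not be onto: the vertices it misses are isolated, hence useless for realizing `K`. -/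
theorem HasMinor.of_partialMap (π : V → Option U)
    (hfib : ∀ u, (G.induce {v | π v = some u}).Preconnected)
    (hadj : ∀ p q, H.Adj p q → ∃ p' q', π p' = some p ∧ π q' = some q ∧ G.Adj p' q')
    (hK : ∀ w, ∃ w', K.Adj w w') (h : HasMinor H K) : HasMinor G K := by
  obtain ⟨f, -, hconn, hedge⟩ := h
  have lift_edge : ∀ w₁ w₂, K.Adj w₁ w₂ → ∃ v₁ v₂, (π v₁).bind f = some w₁ ∧
      (π v₂).bind f = some w₂ ∧ G.Adj v₁ v₂ := by
    intro w₁ w₂ hw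
    obtain ⟨p, q, hp, hq, hpq⟩ := hedge w₁ w₂ hw
    obtain ⟨p', q', hp', hq', hpq'⟩ := hadj p q hpq
    exact ⟨p', q', by simp [hp', hp], by simp [hq', hq], hpq'⟩
  refine ⟨fun v => (π v).bind f, fun w => ?_, fun w => ?_, lift_edge⟩
  · obtain ⟨w', hw'⟩ := hK w
    obtain ⟨v, -, hv, -⟩ := lift_edge w w' hw'
    exact ⟨v, hv⟩
  · rintro ⟨a, ha⟩ ⟨b, hb⟩
    obtain ⟨p, hap, hpw⟩ := Option.bind_eq_some_iff.1 ha
    obtain ⟨q, hbq, hqw⟩ := Option.bind_eq_some_iff.1 hb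
    have in_fibre : ∀ {u v v'} (hu : f u = some w) (hv : π v = some u) (hv' : π v' = some u),
        (G.induce {v | (π v).bind f = some w}).Reachable
          ⟨v, by simp [hv, hu]⟩ ⟨v', by simp [hv', hu]⟩ := fun {u v v'} hu hv hv' =>
      (hfib u ⟨v, hv⟩ ⟨v', hv'⟩).map (SimpleGraph.induceHomOfLE G fun x hx => by
        simp only [Set.mem_ofPred_eq] at hx
        simp [hx, hu]).toHom
    have along : ∀ u : {u | f u = some w},
        Relation.ReflTransGen (H.induce {u | f u = some w}).Adj ⟨p, hpw⟩ u →
        ∀ (v) (hv : π v = some u.1), (G.induce {v | (π v).bind f = some w}).Reachable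
          ⟨a, ha⟩ ⟨v, by rw [Set.mem_ofPred_eq, hv]; exact u.2⟩ := by
      intro u hu
      induction hu with
      | refl => exact fun v hv => in_fibre hpw hap hv
      | @tail r s _ hrs ih =>
        intro v hv
        obtain ⟨r', s', hr', hs', hrs'⟩ := hadj r s hrs
        have hadj_lift : (G.induce {v | (π v).bind f = some w}).Adj
            ⟨r', by rw [Set.mem_ofPred_eq, hr']; exact r.2⟩
            ⟨s', by rw [Set.mem_ofPred_eq, hs']; exact s.2⟩ := hrs'
        exact ((ih r' hr').trans hadj_lift.reachable).trans (in_fibre s.2 hs' hv)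
    exact along ⟨q, hqw⟩ ((SimpleGraph.reachable_iff_reflTransGen _ _).1
      (hconn w ⟨p, hpw⟩ ⟨q, hqw⟩)) b hbq

theorem HasMinor.refl (K : SimpleGraph W) : HasMinor K K := by
  refine ⟨some, fun w => ⟨w, rfl⟩, fun w => ?_, fun a b hab => ⟨a, b, rfl, rfl, hab⟩⟩
  rintro ⟨a, ha⟩ ⟨b, hb⟩
  obtain rfl : a = b := Option.some_injective _ (ha.trans hb.symm)
  exact Reachable.rfl

theorem IsPlanar.of_partialMap (hp : IsPlanar G) (π : V → Option U)
    (hfib : ∀ u, (G.induce {v | π v = some u}).Preconnected)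
    (hadj : ∀ p q, H.Adj p q → ∃ p' q', π p' = some p ∧ π q' = some q ∧ G.Adj p' q') :
    IsPlanar H := by
  refine ⟨fun h => hp.1 (h.of_partialMap π hfib hadj fun w => ⟨w + 1, by simp⟩),
    fun h => hp.2 (h.of_partialMap π hfib hadj ?_)⟩
  rintro (w | w)
  · exact ⟨Sum.inr 0, by simp⟩
  · exact ⟨Sum.inl 0, by simp⟩

theorem IsPlanar.of_isContained (hp : IsPlanar G) (h : H ⊑ G) : IsPlanar H := by
  obtain ⟨φ⟩ := h
  have hinv := φ.injective.isPartialInv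
  refine hp.of_partialMap (Function.partialInv φ) (fun u => ?_) fun p q hpq =>
    ⟨φ p, φ q, (hinv _ _).2 rfl, (hinv _ _).2 rfl, φ.toHom.map_adj hpq⟩
  rintro ⟨a, ha⟩ ⟨b, hb⟩
  obtain rfl : a = b := ((hinv _ _).1 ha).symm.trans ((hinv _ _).1 hb)
  exact Reachable.rfl

theorem IsPlanar.mono {G' : SimpleGraph V} (hp : IsPlanar G) (h : G' ≤ G) : IsPlanar G' :=
  hp.of_isContained (.of_le h)

theorem IsPlanar.free_completeGraph_five (hp : IsPlanar G) : (completeGraph (Fin 5)).Free G :=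
  fun h => (hp.of_isContained h).1 (.refl _)

theorem IsPlanar.free_completeBipartiteGraph_three_three (hp : IsPlanar G) :
    (completeBipartiteGraph (Fin 3) (Fin 3)).Free G :=
  fun h => (hp.of_isContained h).2 (.refl _)

theorem HasTheta6.of_isContained (h : H ⊑ G) (hH : HasTheta6 H) : HasTheta6 G := by
  obtain ⟨φ⟩ := h
  obtain ⟨v, hv, hcyc, i, j, hij, hji, hij', hchord⟩ := hH
  exact ⟨φ ∘ v, φ.injective.comp hv, fun k => φ.toHom.map_adj (hcyc k), i, j, hij, hji, hij',
    φ.toHom.map_adj hchord⟩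

namespace Theta6

/-- Contraction of the edge `xy` into the vertex `x`. The vertex type does not change: the vertex
`y` becomes isolated. -/
def contractEdge (G : SimpleGraph V) (x y : V) : SimpleGraph V where
  Adj p q := p ≠ q ∧ p ≠ y ∧ q ≠ y ∧ (G.Adj p q ∨ (p = x ∧ G.Adj y q) ∨ (q = x ∧ G.Adj y p))
  symm := ⟨by
    rintro p q ⟨hpq, hp, hq, h | h | h⟩
    · exact ⟨hpq.symm, hq, hp, .inl h.symm⟩
    · exact ⟨hpq.symm, hq, hp, .inr (.inr h)⟩
    · exact ⟨hpq.symm, hq, hp, .inr (.inl h)⟩⟩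
  loopless := ⟨fun p h => h.1 rfl⟩

variable {x y : V}

open scoped Classical in
theorem exists_adj_of_contractEdge_adj {p q : V} (h : (contractEdge G x y).Adj p q) :
    ∃ p' q', Function.update id y x p' = p ∧ Function.update id y x q' = q ∧ G.Adj p' q' := by
  obtain ⟨-, hp, hq, h | ⟨rfl, h⟩ | ⟨rfl, h⟩⟩ := h
  · exact ⟨p, q, by simp [hp], by simp [hq], h⟩
  · exact ⟨y, q, by simp, by simp [hq], h⟩
  · exact ⟨p, y, by simp [hp], by simp, h.symm⟩

theorem _root_.IsPlanar.contractEdge (hp : IsPlanar G) (hxy : G.Adj x y) :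
    IsPlanar (contractEdge G x y) := by
  classical
  refine hp.of_partialMap (fun v => some (Function.update id y x v)) (fun u => ?_) fun p q h => ?_
  · rintro ⟨a, ha⟩ ⟨b, hb⟩
    have hab : a = b ∨ G.Adj a b := by
      simp only [Set.mem_ofPred_eq, Option.some_inj, Function.update_apply, id] at ha hb
      split_ifs at ha hb with hay hby hby <;> subst_vars
      exacts [.inl rfl, .inr hxy.symm, .inr hxy, .inl rfl]
    rcases hab with rfl | hab
    · exact Reachable.rfl
    · exact Adj.reachable (G := G.induce _) hab
  · simpa only [Option.some_inj] using exists_adj_of_contractEdge_adj h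

theorem ncard_edgeSet_contractEdge_lt [Finite V] (hxy : G.Adj x y) :
    (contractEdge G x y).edgeSet.ncard < G.edgeSet.ncard := by
  classical
  have himage : (contractEdge G x y).edgeSet ⊆
      Sym2.map (Function.update id y x) '' (G.edgeSet \ {s(x, y)}) := by
    intro e
    induction e with | _ p q
    intro hpq
    obtain ⟨p', q', rfl, rfl, h⟩ := exists_adj_of_contractEdge_adj hpq
    refine ⟨s(p', q'), ⟨h, fun he => hpq.1 ?_⟩, rfl⟩
    rcases Sym2.eq_iff.1 he with ⟨rfl, rfl⟩ | ⟨rfl, rfl⟩ <;> simp [Function.update_apply]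
  calc
    _ ≤ _ := Set.ncard_le_ncard himage (Set.toFinite _)
    _ ≤ (G.edgeSet \ {s(x, y)}).ncard := Set.ncard_image_le (Set.toFinite _)
    _ < _ := Set.ncard_sdiff_singleton_lt_of_mem hxy (Set.toFinite _)

theorem ncard_edgeSet_lt_of_le [Finite V] {G' : SimpleGraph V} (h : G' ≤ G) {a b : V}
    (hab : G.Adj a b) (hab' : ¬ G'.Adj a b) : G'.edgeSet.ncard < G.edgeSet.ncard :=
  Set.ncard_lt_ncard
    ((Set.ssubset_iff_of_subset (edgeSet_subset_edgeSet.2 h)).2 ⟨s(a, b), hab, hab'⟩)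
    (Set.toFinite _)

end Theta6

end Planarity

/-! ### The cycle space over the field with two elements -/

namespace Theta6

/-- Sets of edges on the vertex set `V`, encoded as functions to the field with two elements, so
that symmetric difference is addition. Loops and non-edges of the graph at hand are allowed; see
`chains`. -/
abbrev EdgeChain (V : Type*) := Sym2 V → ZMod 2

variable {V : Type*} {G H : SimpleGraph V} {S T : EdgeChain V} {a b v : V}

theorem eq_one_of_ne_zero {x : ZMod 2} (h : x ≠ 0) : x = 1 :=
  Fin.eq_one_of_ne_zero x h

theorem eq_of_add_eq_zero {M : Type*} [AddCommGroup M] [Module (ZMod 2) M] {x y : M}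
    (h : x + y = 0) : x = y := by
  rwa [← ZModModule.sub_eq_add, sub_eq_zero] at h

/-- The edge chains supported on the edges of `G`. -/
def chains (G : SimpleGraph V) : Submodule (ZMod 2) (EdgeChain V) where
  carrier := {S | ∀ e ∉ G.edgeSet, S e = 0}
  add_mem' := fun hS hT e he => by simp [hS e he, hT e he]
  zero_mem' := fun _ _ => rfl
  smul_mem' := fun c S hS e he => by simp [hS e he]

theorem mem_edgeSet_of_ne_zero (hS : S ∈ chains G) {e : Sym2 V} (he : S e ≠ 0) : e ∈ G.edgeSet :=
  not_imp_comm.1 (hS e) he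

theorem adj_of_ne_zero (hS : S ∈ chains G) (h : S s(a, b) ≠ 0) : G.Adj a b :=
  mem_edgeSet_of_ne_zero hS h

theorem eq_zero_of_not_adj (hS : S ∈ chains G) (h : ¬ G.Adj a b) : S s(a, b) = 0 :=
  hS _ h

theorem mem_chains_iff : S ∈ chains G ↔ ∀ a b, S s(a, b) ≠ 0 → G.Adj a b := by
  refine ⟨fun hS a b => adj_of_ne_zero hS, fun h e => ?_⟩
  induction e with | _ a b
  exact not_imp_comm.1 (h a b)

theorem chains_mono (h : G ≤ H) : chains G ≤ chains H :=
  fun _ hS => mem_chains_iff.2 fun _ _ hab => h (adj_of_ne_zero hS hab)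

/-- The edge chain with the single edge `ab`. -/
noncomputable def edgeChain (a b : V) : EdgeChain V := Set.indicator {s(a, b)} 1

/-- The vertex chain with the single vertex `v`. -/
noncomputable def vertexChain (v : V) : V → ZMod 2 := Set.indicator {v} 1

theorem edgeChain_ne_zero_iff {e : Sym2 V} : edgeChain a b e ≠ 0 ↔ e = s(a, b) := by
  simp [edgeChain]

@[simp]
theorem edgeChain_self (a b : V) : edgeChain a b s(a, b) = 1 := by
  simp [edgeChain]

theorem edgeChain_eq_zero {e : Sym2 V} (h : e ≠ s(a, b)) : edgeChain a b e = 0 := by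
  simpa [edgeChain] using h

theorem edgeChain_comm (a b : V) : edgeChain a b = edgeChain b a := by
  rw [edgeChain, Sym2.eq_swap, ← edgeChain]

theorem edgeChain_mem_chains (h : G.Adj a b) : edgeChain a b ∈ chains G :=
  fun _ he => edgeChain_eq_zero fun heq => he (heq ▸ h)

/-- The edge set of the triangle on `v`, `a`, `b`. -/
noncomputable def triangle (v a b : V) : EdgeChain V :=
  edgeChain v a + edgeChain v b + edgeChain a b

theorem triangle_eq_one_iff (hva : v ≠ a) (hvb : v ≠ b) (hab : a ≠ b) {e : Sym2 V} :
    triangle v a b e = 1 ↔ e = s(v, a) ∨ e = s(v, b) ∨ e = s(a, b) := by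
  classical
  have h : ∀ {c d}, edgeChain c d e = if e = s(c, d) then 1 else 0 := by
    simp [edgeChain, Set.indicator_apply]
  simp only [triangle, Pi.add_apply, h]
  split_ifs with h₁ h₂ h₃ <;> subst_vars <;> simp_all [CharTwo.add_self_eq_zero]

theorem eq_of_triangle_ne_zero {e : Sym2 V} (he : triangle v a b e ≠ 0) :
    e = s(v, a) ∨ e = s(v, b) ∨ e = s(a, b) := by
  contrapose! he
  simp [triangle, edgeChain_eq_zero he.1, edgeChain_eq_zero he.2.1, edgeChain_eq_zero he.2.2]

theorem sum_sum_eq_zero (hS : S ∈ chains G) (A : Finset V) :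
    ∑ v ∈ A, ∑ u ∈ A, S s(v, u) = 0 := by
  rw [← Finset.sum_product']
  refine Finset.sum_involution (fun p _ => p.swap) (fun p _ => ?_) (fun p _ hp heq => hp ?_)
    (fun p hp => by simpa [and_comm] using hp) fun p _ => p.swap_swap
  · rw [Prod.fst_swap, Prod.snd_swap, Sym2.eq_swap, ZModModule.add_self]
  · rw [show p.2 = p.1 from congrArg Prod.fst heq]
    exact eq_zero_of_not_adj hS G.irrefl

variable [Fintype V]

/-- The boundary map, sending a set of edges to the set of vertices of odd degree. The value
of the chain on loops is counted once, which is harmless since graphs have no loops. -/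
def boundary : EdgeChain V →ₗ[ZMod 2] (V → ZMod 2) where
  toFun S v := ∑ u, S s(v, u)
  map_add' S T := by funext v; simp [Finset.sum_add_distrib]
  map_smul' c S := by funext v; simp [Finset.mul_sum]

theorem boundary_apply (S : EdgeChain V) (v : V) : boundary S v = ∑ u, S s(v, u) := rfl

theorem boundary_edgeChain (h : a ≠ b) :
    boundary (edgeChain a b) = vertexChain a + vertexChain b := by
  funext v
  rw [boundary_apply, Pi.add_apply]
  rcases eq_or_ne v a with rfl | hva
  · rw [Finset.sum_eq_single b
      (fun u _ hu => edgeChain_eq_zero fun he => hu (Sym2.congr_right.1 he)) (by simp)]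
    simp [vertexChain, h]
  rcases eq_or_ne v b with rfl | hvb
  · rw [edgeChain_comm, Finset.sum_eq_single a
      (fun u _ hu => edgeChain_eq_zero fun he => hu (Sym2.congr_right.1 he)) (by simp)]
    simp [vertexChain, hva]
  · rw [Finset.sum_eq_zero fun u _ => edgeChain_eq_zero fun he => ?_]
    · simp [vertexChain, hva, hvb]
    · rcases Sym2.eq_iff.1 he with ⟨rfl, -⟩ | ⟨rfl, -⟩ <;> contradiction

theorem exists_chain_boundary_eq_of_walk (w : H.Walk a b) : ∃ P ∈ chains H,
    boundary P = vertexChain a + vertexChain b ∧ ∀ e, P e ≠ 0 → e ∈ w.edges := by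
  induction w with
  | nil => exact ⟨0, zero_mem _, by rw [ZModModule.add_self, map_zero], fun _ h => absurd rfl h⟩
  | @cons a c b hac _ ih =>
    obtain ⟨P, hP, hPb, hPe⟩ := ih
    refine ⟨edgeChain a c + P, add_mem (edgeChain_mem_chains hac) hP, ?_, fun e he => ?_⟩
    · rw [map_add, hPb, boundary_edgeChain hac.ne, add_assoc, ← add_assoc (vertexChain c),
        ZModModule.add_self, zero_add]
    · rw [Walk.edges_cons, List.mem_cons]
      by_contra! hn
      refine he ?_
      rw [Pi.add_apply, edgeChain_eq_zero hn.1, of_not_not fun h => hn.2 (hPe e h), add_zero]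

theorem exists_chain_boundary_eq (h : H.Reachable a b) :
    ∃ P ∈ chains H, boundary P = vertexChain a + vertexChain b :=
  h.elim fun w =>
    let ⟨P, hP, hb, _⟩ := exists_chain_boundary_eq_of_walk w
    ⟨P, hP, hb⟩

theorem sum_boundary [DecidableEq V] (hS : S ∈ chains G) (A : Finset V) :
    ∑ v ∈ A, boundary S v = ∑ v ∈ A, ∑ u ∈ Aᶜ, S s(v, u) := by
  simp only [boundary_apply, ← Finset.sum_add_sum_compl A, Finset.sum_add_distrib,
    sum_sum_eq_zero hS, zero_add]

/-- The cycle space of `G`: the sets of edges of `G` that meet every vertex an even number of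
times. -/
def cycleSpace (G : SimpleGraph V) : Submodule (ZMod 2) (EdgeChain V) :=
  chains G ⊓ LinearMap.ker boundary

theorem mem_cycleSpace : S ∈ cycleSpace G ↔ S ∈ chains G ∧ boundary S = 0 := by
  rw [cycleSpace, Submodule.mem_inf, LinearMap.mem_ker]

theorem mem_chains_of_mem_cycleSpace (hS : S ∈ cycleSpace G) : S ∈ chains G :=
  (mem_cycleSpace.1 hS).1

theorem boundary_eq_zero (hS : S ∈ cycleSpace G) : boundary S = 0 :=
  (mem_cycleSpace.1 hS).2

theorem cycleSpace_mono (h : G ≤ H) : cycleSpace G ≤ cycleSpace H :=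
  inf_le_inf_right _ (chains_mono h)

theorem sum_star_eq_zero (hS : S ∈ cycleSpace G) (v : V) : ∑ u, S s(v, u) = 0 :=
  congrFun (boundary_eq_zero hS) v

theorem star_eq_zero (hS : S ∈ cycleSpace G) (h : ∀ u, G.Adj v u → u = a) : S s(v, a) = 0 := by
  rw [← sum_star_eq_zero hS v, Finset.sum_eq_single a _ (by simp)]
  exact fun u _ hu => eq_zero_of_not_adj (mem_chains_of_mem_cycleSpace hS) (mt (h u) hu)

theorem star_pair_eq (hS : boundary S v = 0) (hab : a ≠ b)
    (h : ∀ u, u ≠ a → u ≠ b → S s(v, u) = 0) : S s(v, a) = S s(v, b) := by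
  classical
  apply eq_of_add_eq_zero
  rw [← hS, boundary_apply, ← Finset.sum_pair (f := fun u => S s(v, u)) hab]
  refine Finset.sum_subset (Finset.subset_univ _) fun u _ hu => ?_
  simp only [Finset.mem_insert, Finset.mem_singleton, not_or] at hu
  exact h u hu.1 hu.2

theorem star_triple_sum {c : V} (hS : boundary S v = 0) (hab : a ≠ b) (hac : a ≠ c) (hbc : b ≠ c)
    (h : ∀ u, u ≠ a → u ≠ b → u ≠ c → S s(v, u) = 0) :
    S s(v, a) + S s(v, b) + S s(v, c) = 0 := by
  classical
  rw [← hS, boundary_apply, add_assoc, ← Finset.sum_pair (f := fun u => S s(v, u)) hbc,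
    ← Finset.sum_insert (f := fun u => S s(v, u)) (by simp [hab, hac])]
  refine Finset.sum_subset (Finset.subset_univ _) fun u _ hu => ?_
  simp only [Finset.mem_insert, Finset.mem_singleton, not_or] at hu
  exact h u hu.1 hu.2.1 hu.2.2

theorem boundary_triangle (hva : v ≠ a) (hvb : v ≠ b) (hab : a ≠ b) :
    boundary (triangle v a b) = 0 := by
  rw [triangle, map_add, map_add, boundary_edgeChain hva, boundary_edgeChain hvb,
    boundary_edgeChain hab]
  calc _ = (vertexChain v + vertexChain v) + (vertexChain a + vertexChain a)
        + (vertexChain b + vertexChain b) := by abel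
    _ = 0 := by simp only [ZModModule.add_self]

theorem triangle_mem_cycleSpace (hva : G.Adj v a) (hvb : G.Adj v b) (hab : G.Adj a b) :
    triangle v a b ∈ cycleSpace G :=
  mem_cycleSpace.2 ⟨add_mem (add_mem (edgeChain_mem_chains hva) (edgeChain_mem_chains hvb))
    (edgeChain_mem_chains hab), boundary_triangle hva.ne hvb.ne hab.ne⟩

end Theta6

/-! ### Sparse generating families of the cycle space -/

namespace Theta6

section Sparse

variable {V ι κ : Type*} {F : ι → EdgeChain V} {f : κ → EdgeChain V} {D : EdgeChain V} {e : Sym2 V}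
  {i j : ι}

/-- A family of edge sets is sparse if every edge lies in at most two of its members. -/
def IsSparse (F : ι → EdgeChain V) : Prop :=
  ∀ e i j k, F i e ≠ 0 → F j e ≠ 0 → F k e ≠ 0 → i = j ∨ i = k ∨ j = k

theorem IsSparse.optionElim (hF : IsSparse F)
    (hD : ∀ e i j, D e ≠ 0 → F i e ≠ 0 → F j e ≠ 0 → i = j) :
    IsSparse fun o : Option ι => o.elim D F := by
  rintro e (_ | i) (_ | j) (_ | k) hi hj hk
  · simp
  · simp
  · simp
  · simp [hD e j k hi hj hk]
  · simp
  · simp [hD e i k hj hi hk]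
  · simp [hD e i j hk hi hj]
  · simpa only [Option.some_inj] using hF e i j k hi hj hk

theorem IsSparse.split [DecidableEq ι] (hF : IsSparse F) {o : Option ι}
    (ho : ∀ e, D e ≠ 0 → (∃ i ∈ o, F i e ≠ 0) ∨ ∀ i, F i e = 0) :
    IsSparse fun p : Option ι => p.elim D fun i => if i ∈ o then F i + D else F i := by
  have on : ∀ e i j, D e ≠ 0 → (if i ∈ o then F i + D else F i) e ≠ 0 →
      (if j ∈ o then F j + D else F j) e ≠ 0 → i = j := by
    intro e i j he hi hj
    simp only [apply_ite (fun S : EdgeChain V => S e), Pi.add_apply] at hi hj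
    rcases ho e he with ⟨k, hko, hk⟩ | h0
    · have off : ∀ i, (if i ∈ o then F i e + D e else F i e) ≠ 0 → F i e ≠ 0 ∧ i ≠ k := by
        intro i hi
        refine (ne_or_eq i k).elim (fun hik => ?_) fun hik => absurd hi ?_
        · rw [if_neg fun hio => hik (Option.mem_unique hio hko)] at hi
          exact ⟨hi, hik⟩
        · rw [hik, if_pos hko, eq_one_of_ne_zero hk, eq_one_of_ne_zero he, not_not,
            CharTwo.add_self_eq_zero]
      rcases hF e i j k (off i hi).1 (off j hj).1 hk with h | h | h
      exacts [h, absurd h (off i hi).2, absurd h (off j hj).2]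
    · exact Option.mem_unique (Not.imp_symm (fun h => by rw [if_neg h, h0]) hi)
        (Not.imp_symm (fun h => by rw [if_neg h, h0]) hj)
  refine IsSparse.optionElim (fun e i j k hi hj hk => ?_) on
  by_cases he : D e = 0
  · have off : ∀ {i}, (if i ∈ o then F i + D else F i) e ≠ 0 → F i e ≠ 0 := by
      intro i hi
      split_ifs at hi <;> simpa [he] using hi
    exact hF e i j k (off hi) (off hj) (off hk)
  · exact .inl (on e i j he hi hj)

theorem IsSparse.sumElim (hF : IsSparse fun o : Option ι => o.elim D F) (hf : IsSparse f)
    (h : ∀ e k, f k e ≠ 0 → (D e ≠ 0 ∧ ∀ l, f l e ≠ 0 → k = l) ∨ ∀ i, F i e = 0) :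
    IsSparse (Sum.elim f F) := by
  have hF_unique : ∀ {e k i j}, f k e ≠ 0 → F i e ≠ 0 → F j e ≠ 0 → i = j := by
    intro e k i j hk hi hj
    obtain ⟨he, -⟩ := (h e k hk).resolve_right fun h => hi (h i)
    simpa using hF e none (some i) (some j) he hi hj
  have hf_unique : ∀ {e k l i}, f k e ≠ 0 → f l e ≠ 0 → F i e ≠ 0 → k = l :=
    fun {e k l i} hk hl hi => ((h e k hk).resolve_right fun h => hi (h i)).2 l hl
  rintro e (k | i) (l | j) (m | n) h₁ h₂ h₃ <;> simp only [Sum.elim_inl, Sum.elim_inr] at h₁ h₂ h₃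
  · simpa only [Sum.inl.injEq] using hf e k l m h₁ h₂ h₃
  · simp [hf_unique h₁ h₂ h₃]
  · simp [hf_unique h₁ h₃ h₂]
  · simp [hF_unique h₁ h₂ h₃]
  · simp [hf_unique h₂ h₃ h₁]
  · simp [hF_unique h₂ h₁ h₃]
  · simp [hF_unique h₃ h₁ h₂]
  · simpa only [Option.some_inj, Sum.inr.injEq] using hF e (some i) (some j) (some n) h₁ h₂ h₃

theorem IsSparse.sum_mul_eq_add (hF : IsSparse F) {A : Finset ι} {b : ι → ZMod 2} (hi : i ∈ A)
    (hj : j ∈ A) (hij : i ≠ j) (hie : F i e ≠ 0) (hje : F j e ≠ 0) :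
    ∑ k ∈ A, b k * F k e = b i + b j := by
  classical
  rw [← Finset.sum_subset (s₁ := {i, j}) (by simp [Finset.insert_subset_iff, hi, hj]),
    Finset.sum_pair hij, eq_one_of_ne_zero hie, eq_one_of_ne_zero hje, mul_one, mul_one]
  intro k _ hk
  simp only [Finset.mem_insert, Finset.mem_singleton, not_or] at hk
  refine mul_eq_zero_of_right _ (not_not.1 fun hke => ?_)
  rcases hF e i j k hie hje hke with h | h | h
  exacts [hij h, hk.1 h.symm, hk.2 h.symm]

theorem IsSparse.sum_eq_zero (hF : IsSparse F) {A : Finset ι} (hi : i ∈ A) (hj : j ∈ A)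
    (hij : i ≠ j) (hie : F i e ≠ 0) (hje : F j e ≠ 0) : (∑ k ∈ A, F k) e = 0 := by
  simpa [CharTwo.add_self_eq_zero] using
    hF.sum_mul_eq_add (b := fun _ => 1) hi hj hij hie hje

theorem exists_ne_of_sum_mul_eq_zero [Fintype ι] {c : ι → ZMod 2} (h : ∑ i, c i * F i e = 0)
    (hc : c i ≠ 0) (hi : F i e ≠ 0) : ∃ j, j ≠ i ∧ c j ≠ 0 ∧ F j e ≠ 0 := by
  contrapose! h
  rw [Finset.sum_eq_single i (fun j _ hj => mul_eq_zero.2 <| or_iff_not_imp_left.2 (h j hj))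
    (by simp)]
  exact mul_ne_zero hc hi

theorem exists_ne_of_sum_eq_zero [Fintype ι] (h : ∑ i, F i = 0) (hi : F i e ≠ 0) :
    ∃ j, j ≠ i ∧ F j e ≠ 0 := by
  have he : ∑ i, (1 : ι → ZMod 2) i * F i e = 0 := by
    simpa [Finset.sum_apply] using congrFun h e
  obtain ⟨j, hj, -, hje⟩ := exists_ne_of_sum_mul_eq_zero he one_ne_zero hi
  exact ⟨j, hj, hje⟩

theorem sum_optionElim_sum [Fintype ι] (F : ι → EdgeChain V) :
    ∑ o : Option ι, o.elim (∑ i, F i) F = 0 := by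
  rw [Fintype.sum_option]
  exact ZModModule.add_self _

end Sparse

variable {V ι : Type*} [Fintype V] {G K : SimpleGraph V} {F : ι → EdgeChain V} {D S : EdgeChain V}

/-- A sparse family of cycles of `G` generating the cycle space: MacLane's combinatorial
substitute for the face boundaries of a plane drawing of `G`. -/
structure IsSparseGenerating (G : SimpleGraph V) (F : ι → EdgeChain V) : Prop where
  mem : ∀ i, F i ∈ cycleSpace G
  le_span : cycleSpace G ≤ Submodule.span (ZMod 2) (Set.range F)
  sparse : IsSparse F

/-- MacLane's planarity condition. -/
def IsMacLane (G : SimpleGraph V) : Prop :=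
  ∃ (ι : Type) (_ : Fintype ι) (F : ι → EdgeChain V), IsSparseGenerating G F

theorem IsSparseGenerating.exists_coeff [Fintype ι] (hF : IsSparseGenerating G F)
    (hS : S ∈ cycleSpace G) : ∃ c : ι → ZMod 2, ∑ i, c i • F i = S :=
  (Submodule.mem_span_range_iff_exists_fun _).1 (hF.le_span hS)

theorem IsSparseGenerating.optionElim_sum [Fintype ι] (hF : IsSparseGenerating G F) :
    IsSparseGenerating G fun o : Option ι => o.elim (∑ i, F i) F := by
  classical
  refine ⟨?_, ?_, ?_⟩
  · rintro (_ | i)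
    exacts [sum_mem fun i _ => hF.mem i, hF.mem i]
  · exact hF.le_span.trans (Submodule.span_mono (Set.range_subset_iff.2 fun i => ⟨some i, rfl⟩))
  · refine hF.sparse.optionElim fun e i j he hi hj => not_imp_comm.1 (fun hij => ?_) he
    exact hF.sparse.sum_eq_zero (Finset.mem_univ i) (Finset.mem_univ j) hij hi hj

theorem IsMacLane.exists_sum_eq_zero (hG : IsMacLane G) :
    ∃ (ι : Type) (_ : Fintype ι) (F : ι → EdgeChain V), IsSparseGenerating G F ∧ ∑ i, F i = 0 :=
  let ⟨ι, _, F, hF⟩ := hG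
  ⟨Option ι, inferInstance, _, hF.optionElim_sum, sum_optionElim_sum F⟩

/-- The members of a vanishing sum occupy the star of `v` in sectors: a cycle enters the sectors
of the members with nonzero coefficient as often as it leaves them. -/
theorem IsSparseGenerating.sum_sector_eq_zero [Fintype ι] (hF : IsSparseGenerating G F) {v : V}
    {c : ι → ZMod 2} (hc : ∀ u, (∑ i, c i • F i) s(v, u) = 0) {A : Finset V}
    (hA : ∀ u, u ∈ A ↔ ∃ i, c i ≠ 0 ∧ F i s(v, u) ≠ 0) (hS : S ∈ cycleSpace G) :
    ∑ u ∈ A, S s(v, u) = 0 := by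
  refine Submodule.span_induction (p := fun S _ => ∑ u ∈ A, S s(v, u) = 0) ?_ (by simp)
    (fun S T _ _ hS hT => by simp [Finset.sum_add_distrib, hS, hT])
    (fun c S _ hS => by simp [← Finset.mul_sum, hS]) (hF.le_span hS)
  rintro _ ⟨j, rfl⟩
  by_cases hj : c j = 0
  · refine Finset.sum_eq_zero fun u hu => ?_
    obtain ⟨i, hi, hiu⟩ := (hA u).1 hu
    by_contra hju
    obtain ⟨k, hki, hk, hku⟩ := exists_ne_of_sum_mul_eq_zero
      (by simpa [Finset.sum_apply] using hc u) hi hiu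
    rcases hF.sparse _ i k j hiu hku hju with h | h | h
    exacts [hki h.symm, hi (h ▸ hj), hk (h ▸ hj)]
  · rw [← sum_star_eq_zero (hF.mem j) v]
    exact Finset.sum_subset (Finset.subset_univ _) fun u _ hu =>
      not_imp_comm.1 (fun hne => (hA u).2 ⟨j, hj, hne⟩) hu

theorem IsSparseGenerating.exists_of_exists_sector [Fintype ι] (hF : IsSparseGenerating G F)
    {v a b : V} {c : ι → ZMod 2} (hc : ∀ u, (∑ i, c i • F i) s(v, u) = 0)
    (hS : S ∈ cycleSpace G) (hu : ∀ u, u ≠ a → u ≠ b → S s(v, u) = 0) (ha : S s(v, a) ≠ 0)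
    (h : ∃ i, c i ≠ 0 ∧ F i s(v, a) ≠ 0) : ∃ i, c i ≠ 0 ∧ F i s(v, b) ≠ 0 := by
  classical
  by_contra hb
  apply ha
  rw [← hF.sum_sector_eq_zero hc
    (A := Finset.univ.filter fun u => ∃ i, c i ≠ 0 ∧ F i s(v, u) ≠ 0) (by simp) hS]
  refine (Finset.sum_eq_single_of_mem a (by simpa using h) fun u hmem hua => hu u hua ?_).symm
  rintro rfl
  exact hb (Finset.mem_filter.1 hmem).2

/-- The member `o` plays the face of `K` that is cut into the faces `f`. -/
theorem IsSparseGenerating.isMacLane_of_refinement {ι κ : Type} [Finite ι] [Fintype κ]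
    {F : ι → EdgeChain V} {f : κ → EdgeChain V} (hF : IsSparseGenerating K F) (hKG : K ≤ G)
    (hf : ∀ k, f k ∈ cycleSpace G) (hfs : IsSparse f)
    (hspan : cycleSpace G ≤ cycleSpace K ⊔ Submodule.span (ZMod 2) (Set.range f))
    (hfF : ∀ e k l, k ≠ l → f k e ≠ 0 → f l e ≠ 0 → ∀ i, F i e = 0) (o : Option ι)
    (ho : ∀ e, (∑ k, f k) e ≠ 0 → (∃ i ∈ o, F i e ≠ 0) ∨ ∀ i, F i e = 0) : IsMacLane G := by
  classical
  have := Fintype.ofFinite ι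
  set D := ∑ k, f k with hD
  let g : ι → EdgeChain V := fun i => if i ∈ o then F i + D else F i
  have hf' : Set.range f ⊆ Submodule.span (ZMod 2) (Set.range (Sum.elim f g)) :=
    (Set.range_subset_iff.2 fun k => Submodule.subset_span ⟨.inl k, rfl⟩)
  have hD' : D ∈ Submodule.span (ZMod 2) (Set.range (Sum.elim f g)) :=
    sum_mem fun k _ => hf' ⟨k, rfl⟩
  refine ⟨κ ⊕ ι, inferInstance, Sum.elim f g, ?_, hspan.trans (sup_le (hF.le_span.trans
    (Submodule.span_le.2 (Set.range_subset_iff.2 fun i => ?_))) (Submodule.span_le.2 hf')),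
    (hF.sparse.split ho).sumElim hfs fun e k hk => ?_⟩
  · rintro (k | i)
    · exact hf k
    · simp only [Sum.elim_inr, g]
      split_ifs
      exacts [add_mem (cycleSpace_mono hKG (hF.mem i)) (sum_mem fun k _ => hf k),
        cycleSpace_mono hKG (hF.mem i)]
  · have hi : g i ∈ Submodule.span (ZMod 2) (Set.range (Sum.elim f g)) :=
      Submodule.subset_span ⟨.inr i, rfl⟩
    simp only [g] at hi
    split_ifs at hi
    exacts [(Submodule.add_mem_iff_left _ hD').1 hi, hi]
  · by_cases h : ∃ l, k ≠ l ∧ f l e ≠ 0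
    · obtain ⟨l, hkl, hl⟩ := h
      have hDe : D e = 0 := hfs.sum_eq_zero (Finset.mem_univ k) (Finset.mem_univ l) hkl hk hl
      refine .inr fun i => ?_
      split_ifs <;> simp [hDe, hfF e k l hkl hk hl i]
    · push Not at h
      have huniq : ∀ l, f l e ≠ 0 → k = l := fun l => not_imp_comm.1 (h l)
      refine .inl ⟨?_, huniq⟩
      rwa [hD, Finset.sum_apply, Finset.sum_eq_single k (fun l _ hlk => h l hlk.symm) (by simp)]

/-- The member `o` plays the face across which `D` is drawn; it is split into two faces. -/
theorem IsSparseGenerating.isMacLane_of_split {ι : Type} [Finite ι] {F : ι → EdgeChain V}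
    (hF : IsSparseGenerating K F) (hKG : K ≤ G) (hD : D ∈ cycleSpace G)
    (hred : ∀ S ∈ cycleSpace G, S ∈ cycleSpace K ∨ S + D ∈ cycleSpace K) (o : Option ι)
    (ho : ∀ e, D e ≠ 0 → (∃ i ∈ o, F i e ≠ 0) ∨ ∀ i, F i e = 0) : IsMacLane G := by
  refine hF.isMacLane_of_refinement (f := fun _ : Unit => D) hKG (fun _ => hD)
    (fun _ _ _ _ _ _ _ => .inl rfl) (fun S hS => ?_) (fun _ _ _ hkl => absurd rfl hkl) o (by simpa)
  have hD' : D ∈ Submodule.span (ZMod 2) (Set.range fun _ : Unit => D) :=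
    Submodule.subset_span ⟨(), rfl⟩
  refine (hred S hS).elim (Submodule.mem_sup_left ·) fun h => ?_
  exact (Submodule.add_mem_iff_left _ (Submodule.mem_sup_right hD')).1 (Submodule.mem_sup_left h)

theorem IsMacLane.exists_unique_at (hG : IsMacLane G) (e : Sym2 V) :
    ∃ (ι : Type) (_ : Fintype ι) (F : ι → EdgeChain V), IsSparseGenerating G F ∧
      ∀ i j, F i e ≠ 0 → F j e ≠ 0 → i = j := by
  classical
  obtain ⟨ι, _, F, hF, hsum⟩ := hG.exists_sum_eq_zero
  by_cases he : ∀ i, F i e = 0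
  · exact ⟨ι, inferInstance, F, hF, fun i _ hi => absurd (he i) hi⟩
  obtain ⟨k, hk⟩ := not_forall.1 he
  have supp : ∀ {i e'}, (if i = k then 0 else F i) e' ≠ 0 → F i e' ≠ 0 ∧ i ≠ k := by
    intro i e' hi
    split_ifs at hi with h
    exacts [absurd rfl hi, ⟨hi, h⟩]
  refine ⟨ι, inferInstance, fun i => if i = k then 0 else F i, ⟨fun i => ?_, hF.le_span.trans ?_,
    fun e' i j l hi hj hl => hF.sparse e' i j l (supp hi).1 (supp hj).1 (supp hl).1⟩, ?_⟩
  · split_ifs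
    exacts [zero_mem _, hF.mem i]
  · have hmem : ∀ i ≠ k, F i ∈
        Submodule.span (ZMod 2) (Set.range fun i => if i = k then 0 else F i) :=
      fun i hi => Submodule.subset_span ⟨i, if_neg hi⟩
    refine Submodule.span_le.2 (Set.range_subset_iff.2 fun i => ?_)
    obtain rfl | hi := eq_or_ne i k
    · rw [← Finset.add_sum_erase _ _ (Finset.mem_univ i)] at hsum
      rw [eq_of_add_eq_zero hsum]
      exact sum_mem fun j hj => hmem j (Finset.ne_of_mem_erase hj)
    · exact hmem i hi
  · intro i j hi hj
    rcases hF.sparse e i j k (supp hi).1 (supp hj).1 hk with h | h | h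
    exacts [h, absurd h (supp hi).2, absurd h (supp hj).2]

theorem mem_cycleSpace_deleteEdges_iff {s : Set (Sym2 V)} :
    S ∈ cycleSpace (G.deleteEdges s) ↔ S ∈ cycleSpace G ∧ ∀ e ∈ s, S e = 0 := by
  refine ⟨fun h => ⟨cycleSpace_mono (deleteEdges_le _) h, fun e he =>
    mem_chains_of_mem_cycleSpace h _ (by simp [he])⟩, fun ⟨h, hs⟩ =>
    mem_cycleSpace.2 ⟨fun e he => not_imp_comm.1 (fun hne => ?_) he, boundary_eq_zero h⟩⟩
  rw [edgeSet_deleteEdges]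
  exact ⟨mem_edgeSet_of_ne_zero (mem_chains_of_mem_cycleSpace h) hne, fun he => hne (hs e he)⟩

theorem mem_cycleSpace_deleteEdges {e : Sym2 V} :
    S ∈ cycleSpace (G.deleteEdges {e}) ↔ S ∈ cycleSpace G ∧ S e = 0 := by
  simp [mem_cycleSpace_deleteEdges_iff]

theorem IsMacLane.deleteEdges (hG : IsMacLane G) (e : Sym2 V) :
    IsMacLane (G.deleteEdges {e}) := by
  classical
  obtain ⟨ι, _, F, hF, hFe⟩ := hG.exists_unique_at e
  have supp : ∀ {i e'}, (if F i e = 0 then F i else 0) e' ≠ 0 → F i e' ≠ 0 := by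
    intro i e' hi
    split_ifs at hi
    exacts [hi, absurd rfl hi]
  refine ⟨ι, inferInstance, fun i => if F i e = 0 then F i else 0, fun i => ?_, fun S hS => ?_,
    fun e' i j k hi hj hk => hF.sparse e' i j k (supp hi) (supp hj) (supp hk)⟩
  · split_ifs with h
    exacts [mem_cycleSpace_deleteEdges.2 ⟨hF.mem i, h⟩, zero_mem _]
  · obtain ⟨hS, hSe⟩ := mem_cycleSpace_deleteEdges.1 hS
    obtain ⟨c, rfl⟩ := hF.exists_coeff hS
    refine sum_mem fun i _ => ?_
    by_cases hi : F i e = 0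
    · exact Submodule.smul_mem _ _ (Submodule.subset_span ⟨i, if_pos hi⟩)
    · rw [Finset.sum_apply, Finset.sum_eq_single i (fun j _ hji => by
        rw [Pi.smul_apply, not_imp_comm.1 (fun hj => hFe j i hj hi) hji, smul_zero])
        (by simp)] at hSe
      rw [Pi.smul_apply] at hSe
      rw [(smul_eq_zero_iff_left hi).1 hSe, zero_smul]
      exact zero_mem _

theorem IsMacLane.glue {G₁ G₂ : SimpleGraph V} (hG₁ : IsMacLane G₁) (hG₂ : IsMacLane G₂)
    (h₁ : G₁ ≤ G) (h₂ : G₂ ≤ G) (e : Sym2 V)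
    (hinter : ∀ e' ∈ G₁.edgeSet, e' ∈ G₂.edgeSet → e' = e)
    (hsplit : cycleSpace G ≤ cycleSpace G₁ ⊔ cycleSpace G₂) : IsMacLane G := by
  obtain ⟨ι₁, _, F₁, hF₁, uniq₁⟩ := hG₁.exists_unique_at e
  obtain ⟨ι₂, _, F₂, hF₂, uniq₂⟩ := hG₂.exists_unique_at e
  refine ⟨ι₁ ⊕ ι₂, inferInstance, Sum.elim F₁ F₂, ?_, hsplit.trans ?_, ?_⟩
  · rintro (i | i)
    exacts [cycleSpace_mono h₁ (hF₁.mem i), cycleSpace_mono h₂ (hF₂.mem i)]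
  · rw [Set.Sum.elim_range, Submodule.span_union]
    exact sup_le_sup hF₁.le_span hF₂.le_span
  · have common : ∀ e' i j, F₁ i e' ≠ 0 → F₂ j e' ≠ 0 → e' = e := fun e' i j hi hj =>
      hinter e' (mem_edgeSet_of_ne_zero (mem_chains_of_mem_cycleSpace (hF₁.mem i)) hi)
        (mem_edgeSet_of_ne_zero (mem_chains_of_mem_cycleSpace (hF₂.mem j)) hj)
    rintro e' (i | i) (j | j) (k | k) hi hj hk <;>
      simp only [Sum.elim_inl, Sum.elim_inr] at hi hj hk
    · simpa only [Sum.inl.injEq] using hF₁.sparse e' i j k hi hj hk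
    · obtain rfl := common e' i k hi hk; simp [uniq₁ i j hi hj]
    · obtain rfl := common e' i j hi hj; simp [uniq₁ i k hi hk]
    · obtain rfl := common e' i k hi hk; simp [uniq₂ j k hj hk]
    · obtain rfl := common e' j i hj hi; simp [uniq₁ j k hj hk]
    · obtain rfl := common e' j k hj hk; simp [uniq₂ i k hi hk]
    · obtain rfl := common e' k j hk hj; simp [uniq₂ i j hi hj]
    · simpa only [Sum.inr.injEq] using hF₂.sparse e' i j k hi hj hk

end Theta6

/-! ### Minimal counterexamples to MacLane's condition -/

namespace Theta6

variable {V : Type*} [Fintype V] {G G' K : SimpleGraph V} {S : EdgeChain V} {a b v x y : V}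

theorem IsMacLane.of_cycleSpace_le (hK : IsMacLane K) (hKG : K ≤ G)
    (h : cycleSpace G ≤ cycleSpace K) : IsMacLane G := by
  obtain ⟨ι, _, F, hF⟩ := hK
  exact ⟨ι, inferInstance, F, fun i => cycleSpace_mono hKG (hF.mem i), h.trans hF.le_span,
    hF.sparse⟩

theorem isMacLane_of_isMacLane_contractEdge_sup_edge {H : SimpleGraph V}
    (h : IsMacLane (contractEdge H a v)) (ha : H.Adj v a) (hb : H.Adj v b) (hab : H.Adj a b)
    (hv : ∀ u, H.Adj v u → u = a ∨ u = b) : IsMacLane H := by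
  obtain ⟨ι, _, F, hF⟩ := h
  have hKH : contractEdge H a v ≤ H := by
    rintro p q ⟨hpq, -, -, h | ⟨rfl, h⟩ | ⟨rfl, h⟩⟩
    · exact h
    · rcases hv q h with rfl | rfl
      exacts [absurd rfl hpq, hab]
    · rcases hv p h with rfl | rfl
      exacts [absurd rfl hpq, hab.symm]
  have hK : ∀ T ∈ cycleSpace H, T s(v, a) = 0 → T ∈ cycleSpace (contractEdge H a v) := by
    intro T hT hTa
    have hTb : T s(v, b) = 0 := by
      rw [← hTa, eq_comm]
      refine star_pair_eq (congrFun (boundary_eq_zero hT) v) hab.ne fun u hua hub => ?_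
      exact eq_zero_of_not_adj (mem_chains_of_mem_cycleSpace hT) fun hu => (hv u hu).elim hua hub
    have hTv : ∀ u, T s(v, u) = 0 := by
      intro u
      by_contra hu
      rcases hv u (adj_of_ne_zero (mem_chains_of_mem_cycleSpace hT) hu) with rfl | rfl
      exacts [hu hTa, hu hTb]
    refine mem_cycleSpace.2 ⟨mem_chains_iff.2 fun p q hpq => ?_, boundary_eq_zero hT⟩
    have hadj := adj_of_ne_zero (mem_chains_of_mem_cycleSpace hT) hpq
    refine ⟨hadj.ne, fun hp => hpq (hp ▸ hTv q), fun hq => hpq ?_, .inl hadj⟩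
    rw [Sym2.eq_swap, hq, hTv]
  obtain ⟨o, ho⟩ : ∃ o : Option ι, (∃ i ∈ o, F i s(a, b) ≠ 0) ∨ ∀ i, F i s(a, b) = 0 := by
    by_cases h : ∃ i, F i s(a, b) ≠ 0
    · exact ⟨some h.choose, .inl ⟨_, rfl, h.choose_spec⟩⟩
    · exact ⟨none, .inr fun i => not_not.1 fun hi => h ⟨i, hi⟩⟩
  have hFv : ∀ i u, F i s(v, u) = 0 := fun i u =>
    eq_zero_of_not_adj (mem_chains_of_mem_cycleSpace (hF.mem i)) fun h => h.2.1 rfl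
  have hD := triangle_mem_cycleSpace ha hb hab
  refine hF.isMacLane_of_split hKH hD (fun S hS => ?_) o fun e he => ?_
  · refine or_iff_not_imp_left.2 fun h => hK _ (add_mem hS hD) ?_
    rw [Pi.add_apply, eq_one_of_ne_zero (mt (hK S hS) h),
      (triangle_eq_one_iff ha.ne hb.ne hab.ne).2 (.inl rfl), CharTwo.add_self_eq_zero]
  · obtain rfl | rfl | rfl := eq_of_triangle_ne_zero he
    exacts [.inr fun i => hFv i a, .inr fun i => hFv i b, ho]

theorem IsMacLane.of_contractEdge_of_degree_two (h : IsMacLane (contractEdge G a v))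
    (ha : G.Adj v a) (hb : G.Adj v b) (hab : a ≠ b) (hv : ∀ u, G.Adj v u → u = a ∨ u = b) :
    IsMacLane G := by
  have hadj : ∀ {p q}, (G ⊔ edge a b).Adj p q ↔
      G.Adj p q ∨ (p = a ∧ q = b ∨ p = b ∧ q = a) ∧ p ≠ q := by
    simp [edge_adj]
  have hK : contractEdge (G ⊔ edge a b) a v = contractEdge G a v := by
    ext p q
    have := ha.ne
    have := hb.ne
    simp only [contractEdge, hadj]
    grind
  have hH : IsMacLane (G ⊔ edge a b) := by
    refine isMacLane_of_isMacLane_contractEdge_sup_edge (hK ▸ h) (b := b) (.inl ha) (.inl hb)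
      (hadj.2 (.inr ⟨.inl ⟨rfl, rfl⟩, hab⟩)) fun u hu => ?_
    obtain hu | ⟨⟨rfl, -⟩ | ⟨rfl, -⟩, -⟩ := hadj.1 hu
    exacts [hv u hu, absurd rfl ha.ne, absurd rfl hb.ne]
  by_cases h : G.Adj a b
  · rwa [sup_edge_of_adj G h] at hH
  · convert hH.deleteEdges s(a, b)
    ext p q
    simp only [deleteEdges_adj, hadj, Set.mem_singleton_iff, Sym2.eq_iff]
    grind [G.adj_comm]

theorem exists_mem_support_of_degree_three {ι : Type*} [Fintype ι] {F : ι → EdgeChain V} {u : V}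
    {i j : ι} (hF : IsSparseGenerating G F) (hsum : ∑ i, F i = 0)
    (hv : ∀ c, G.Adj v c → c = x ∨ c = y ∨ c = u) (hxy : x ≠ y)
    (hi : F i s(v, x) ≠ 0) (hj : F j s(v, y) ≠ 0) :
    ∃ k, F k s(v, x) ≠ 0 ∧ F k s(v, y) ≠ 0 := by
  have hstar : ∀ k, boundary (F k) v = 0 := fun k => congrFun (boundary_eq_zero (hF.mem k)) v
  have hzero : ∀ k c, c ≠ x → c ≠ y → c ≠ u → F k s(v, c) = 0 := fun k c hcx hcy hcu =>
    eq_zero_of_not_adj (mem_chains_of_mem_cycleSpace (hF.mem k)) fun hc => by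
      rcases hv c hc with h | h | h
      exacts [hcx h, hcy h, hcu h]
  by_cases hu : u = x ∨ u = y
  · refine ⟨i, hi, ?_⟩
    rwa [← star_pair_eq (hstar i) hxy fun c hcx hcy =>
      hzero i c hcx hcy fun hcu => hu.elim (hcx <| hcu.trans ·) (hcy <| hcu.trans ·)]
  obtain ⟨hux, huy⟩ := not_or.1 hu
  by_contra! hno
  have hsum3 : ∀ k, F k s(v, x) + F k s(v, y) + F k s(v, u) = 0 := fun k =>
    star_triple_sum (hstar k) hxy (Ne.symm hux) (Ne.symm huy) (hzero k)
  have hthird : ∀ k, F k s(v, x) ≠ 0 → F k s(v, u) ≠ 0 := fun k hk hku =>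
    hk (by simpa [hku, hno k hk] using hsum3 k)
  have hjx : F j s(v, x) = 0 := by
    by_contra h
    exact hj (hno j h)
  obtain ⟨i', hii', hi'⟩ := exists_ne_of_sum_eq_zero hsum hi
  rcases hF.sparse s(v, u) i' i j (hthird i' hi') (hthird i hi)
    (fun hju => hj (by simpa [hju, hjx] using hsum3 j)) with h | rfl | rfl
  exacts [hii' h, hi' hjx, hi hjx]

theorem IsMacLane.of_deleteEdges_of_triangle {u : V} (h : IsMacLane (G.deleteEdges {s(x, y)}))
    (hx : G.Adj v x) (hy : G.Adj v y) (hxy : G.Adj x y)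
    (hv : ∀ c, G.Adj v c → c = x ∨ c = y ∨ c = u) : IsMacLane G := by
  obtain ⟨ι, _, F, hF, hsum⟩ := h.exists_sum_eq_zero
  have hD := triangle_mem_cycleSpace hx hy hxy
  obtain ⟨o, hox, hoy⟩ : ∃ o : Option ι,
      ((∃ i ∈ o, F i s(v, x) ≠ 0) ∨ ∀ i, F i s(v, x) = 0) ∧
      ((∃ i ∈ o, F i s(v, y) ≠ 0) ∨ ∀ i, F i s(v, y) = 0) := by
    by_cases hvx : ∀ i, F i s(v, x) = 0 <;> by_cases hvy : ∀ i, F i s(v, y) = 0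
    · exact ⟨none, .inr hvx, .inr hvy⟩
    · obtain ⟨j, hj⟩ := not_forall.1 hvy
      exact ⟨some j, .inr hvx, .inl ⟨j, rfl, hj⟩⟩
    · obtain ⟨i, hi⟩ := not_forall.1 hvx
      exact ⟨some i, .inl ⟨i, rfl, hi⟩, .inr hvy⟩
    · obtain ⟨i, hi⟩ := not_forall.1 hvx
      obtain ⟨j, hj⟩ := not_forall.1 hvy
      obtain ⟨k, hkx, hky⟩ := exists_mem_support_of_degree_three hF hsum
        (fun c hc => hv c (deleteEdges_le _ hc)) hxy.ne hi hj
      exact ⟨some k, .inl ⟨k, rfl, hkx⟩, .inl ⟨k, rfl, hky⟩⟩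
  refine hF.isMacLane_of_split (deleteEdges_le _) hD (fun S hS => ?_) o fun e he => ?_
  · simp only [mem_cycleSpace_deleteEdges, hS, add_mem hS hD, true_and]
    refine or_iff_not_imp_left.2 fun h => ?_
    rw [Pi.add_apply, eq_one_of_ne_zero h,
      (triangle_eq_one_iff hx.ne hy.ne hxy.ne).2 (.inr (.inr rfl)), CharTwo.add_self_eq_zero]
  · obtain rfl | rfl | rfl := eq_of_triangle_ne_zero he
    exacts [hox, hoy, .inr fun i => (mem_cycleSpace_deleteEdges.1 (hF.mem i)).2]

/-- A planar graph violating MacLane's condition, with as few edges as possible. -/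
structure IsMinimalCounterexample (G : SimpleGraph V) : Prop where
  planar : IsPlanar G
  not_isMacLane : ¬ IsMacLane G
  isMacLane_of_ncard_lt : ∀ G' : SimpleGraph V, IsPlanar G' →
    G'.edgeSet.ncard < G.edgeSet.ncard → IsMacLane G'

namespace IsMinimalCounterexample

theorem isMacLane_of_le (hG : IsMinimalCounterexample G) (h : G' ≤ G) (hab : G.Adj a b)
    (hab' : ¬ G'.Adj a b) : IsMacLane G' :=
  hG.isMacLane_of_ncard_lt G' (hG.planar.mono h) (ncard_edgeSet_lt_of_le h hab hab')

theorem isMacLane_deleteEdges (hG : IsMinimalCounterexample G) (hab : G.Adj a b) :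
    IsMacLane (G.deleteEdges {s(a, b)}) :=
  hG.isMacLane_of_le (deleteEdges_le _) hab (by simp)

theorem isMacLane_contractEdge (hG : IsMinimalCounterexample G) (hab : G.Adj a b) :
    IsMacLane (contractEdge G a b) :=
  hG.isMacLane_of_ncard_lt _ (hG.planar.contractEdge hab) (ncard_edgeSet_contractEdge_lt hab)

theorem exists_adj_ne (hG : IsMinimalCounterexample G) (ha : G.Adj v a) :
    ∃ b, G.Adj v b ∧ b ≠ a := by
  by_contra! h
  refine hG.not_isMacLane ((hG.isMacLane_deleteEdges ha).of_cycleSpace_le (deleteEdges_le _) ?_)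
  exact fun S hS => mem_cycleSpace_deleteEdges.2 ⟨hS, star_eq_zero hS h⟩

theorem exists_adj_ne_ne (hG : IsMinimalCounterexample G) (hv : G.Adj v x) (a b : V) :
    ∃ c, G.Adj v c ∧ c ≠ a ∧ c ≠ b := by
  obtain ⟨p, hp, hpa⟩ : ∃ p, G.Adj v p ∧ p ≠ a := by
    by_cases hxa : x = a
    · exact hxa ▸ hG.exists_adj_ne hv
    · exact ⟨x, hv, hxa⟩
  by_contra! h
  obtain rfl := h p hp hpa
  obtain ⟨q, hq, hqp⟩ := hG.exists_adj_ne hp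
  have hqa : q = a := by
    by_contra hqa
    exact hqp (h q hq hqa)
  subst hqa
  exact hG.not_isMacLane ((hG.isMacLane_contractEdge hq.symm).of_contractEdge_of_degree_two
    hq hp hqp fun u hu => or_iff_not_imp_left.2 (h u hu))

theorem exists_adj_of_triangle (hG : IsMinimalCounterexample G) (hx : G.Adj v x) (hy : G.Adj v y)
    (hxy : G.Adj x y) (u : V) : ∃ c, G.Adj v c ∧ c ≠ x ∧ c ≠ y ∧ c ≠ u := by
  by_contra! h
  refine hG.not_isMacLane
    ((hG.isMacLane_deleteEdges hxy).of_deleteEdges_of_triangle hx hy hxy (u := u) fun c hc => ?_)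
  by_contra! hne
  exact hne.2.2 (h c hc hne.1 hne.2.1)

end IsMinimalCounterexample

end Theta6

/-! ### Two-vertex separations -/

namespace Theta6

section RestrictTo

variable {V : Type*} {G : SimpleGraph V} {s : Set V} {a b p x : V}

/-- The graph of the edges of `G` with both ends in `s`. The vertex type does not change. -/
def restrictTo (G : SimpleGraph V) (s : Set V) : SimpleGraph V where
  Adj a b := G.Adj a b ∧ a ∈ s ∧ b ∈ s
  symm := ⟨fun _ _ h => ⟨h.1.symm, h.2.2, h.2.1⟩⟩
  loopless := ⟨fun _ h => h.1.ne rfl⟩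

theorem restrictTo_adj : (restrictTo G s).Adj a b ↔ G.Adj a b ∧ a ∈ s ∧ b ∈ s := Iff.rfl

theorem restrictTo_le (G : SimpleGraph V) (s : Set V) : restrictTo G s ≤ G := fun _ _ h => h.1

theorem eq_of_reachable_restrictTo (h : (restrictTo G s).Reachable p x) (hx : x ∉ s) : p = x := by
  obtain ⟨w⟩ := h.symm
  cases w with
  | nil => rfl
  | cons h _ => exact absurd h.2.1 hx

end RestrictTo

variable {V : Type*} [Fintype V] {G : SimpleGraph V} {S : EdgeChain V} {x y v w p q p' q' : V}

theorem sum_boundary_eq_zero (hS : S ∈ chains G) : ∑ v, boundary S v = 0 := by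
  classical
  simp [sum_boundary hS]

theorem boundary_eq_smul (hS : S ∈ chains G) (hxy : x ≠ y)
    (h : ∀ r, r ≠ x → r ≠ y → boundary S r = 0) :
    boundary S = boundary S x • (vertexChain x + vertexChain y) := by
  classical
  have hsum : boundary S x + boundary S y = 0 := by
    rw [← sum_boundary_eq_zero hS, ← Finset.sum_pair hxy]
    refine Finset.sum_subset (Finset.subset_univ _) fun r _ hr => ?_
    simp only [Finset.mem_insert, Finset.mem_singleton, not_or] at hr
    exact h r hr.1 hr.2
  funext r
  by_cases hrx : r = x
  · simp [hrx, vertexChain, hxy]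
  by_cases hry : r = y
  · simp [hry, vertexChain, hxy.symm, eq_of_add_eq_zero hsum]
  · simp [vertexChain, hrx, hry, h r hrx hry]

/-- The part of `S` that meets `A` has its boundary on `x` and `y`; adding the edge `xy` if
necessary makes it a cycle. -/
theorem cycleSpace_le_sup_of_separation {A : Set V} (hxA : x ∉ A) (hyA : y ∉ A) (hxy : G.Adj x y)
    (hA : ∀ a ∈ A, ∀ b, G.Adj a b → b ∈ A ∪ {x, y}) :
    cycleSpace G ≤ cycleSpace (restrictTo G (A ∪ {x, y})) ⊔ cycleSpace (restrictTo G Aᶜ) := by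
  intro S hS
  have hSG := mem_chains_of_mem_cycleSpace hS
  let S₁ : EdgeChain V := {e | ∃ r ∈ e, r ∈ A}.indicator S
  have hS₁A : ∀ r ∈ A, ∀ u, S₁ s(r, u) = S s(r, u) := fun r hr u =>
    Set.indicator_of_mem (show s(r, u) ∈ {e | ∃ r ∈ e, r ∈ A} from ⟨r, by simp, hr⟩) S
  have hS₁G : S₁ ∈ chains (restrictTo G (A ∪ {x, y})) := by
    refine mem_chains_iff.2 fun a b hab => ?_
    obtain ⟨⟨r, hr, hrA⟩, hab⟩ := Set.indicator_apply_ne_zero.1 hab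
    have hadj := adj_of_ne_zero hSG hab
    rcases Sym2.mem_iff.1 hr with rfl | rfl
    exacts [⟨hadj, .inl hrA, hA r hrA b hadj⟩, ⟨hadj, hA r hrA a hadj.symm, .inl hrA⟩]
  have hbd : boundary S₁ = boundary S₁ x • (vertexChain x + vertexChain y) := by
    refine boundary_eq_smul hS₁G hxy.ne fun r hrx hry => ?_
    rw [boundary_apply]
    by_cases hr : r ∈ A
    · simp only [hS₁A r hr, sum_star_eq_zero hS r]
    · refine Finset.sum_eq_zero fun u _ => eq_zero_of_not_adj hS₁G fun h => ?_
      simpa [hr, hrx, hry] using h.2.1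
  have hT : S₁ + boundary S₁ x • edgeChain x y ∈ cycleSpace (restrictTo G (A ∪ {x, y})) := by
    refine mem_cycleSpace.2 ⟨add_mem hS₁G (Submodule.smul_mem _ _ (edgeChain_mem_chains
      ⟨hxy, by simp, by simp⟩)), ?_⟩
    rw [map_add, map_smul, boundary_edgeChain hxy.ne, ← hbd, ZModModule.add_self]
  refine Submodule.mem_sup.2 ⟨_, hT, S + (S₁ + boundary S₁ x • edgeChain x y),
    mem_cycleSpace.2 ⟨?_, ?_⟩, by rw [add_left_comm, ZModModule.add_self, add_zero]⟩
  · rw [← add_assoc]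
    refine add_mem (mem_chains_iff.2 fun a b hab => ?_) (Submodule.smul_mem _ _
      (edgeChain_mem_chains ⟨hxy, hxA, hyA⟩))
    have hout : s(a, b) ∉ {e | ∃ r ∈ e, r ∈ A} := fun h => hab (by
      rw [Pi.add_apply, show S₁ s(a, b) = _ from Set.indicator_of_mem h S,
        CharTwo.add_self_eq_zero])
    rw [Pi.add_apply, show S₁ s(a, b) = 0 from Set.indicator_of_notMem hout S, add_zero] at hab
    exact ⟨adj_of_ne_zero hSG hab, fun h => hout ⟨a, by simp, h⟩, fun h => hout ⟨b, by simp, h⟩⟩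
  · rw [map_add, boundary_eq_zero hS, boundary_eq_zero hT, add_zero]

theorem IsMacLane.of_separation {A : Set V} (hxA : x ∉ A) (hyA : y ∉ A) (hxy : G.Adj x y)
    (hA : ∀ a ∈ A, ∀ b, G.Adj a b → b ∈ A ∪ {x, y})
    (h₁ : IsMacLane (restrictTo G (A ∪ {x, y}))) (h₂ : IsMacLane (restrictTo G Aᶜ)) :
    IsMacLane G := by
  refine h₁.glue h₂ (restrictTo_le _ _) (restrictTo_le _ _) s(x, y) (fun e he₁ he₂ => ?_)
    (cycleSpace_le_sup_of_separation hxA hyA hxy hA)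
  induction e with | _ a b
  obtain ⟨hab, ha, hb⟩ : (restrictTo G _).Adj a b := he₁
  obtain ⟨-, ha', hb'⟩ : (restrictTo G _).Adj a b := he₂
  obtain rfl | rfl := ha.resolve_left ha' <;> obtain rfl | rfl := hb.resolve_left hb'
  exacts [absurd rfl hab.ne, rfl, Sym2.eq_swap, absurd rfl hab.ne]

namespace IsMinimalCounterexample

theorem reachable_restrictTo_compl_pair (hG : IsMinimalCounterexample G) (hxy : G.Adj x y)
    (hp : G.Adj p p') (hq : G.Adj q q') (hpxy : p ∈ ({x, y} : Set V)ᶜ)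
    (hqxy : q ∈ ({x, y} : Set V)ᶜ) : (restrictTo G {x, y}ᶜ).Reachable p q := by
  by_contra hpq
  have hsub : ∀ {r}, (restrictTo G {x, y}ᶜ).Reachable p r → r ∈ ({x, y} : Set V)ᶜ := by
    intro r hr
    by_contra h
    exact h (eq_of_reachable_restrictTo hr h ▸ hpxy)
  refine hG.not_isMacLane (.of_separation
    (A := {r | (restrictTo G {x, y}ᶜ).Reachable p r}) (fun h => hsub h (.inl rfl))
    (fun h => hsub h (.inr rfl)) hxy (fun a ha b hab => ?_)
    (hG.isMacLane_of_le (restrictTo_le _ _) hq fun h => h.2.1.elim hpq hqxy)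
    (hG.isMacLane_of_le (restrictTo_le _ _) hp fun h => h.2.1 .rfl))
  refine or_iff_not_imp_right.2 fun hb => ?_
  exact Reachable.trans ha (Adj.reachable ⟨hab, hsub ha, hb⟩)

theorem exists_restrictTo_compl_pair_adj (hG : IsMinimalCounterexample G) (hxy : G.Adj x y)
    (h : G.Adj v w) (hv : v ∈ ({x, y} : Set V)ᶜ) (u : V) :
    ∃ c, (restrictTo G {x, y}ᶜ).Adj v c ∧ c ≠ u := by
  obtain ⟨c, hc, hcx, hcy, hcu⟩ : ∃ c, G.Adj v c ∧ c ≠ x ∧ c ≠ y ∧ c ≠ u := by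
    by_cases hvx : G.Adj v x
    · by_cases hvy : G.Adj v y
      · exact hG.exists_adj_of_triangle hvx hvy hxy u
      · obtain ⟨c, hc, hcx, hcu⟩ := hG.exists_adj_ne_ne h x u
        exact ⟨c, hc, hcx, fun hcy => hvy (hcy ▸ hc), hcu⟩
    · obtain ⟨c, hc, hcy, hcu⟩ := hG.exists_adj_ne_ne h y u
      exact ⟨c, hc, fun hcx => hvx (hcx ▸ hc), hcy, hcu⟩
  exact ⟨c, ⟨hc, hv, by simp [hcx, hcy]⟩, hcu⟩

end IsMinimalCounterexample

end Theta6

/-! ### Cycles of a contraction -/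

namespace Theta6

section Map

variable {V W : Type*} [Fintype V] [DecidableEq W] {G : SimpleGraph V} {S : EdgeChain V}

/-- The image of an edge chain under a map of the vertices; edges mapped to a loop cancel. -/
def mapChain (f : V → W) (S : EdgeChain V) : EdgeChain W :=
  Sym2.lift ⟨fun a b => ∑ a' with f a' = a, ∑ b' with f b' = b, S s(a', b'), fun a b =>
    Finset.sum_comm.trans (by simp only [Sym2.eq_swap])⟩

theorem mapChain_mk (f : V → W) (S : EdgeChain V) (a b : W) :
    mapChain f S s(a, b) = ∑ a' with f a' = a, ∑ b' with f b' = b, S s(a', b') := rfl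

theorem boundary_mapChain [Fintype W] (f : V → W) (S : EdgeChain V) (w : W) :
    boundary (mapChain f S) w = ∑ v with f v = w, boundary S v := by
  simp only [boundary_apply, mapChain_mk]
  rw [Finset.sum_comm]
  simp only [Finset.sum_fiberwise]

theorem exists_adj_of_mapChain_ne_zero (hS : S ∈ chains G) {f : V → W} {a b : W}
    (h : mapChain f S s(a, b) ≠ 0) : a ≠ b ∧ ∃ a' b', f a' = a ∧ f b' = b ∧ G.Adj a' b' := by
  refine ⟨fun hab => h ?_, ?_⟩
  · rw [mapChain_mk, ← hab, sum_sum_eq_zero hS]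
  · obtain ⟨a', ha', h⟩ := Finset.exists_ne_zero_of_sum_ne_zero h
    obtain ⟨b', hb', h⟩ := Finset.exists_ne_zero_of_sum_ne_zero h
    exact ⟨a', b', (Finset.mem_filter.1 ha').2, (Finset.mem_filter.1 hb').2, adj_of_ne_zero hS h⟩

end Map

variable {V : Type*} {G H K : SimpleGraph V} {S : EdgeChain V} {x y p q : V}

theorem contractEdge_adj_left : (contractEdge G x y).Adj x p ↔
    x ≠ p ∧ x ≠ y ∧ p ≠ y ∧ (G.Adj x p ∨ G.Adj y p) := by
  simp only [contractEdge]
  grind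

theorem contractEdge_adj_of_ne (hp : p ≠ x) (hq : q ≠ x) :
    (contractEdge G x y).Adj p q ↔ (restrictTo G {x, y}ᶜ).Adj p q := by
  have hne : G.Adj p q → p ≠ q := Adj.ne
  simp only [contractEdge, restrictTo_adj, Set.mem_compl_iff, Set.mem_insert_iff,
    Set.mem_singleton_iff]
  tauto

theorem restrictTo_le_contractEdge (G : SimpleGraph V) (x y : V) :
    restrictTo G {x, y}ᶜ ≤ contractEdge G x y := fun _ _ h =>
  (contractEdge_adj_of_ne (fun hx => h.2.1 (.inl hx)) (fun hx => h.2.2 (.inl hx))).2 h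

/-- No edge of the edge chain `S` is incident with `x`. -/
def Avoids (S : EdgeChain V) (x : V) : Prop := ∀ u, S s(x, u) = 0

theorem Avoids.of_mem_chains (hS : S ∈ chains H) (h : ∀ u, ¬ H.Adj x u) : Avoids S x :=
  fun u => eq_zero_of_not_adj hS (h u)

theorem avoids_of_mem_chains_restrictTo {s : Set V} (hS : S ∈ chains (restrictTo G s))
    (hx : x ∉ s) : Avoids S x :=
  .of_mem_chains hS fun _ h => hx h.2.1

variable [Fintype V]

theorem mem_cycleSpace_restrictTo (hS : S ∈ cycleSpace G) (hx : Avoids S x) (hy : Avoids S y) :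
    S ∈ cycleSpace (restrictTo G {x, y}ᶜ) := by
  have hxy : ∀ {a b}, S s(a, b) ≠ 0 → a ∉ ({x, y} : Set V) := by
    rintro a b hab (rfl | rfl)
    exacts [hab (hx b), hab (hy b)]
  exact mem_cycleSpace.2 ⟨mem_chains_iff.2 fun a b hab =>
    ⟨adj_of_ne_zero (mem_chains_of_mem_cycleSpace hS) hab, hxy hab, hxy (Sym2.eq_swap ▸ hab)⟩,
    boundary_eq_zero hS⟩

theorem Avoids.mem_cycleSpace_restrictTo (hx : Avoids S x)
    (hS : S ∈ cycleSpace (contractEdge G x y)) : S ∈ cycleSpace (restrictTo G {x, y}ᶜ) := by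
  refine mem_cycleSpace.2 ⟨mem_chains_iff.2 fun a b hab => ?_, boundary_eq_zero hS⟩
  refine (contractEdge_adj_of_ne ?_ ?_).1 (adj_of_ne_zero (mem_chains_of_mem_cycleSpace hS) hab)
  · rintro rfl
    exact hab (hx b)
  · rintro rfl
    exact hab (Sym2.eq_swap ▸ hx a)

theorem exists_mem_cycleSpace_contractEdge (hxy : x ≠ y) (hS : S ∈ cycleSpace G) :
    ∃ T ∈ cycleSpace (contractEdge G x y), ∀ e ∈ (restrictTo G {x, y}ᶜ).edgeSet, T e = S e := by
  classical
  refine ⟨mapChain (Function.update id y x) S, mem_cycleSpace.2 ⟨mem_chains_iff.2 fun a b h => ?_,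
    funext fun v => ?_⟩, fun e he => ?_⟩
  · obtain ⟨hab, a, b, rfl, rfl, hadj⟩ :=
      exists_adj_of_mapChain_ne_zero (mem_chains_of_mem_cycleSpace hS) h
    simp only [Function.update_apply, id] at hab ⊢
    have := hadj.symm
    split_ifs at hab ⊢ <;> simp_all [contractEdge]
  · simp [boundary_mapChain, boundary_eq_zero hS]
  · have hfib : ∀ {c}, c ∈ ({x, y} : Set V)ᶜ → ∀ v, Function.update id y x v = c ↔ v = c := by
      intro c hc v
      simp only [Set.mem_compl_iff, Set.mem_insert_iff, Set.mem_singleton_iff, not_or] at hc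
      rw [Function.update_apply]
      split_ifs with hv
      · simp [hv, Ne.symm hc.1, Ne.symm hc.2]
      · rfl
    induction e with | _ a b
    obtain ⟨-, ha, hb⟩ : (restrictTo G _).Adj a b := he
    simp [mapChain_mk, hfib ha, hfib hb, Finset.sum_filter]

/-! ### Sectors of a sparse generating family -/

variable {ι : Type*} [Fintype ι] {F : ι → EdgeChain V} {A : Finset ι} {b c : ι → ZMod 2}
  {D : EdgeChain V} {e : Sym2 V} {i j : ι}

omit [Fintype V] in
theorem IsSparse.coeff_eq_of_sum_eq_zero (hF : IsSparse F) (h : (∑ k, c k • F k) e = 0)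
    (hi : F i e ≠ 0) (hj : F j e ≠ 0) : c i = c j := by
  rcases eq_or_ne i j with rfl | hij
  · rfl
  · refine eq_of_add_eq_zero ?_
    rw [← hF.sum_mul_eq_add (A := Finset.univ) (by simp) (by simp) hij hi hj, ← h]
    simp

theorem IsSparseGenerating.exists_coeff_eq_zero (hF : IsSparseGenerating G F)
    (hsum : ∑ i, F i = 0) (hD : D ∈ cycleSpace G) (he : D e = 0) :
    ∃ c : ι → ZMod 2, ∑ i, c i • F i = D ∧ ∀ i, F i e ≠ 0 → c i = 0 := by
  obtain ⟨d, rfl⟩ := hF.exists_coeff hD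
  by_cases h : ∃ i, F i e ≠ 0
  · obtain ⟨i, hi⟩ := h
    refine ⟨fun k => d k + d i, ?_, fun j hj => ?_⟩
    · simp only [add_smul, Finset.sum_add_distrib, ← Finset.smul_sum, hsum, smul_zero, add_zero]
    · change d j + d i = 0
      rw [hF.sparse.coeff_eq_of_sum_eq_zero he hj hi, CharTwo.add_self_eq_zero]
  · exact ⟨d, rfl, fun i hi => absurd ⟨i, hi⟩ h⟩

theorem exists_mem_cycleSpace_through (hK : K ≤ G) (hKx : ∀ u, ¬ K.Adj x u) (hp : G.Adj x p)
    (hq : G.Adj x q) (hpq : p ≠ q) (h : K.Reachable p q) :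
    ∃ T ∈ cycleSpace G, T s(x, p) ≠ 0 ∧ T s(x, q) ≠ 0 ∧
      ∀ u, u ≠ p → u ≠ q → T s(x, u) = 0 := by
  obtain ⟨P, hP, hPb⟩ := exists_chain_boundary_eq h
  have hPx := Avoids.of_mem_chains hP hKx
  refine ⟨P + edgeChain x p + edgeChain x q, mem_cycleSpace.2 ⟨add_mem (add_mem (chains_mono hK hP)
    (edgeChain_mem_chains hp)) (edgeChain_mem_chains hq), ?_⟩, ?_, ?_, fun u hup huq => ?_⟩
  · rw [map_add, map_add, hPb, boundary_edgeChain hp.ne, boundary_edgeChain hq.ne]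
    calc _ = (vertexChain x + vertexChain x) + (vertexChain p + vertexChain p)
          + (vertexChain q + vertexChain q) := by abel
      _ = 0 := by simp only [ZModModule.add_self]
  · simp [hPx p, edgeChain_eq_zero (mt Sym2.congr_right.1 hpq)]
  · simp [hPx q, edgeChain_eq_zero (mt Sym2.congr_right.1 hpq.symm)]
  · simp [hPx u, edgeChain_eq_zero (mt Sym2.congr_right.1 hup),
      edgeChain_eq_zero (mt Sym2.congr_right.1 huq)]

theorem IsSparseGenerating.exists_of_reachable (hF : IsSparseGenerating G F)
    (hc : Avoids (∑ i, c i • F i) x) (hK : K ≤ G) (hKx : ∀ u, ¬ K.Adj x u) (hp : G.Adj x p)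
    (hq : G.Adj x q) (h : K.Reachable p q) (hcp : ∃ i, c i ≠ 0 ∧ F i s(x, p) ≠ 0) :
    ∃ i, c i ≠ 0 ∧ F i s(x, q) ≠ 0 := by
  rcases eq_or_ne p q with rfl | hpq
  · exact hcp
  · obtain ⟨T, hT, hTp, -, hT0⟩ := exists_mem_cycleSpace_through hK hKx hp hq hpq h
    exact hF.exists_of_exists_sector hc hT hT0 hTp hcp

theorem IsSparseGenerating.avoids_of_coeff_ne_zero {W : SimpleGraph V} {s t : V}
    (hF : IsSparseGenerating G F) (hc : Avoids (∑ i, c i • F i) s)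
    (hst : ∀ i, F i s(s, t) ≠ 0 → c i = 0) (hadj : G.Adj s t) (hW : W ≤ G)
    (hWs : ∀ u, ¬ W.Adj s u) (hq : G.Adj t q) (hqs : q ≠ s)
    (hreach : ∀ u, G.Adj s u → u ≠ t → W.Reachable u q) (hi : c i ≠ 0) : Avoids (F i) s := by
  intro u
  by_contra hu
  have hsu := adj_of_ne_zero (mem_chains_of_mem_cycleSpace (hF.mem i)) hu
  have hut : u ≠ t := by
    rintro rfl
    exact hi (hst i hu)
  have hK : ∀ {p r}, (W ⊔ edge t q).Adj p r ↔
      W.Adj p r ∨ (p = t ∧ r = q ∨ p = q ∧ r = t) ∧ p ≠ r := by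
    simp [edge_adj]
  have hKs : ∀ r, ¬ (W ⊔ edge t q).Adj s r := by
    rintro r hr
    obtain hr | ⟨⟨h, -⟩ | ⟨h, -⟩, -⟩ := hK.1 hr
    exacts [hWs r hr, hadj.ne h, hqs h.symm]
  have hut : (W ⊔ edge t q).Reachable u t := ((hreach u hsu hut).mono le_sup_left).trans
    (Adj.reachable (hK.2 (.inr ⟨.inr ⟨rfl, rfl⟩, hq.ne'⟩)))
  obtain ⟨k, hk, hkt⟩ := hF.exists_of_reachable hc (sup_le hW ((edge_le_iff G).2 (.inr hq))) hKs
    hsu hadj hut ⟨i, hi, hu⟩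
  exact hk (hst k hkt)

end Theta6

/-! ### Faces of a contraction avoiding the contracted vertex -/

namespace Theta6

variable {V ι : Type*} {F : ι → EdgeChain V} {A : Finset ι} {x y p q : V} {e e' : Sym2 V}
  {i j k : ι} {b : ι → ZMod 2} {G K : SimpleGraph V} {S : EdgeChain V}

/-- The edges lying in two members of the subfamily `A`. -/
def innerEdges (F : ι → EdgeChain V) (A : Finset ι) : Set (Sym2 V) :=
  {e | ∃ i ∈ A, ∃ j ∈ A, i ≠ j ∧ F i e ≠ 0 ∧ F j e ≠ 0}

theorem IsSparse.mem_of_mem_innerEdges (hF : IsSparse F) (he : e ∈ innerEdges F A)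
    (hk : F k e ≠ 0) : k ∈ A := by
  obtain ⟨i, hi, j, hj, hij, hie, hje⟩ := he
  rcases hF e i j k hie hje hk with h | rfl | rfl
  exacts [absurd h hij, hi, hj]

theorem IsSparse.sum_eq_zero_of_mem_innerEdges (hF : IsSparse F) (he : e ∈ innerEdges F A) :
    (∑ i ∈ A, F i) e = 0 := by
  obtain ⟨i, hi, j, hj, hij, hie, hje⟩ := he
  exact hF.sum_eq_zero hi hj hij hie hje

/-- The members of `F` indexed by `A` form a connected component of the adjacency relation
between the members of `F` that avoid the vertex `x`. -/
structure IsPatch (F : ι → EdgeChain V) (x : V) (A : Finset ι) : Prop where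
  avoids : ∀ i ∈ A, Avoids (F i) x
  mem_of_mem : ∀ {i j e}, i ∈ A → Avoids (F j) x → F i e ≠ 0 → F j e ≠ 0 → j ∈ A
  eq_of_locally_eq : ∀ {b : ι → ZMod 2},
    (∀ i ∈ A, ∀ j ∈ A, ∀ e, F i e ≠ 0 → F j e ≠ 0 → b i = b j) → ∀ i ∈ A, ∀ j ∈ A, b i = b j

theorem exists_isPatch [Finite ι] (hi : Avoids (F i) x) : ∃ A, i ∈ A ∧ IsPatch F x A := by
  classical
  have := Fintype.ofFinite ι
  let r : ι → ι → Prop := fun i j => Avoids (F j) x ∧ ∃ e, F i e ≠ 0 ∧ F j e ≠ 0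
  refine ⟨Finset.univ.filter (Relation.ReflTransGen r i), by simp [Relation.ReflTransGen.refl],
    fun j hj => ?_, fun {j k e} hj hk hje hke => ?_, fun {b} hb => ?_⟩
  · cases (Finset.mem_filter.1 hj).2 with
    | refl => exact hi
    | tail _ h => exact h.1
  · simp only [Finset.mem_filter, Finset.mem_univ, true_and] at hj ⊢
    exact hj.tail ⟨hk, e, hje, hke⟩
  · simp only [Finset.mem_filter, Finset.mem_univ, true_and] at hb ⊢
    have hib : ∀ j, Relation.ReflTransGen r i j → b i = b j := by
      intro j hj
      induction hj with
      | refl => rfl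
      | @tail k l hk hkl ih =>
        obtain ⟨e, hke, hle⟩ := hkl.2
        exact ih.trans (hb k hk l (hk.tail hkl) e hke hle)
    exact fun j hj k hk => (hib j hj).symm.trans (hib k hk)

theorem IsPatch.exists_unique_of_sum_ne_zero (hA : IsPatch F x A) (hF : IsSparse F)
    (he : (∑ i ∈ A, F i) e ≠ 0) :
    ∃ i ∈ A, F i e ≠ 0 ∧ ∀ j, Avoids (F j) x → F j e ≠ 0 → j = i := by
  rw [Finset.sum_apply] at he
  obtain ⟨i, hi, hie⟩ := Finset.exists_ne_zero_of_sum_ne_zero he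
  refine ⟨i, hi, hie, fun j hj hje => by_contra fun hji => ?_⟩
  exact he (by rw [← Finset.sum_apply, hF.sum_eq_zero (hA.mem_of_mem hi hj hie hje) hi hji hje hie])

/-- A combination of faces avoiding `x` that uses no inner edge of a patch contains the outline
of the patch or misses it. -/
theorem IsPatch.ne_zero_of_ne_zero [Fintype ι] (hA : IsPatch F x A) (hF : IsSparse F)
    (hb : ∀ i, b i ≠ 0 → Avoids (F i) x) (hI : ∀ e ∈ innerEdges F A, (∑ i, b i • F i) e = 0)
    (he : (∑ i ∈ A, F i) e ≠ 0) (he' : (∑ i ∈ A, F i) e' ≠ 0) (h : (∑ i, b i • F i) e ≠ 0) :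
    (∑ i, b i • F i) e' ≠ 0 := by
  have hconst := hA.eq_of_locally_eq (b := b) fun i hi j hj e hie hje => by
    rcases eq_or_ne i j with rfl | hij
    · rfl
    · exact hF.coeff_eq_of_sum_eq_zero (hI e ⟨i, hi, j, hj, hij, hie, hje⟩) hie hje
  have hcoeff : ∀ {e}, (∑ i ∈ A, F i) e ≠ 0 → ∃ i ∈ A, (∑ i, b i • F i) e = b i := by
    intro e he
    obtain ⟨i, hi, hie, huniq⟩ := hA.exists_unique_of_sum_ne_zero hF he
    refine ⟨i, hi, ?_⟩
    simp only [Finset.sum_apply, Pi.smul_apply, smul_eq_mul]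
    rw [Finset.sum_eq_single i (fun j _ hji => ?_) (by simp), eq_one_of_ne_zero hie, mul_one]
    by_contra hj
    exact hji (huniq j (hb j (left_ne_zero_of_mul hj)) (right_ne_zero_of_mul hj))
  obtain ⟨i, hi, hie⟩ := hcoeff he
  obtain ⟨j, hj, hje⟩ := hcoeff he'
  rwa [hje, hconst j hj i hi, ← hie]

variable [Fintype V]

theorem IsSparseGenerating.reachable_deleteEdges_innerEdges (hF : IsSparseGenerating G F)
    (hA : ∀ i ∈ A, Avoids (F i) x) (hK : K ≤ G) (hKx : ∀ u, ¬ K.Adj x u)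
    (hGK : ∀ a b, a ≠ x → b ≠ x → G.Adj a b → K.Adj a b) (hp : G.Adj x p) (hq : G.Adj x q)
    (h : K.Reachable p q) : (K.deleteEdges (innerEdges F A)).Reachable p q := by
  classical
  set W := K.deleteEdges (innerEdges F A)
  let C : Finset V := Finset.univ.filter (W.Reachable p)
  have hxC : x ∉ C := by
    intro hx
    obtain ⟨w⟩ := (Finset.mem_filter.1 hx).2.symm
    cases w with
    | nil => exact hp.ne rfl
    | cons h _ => exact hKx _ (deleteEdges_le _ h)
  have hCF : ∀ i, ∑ r ∈ C, F i s(x, r) = 0 := by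
    intro i
    by_cases hi : i ∈ A
    · exact Finset.sum_eq_zero fun r _ => hA i hi r
    rw [← Finset.sum_eq_zero fun v (_ : v ∈ C) => congrFun (boundary_eq_zero (hF.mem i)) v,
      sum_boundary (mem_chains_of_mem_cycleSpace (hF.mem i))]
    refine Finset.sum_congr rfl fun v hv => ?_
    rw [Finset.sum_eq_single x (fun u hu hux => ?_) fun h => absurd (Finset.mem_compl.2 hxC) h,
      Sym2.eq_swap]
    by_contra hvu
    have hadj := hGK v u (fun hvx => hxC (hvx ▸ hv)) hux
      (adj_of_ne_zero (mem_chains_of_mem_cycleSpace (hF.mem i)) hvu)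
    refine Finset.mem_compl.1 hu (Finset.mem_filter.2 ⟨Finset.mem_univ u,
      (Finset.mem_filter.1 hv).2.trans (Adj.reachable ?_)⟩)
    exact (deleteEdges_adj ..).2 ⟨hadj, fun he => hi (hF.sparse.mem_of_mem_innerEdges he hvu)⟩
  by_contra hpq
  have hne : p ≠ q := fun h => hpq (h ▸ .rfl)
  obtain ⟨T, hT, hTp, -, hT0⟩ := exists_mem_cycleSpace_through hK hKx hp hq hne h
  have hCT : ∑ r ∈ C, T s(x, r) = 0 :=
    Submodule.span_induction (p := fun S _ => ∑ r ∈ C, S s(x, r) = 0)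
      (by rintro _ ⟨i, rfl⟩; exact hCF i) (by simp)
      (fun S T _ _ hS hT => by simp [Finset.sum_add_distrib, hS, hT])
      (fun c S _ hS => by simp [← Finset.mul_sum, hS]) (hF.le_span hT)
  rw [Finset.sum_eq_single_of_mem p (by simp [C]) fun r hr hrp => hT0 r hrp ?_] at hCT
  · exact hTp hCT
  · rintro rfl
    exact hpq (Finset.mem_filter.1 hr).2

end Theta6

/-! ### The faces next to a contracted edge -/

namespace Theta6

variable {V : Type*} [Fintype V] {ι κ : Type*} {G : SimpleGraph V} {x y p q : V}
  {F : ι → EdgeChain V} {F' : κ → EdgeChain V} {A : Finset ι} {S T : EdgeChain V}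

theorem IsSparseGenerating.innerEdges_subset (hF : IsSparseGenerating (contractEdge G x y) F)
    (hA : ∀ i ∈ A, Avoids (F i) x) : innerEdges F A ⊆ (restrictTo G {x, y}ᶜ).edgeSet := by
  rintro e ⟨i, hi, -, -, -, hie, -⟩
  exact mem_edgeSet_of_ne_zero
    (mem_chains_of_mem_cycleSpace ((hA i hi).mem_cycleSpace_restrictTo (hF.mem i))) hie

theorem IsSparseGenerating.cycleSpace_le_deleteEdges_sup_span [Finite ι] (hxy : x ≠ y)
    (hF : IsSparseGenerating (contractEdge G x y) F) (hA : ∀ i ∈ A, Avoids (F i) x) :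
    cycleSpace G ≤ cycleSpace (G.deleteEdges (innerEdges F A)) ⊔
      Submodule.span (ZMod 2) (Set.range fun i : A => F i) := by
  have := Fintype.ofFinite ι
  intro S hS
  obtain ⟨T, hT, hST⟩ := exists_mem_cycleSpace_contractEdge hxy hS
  obtain ⟨c, rfl⟩ := hF.exists_coeff hT
  have hspan : ∑ i ∈ A, c i • F i ∈ Submodule.span (ZMod 2) (Set.range fun i : A => F i) :=
    sum_mem fun i hi => Submodule.smul_mem _ _ (Submodule.subset_span ⟨⟨i, hi⟩, rfl⟩)
  refine (Submodule.add_mem_iff_left _ (Submodule.mem_sup_right hspan)).1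
    (Submodule.mem_sup_left (mem_cycleSpace_deleteEdges_iff.2 ⟨add_mem hS (sum_mem fun i hi =>
      Submodule.smul_mem _ _ (cycleSpace_mono (restrictTo_le _ _)
        ((hA i hi).mem_cycleSpace_restrictTo (hF.mem i)))), fun e he => ?_⟩))
  have hAe : (∑ i ∈ A, c i • F i) e = (∑ i, c i • F i) e := by
    simp only [Finset.sum_apply, Pi.smul_apply]
    exact Finset.sum_subset (Finset.subset_univ A) fun k _ hk => smul_eq_zero_of_right _
      (not_imp_comm.1 (hF.sparse.mem_of_mem_innerEdges he) hk)
  rw [Pi.add_apply, hAe, hST e (hF.innerEdges_subset hA he), CharTwo.add_self_eq_zero]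

namespace IsMinimalCounterexample

theorem reachable_of_contractEdge_adj (hG : IsMinimalCounterexample G) (hxy : G.Adj x y)
    (hp : (contractEdge G x y).Adj x p) (hq : (contractEdge G x y).Adj x q) :
    (restrictTo G {x, y}ᶜ).Reachable p q := by
  obtain ⟨hpx, -, hpy, hp⟩ := contractEdge_adj_left.1 hp
  obtain ⟨hqx, -, hqy, hq⟩ := contractEdge_adj_left.1 hq
  obtain ⟨p', hp'⟩ : ∃ p', G.Adj p p' := hp.elim (⟨_, ·.symm⟩) (⟨_, ·.symm⟩)
  obtain ⟨q', hq'⟩ : ∃ q', G.Adj q q' := hq.elim (⟨_, ·.symm⟩) (⟨_, ·.symm⟩)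
  exact hG.reachable_restrictTo_compl_pair hxy hp' hq' (by simp [hpx.symm, hpy])
    (by simp [hqx.symm, hqy])

theorem exists_coeff_avoids [Fintype ι] (hG : IsMinimalCounterexample G) (hxy : G.Adj x y)
    (hF : IsSparseGenerating (contractEdge G x y) F) (hsum : ∑ i, F i = 0)
    (hS : S ∈ cycleSpace (restrictTo G {x, y}ᶜ)) :
    ∃ c : ι → ZMod 2, ∑ i, c i • F i = S ∧ ∀ i, c i ≠ 0 → Avoids (F i) x := by
  have hSx : Avoids S x :=
    avoids_of_mem_chains_restrictTo (mem_chains_of_mem_cycleSpace hS) (by simp)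
  obtain ⟨d, rfl⟩ := hF.exists_coeff (cycleSpace_mono (restrictTo_le_contractEdge G x y) hS)
  have adj : ∀ {i u}, F i s(x, u) ≠ 0 → (contractEdge G x y).Adj x u := fun {i u} =>
    adj_of_ne_zero (mem_chains_of_mem_cycleSpace (hF.mem i))
  by_cases h : ∀ i, d i ≠ 0 → Avoids (F i) x
  · exact ⟨d, rfl, h⟩
  obtain ⟨i, hi, p, hp⟩ : ∃ i, d i ≠ 0 ∧ ∃ p, F i s(x, p) ≠ 0 := by
    simpa [Avoids] using h
  refine ⟨fun k => d k + 1, ?_, fun j hj u => by_contra fun hu => hj ?_⟩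
  · simp only [add_smul, Finset.sum_add_distrib, one_smul, hsum, add_zero]
  · obtain ⟨k, hk, hku⟩ := hF.exists_of_reachable hSx (restrictTo_le_contractEdge G x y)
      (fun u h => h.2.1 (.inl rfl)) (adj hp) (adj hu)
      (hG.reachable_of_contractEdge_adj hxy (adj hp) (adj hu)) ⟨i, hi, hp⟩
    change d j + 1 = 0
    rw [hF.sparse.coeff_eq_of_sum_eq_zero (hSx u) hu hku, eq_one_of_ne_zero hk,
      CharTwo.add_self_eq_zero]

theorem reachable_deleteEdges_innerEdges (hG : IsMinimalCounterexample G) (hxy : G.Adj x y)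
    (hF : IsSparseGenerating (contractEdge G x y) F) (hA : ∀ i ∈ A, Avoids (F i) x)
    (hp : p ∉ ({x, y} : Set V)) (hq : q ∉ ({x, y} : Set V)) (hxp : G.Adj x p ∨ G.Adj y p)
    (hxq : G.Adj x q ∨ G.Adj y q) :
    ((restrictTo G {x, y}ᶜ).deleteEdges (innerEdges F A)).Reachable p q := by
  simp only [Set.mem_insert_iff, Set.mem_singleton_iff, not_or] at hp hq
  have hp' := contractEdge_adj_left.2 ⟨Ne.symm hp.1, hxy.ne, hp.2, hxp⟩
  have hq' := contractEdge_adj_left.2 ⟨Ne.symm hq.1, hxy.ne, hq.2, hxq⟩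
  exact hF.reachable_deleteEdges_innerEdges hA (restrictTo_le_contractEdge G x y)
    (fun u h => h.2.1 (.inl rfl)) (fun a b ha hb => (contractEdge_adj_of_ne ha hb).1) hp' hq'
    (hG.reachable_of_contractEdge_adj hxy hp' hq')

theorem avoids_of_coeff_ne_zero [Fintype κ] (hG : IsMinimalCounterexample G) (hxy : G.Adj x y)
    (hF : IsSparseGenerating (contractEdge G x y) F) (hA : ∀ i ∈ A, Avoids (F i) x)
    (hF' : IsSparseGenerating (G.deleteEdges (innerEdges F A)) F') {c : κ → ZMod 2}
    (hcx : Avoids (∑ i, c i • F' i) x) (hcy : Avoids (∑ i, c i • F' i) y)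
    (hcxy : ∀ i, F' i s(x, y) ≠ 0 → c i = 0) {i : κ} (hi : c i ≠ 0) :
    Avoids (F' i) x ∧ Avoids (F' i) y := by
  have not_mem_inner : ∀ {v u}, v ∈ ({x, y} : Set V) → s(v, u) ∉ innerEdges F A := fun hv h =>
    (show (restrictTo G _).Adj _ _ from hF.innerEdges_subset hA h).2.1 hv
  have hW : (restrictTo G {x, y}ᶜ).deleteEdges (innerEdges F A) ≤
      G.deleteEdges (innerEdges F A) := deleteEdges_mono (restrictTo_le _ _)
  have reach := fun {p q} => hG.reachable_deleteEdges_innerEdges (p := p) (q := q) hxy hF hA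
  constructor
  · obtain ⟨q, hq, hqx⟩ := hG.exists_adj_ne hxy.symm
    refine hF'.avoids_of_coeff_ne_zero hcx hcxy (deleteEdges_adj.2 ⟨hxy, not_mem_inner (.inl rfl)⟩)
      hW (fun u h => (deleteEdges_le _ h).2.1 (.inl rfl))
      (deleteEdges_adj.2 ⟨hq, not_mem_inner (.inr rfl)⟩) hqx (fun u hu huy => ?_) hi
    have hxu : G.Adj x u := deleteEdges_le _ hu
    exact reach (by simp [hxu.ne', huy]) (by simp [hqx, hq.ne']) (.inl hxu) (.inr hq)
  · obtain ⟨q, hq, hqy⟩ := hG.exists_adj_ne hxy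
    refine hF'.avoids_of_coeff_ne_zero hcy (Sym2.eq_swap (a := x) ▸ hcxy)
      (deleteEdges_adj.2 ⟨hxy.symm, not_mem_inner (.inr rfl)⟩)
      hW (fun u h => (deleteEdges_le _ h).2.1 (.inr rfl))
      (deleteEdges_adj.2 ⟨hq, not_mem_inner (.inl rfl)⟩) hqy (fun u hu hux => ?_) hi
    have hyu : G.Adj y u := deleteEdges_le _ hu
    exact reach (by simp [hux, hyu.ne']) (by simp [hq.ne', hqy]) (.inr hyu) (.inl hq)

/-- The outline of a patch lies in a single face of the graph without the inner edges of the
patch. -/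
theorem exists_option_of_isPatch [Fintype ι] [Fintype κ] (hG : IsMinimalCounterexample G)
    (hxy : G.Adj x y) (hF : IsSparseGenerating (contractEdge G x y) F) (hsum : ∑ i, F i = 0)
    (hA : IsPatch F x A) (hF' : IsSparseGenerating (G.deleteEdges (innerEdges F A)) F')
    (hsum' : ∑ i, F' i = 0) :
    ∃ o : Option κ, ∀ e, (∑ i ∈ A, F i) e ≠ 0 → ∃ i ∈ o, F' i e ≠ 0 := by
  by_cases hD : ∃ e, (∑ i ∈ A, F i) e ≠ 0
  swap
  · exact ⟨none, fun e he => absurd ⟨e, he⟩ hD⟩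
  obtain ⟨e, he⟩ := hD
  have hDH : ∑ i ∈ A, F i ∈ cycleSpace (restrictTo G {x, y}ᶜ) := sum_mem fun i hi =>
    (hA.avoids i hi).mem_cycleSpace_restrictTo (hF.mem i)
  have hDx : Avoids (∑ i ∈ A, F i) x :=
    avoids_of_mem_chains_restrictTo (mem_chains_of_mem_cycleSpace hDH) (by simp)
  have hDy : Avoids (∑ i ∈ A, F i) y :=
    avoids_of_mem_chains_restrictTo (mem_chains_of_mem_cycleSpace hDH) (by simp)
  obtain ⟨c, hc, hcxy⟩ := hF'.exists_coeff_eq_zero hsum' (mem_cycleSpace_deleteEdges_iff.2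
    ⟨cycleSpace_mono (restrictTo_le _ _) hDH, fun e => hF.sparse.sum_eq_zero_of_mem_innerEdges⟩)
    (hDx y)
  obtain ⟨i, hi, hie⟩ : ∃ i, c i ≠ 0 ∧ F' i e ≠ 0 := by
    rw [← hc, Finset.sum_apply] at he
    obtain ⟨i, -, hi⟩ := Finset.exists_ne_zero_of_sum_ne_zero he
    exact ⟨i, left_ne_zero_of_mul hi, right_ne_zero_of_mul hi⟩
  obtain ⟨hix, hiy⟩ := hG.avoids_of_coeff_ne_zero hxy hF hA.avoids hF' (hc ▸ hDx) (hc ▸ hDy) hcxy hi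
  obtain ⟨hiG, hiI⟩ := mem_cycleSpace_deleteEdges_iff.1 (hF'.mem i)
  obtain ⟨b, hb, hbx⟩ := hG.exists_coeff_avoids hxy hF hsum
    (mem_cycleSpace_restrictTo hiG hix hiy)
  refine ⟨some i, fun e' he' => ⟨i, rfl, ?_⟩⟩
  rw [← hb] at hie hiI ⊢
  exact hA.ne_zero_of_ne_zero hF.sparse hbx hiI he he' hie

theorem innerEdges_eq_empty {ι : Type} [Fintype ι] {F : ι → EdgeChain V} {A : Finset ι}
    (hG : IsMinimalCounterexample G) (hxy : G.Adj x y)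
    (hF : IsSparseGenerating (contractEdge G x y) F) (hsum : ∑ i, F i = 0) (hA : IsPatch F x A) :
    innerEdges F A = ∅ := by
  by_contra! hne
  obtain ⟨e, he⟩ := hne
  have hG' : IsMacLane (G.deleteEdges (innerEdges F A)) := by
    have heH := hF.innerEdges_subset hA.avoids he
    induction e with | _ a b
    exact hG.isMacLane_of_le (deleteEdges_le _) (restrictTo_le _ _ heH) (by simp [he])
  obtain ⟨κ, _, F', hF', hsum'⟩ := hG'.exists_sum_eq_zero
  obtain ⟨o, ho⟩ := hG.exists_option_of_isPatch hxy hF hsum hA hF' hsum'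
  refine hG.not_isMacLane (hF'.isMacLane_of_refinement (f := fun i : A => F i) (deleteEdges_le _)
    (fun i => cycleSpace_mono (restrictTo_le _ _)
      ((hA.avoids i i.2).mem_cycleSpace_restrictTo (hF.mem i)))
    (fun e i j k hi hj hk => by simpa only [Subtype.ext_iff] using hF.sparse e i j k hi hj hk)
    (hF.cycleSpace_le_deleteEdges_sup_span hxy.ne hA.avoids)
    (fun e i j hij hi hj k => (mem_cycleSpace_deleteEdges_iff.1 (hF'.mem k)).2 e
      ⟨i, i.2, j, j.2, Subtype.coe_ne_coe.2 hij, hi, hj⟩) o fun e he => .inl (ho e ?_))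
  rwa [← Finset.sum_coe_sort A F]

theorem eq_of_avoids {ι : Type} [Fintype ι] {F : ι → EdgeChain V} {i j : ι} {e : Sym2 V}
    (hG : IsMinimalCounterexample G) (hxy : G.Adj x y)
    (hF : IsSparseGenerating (contractEdge G x y) F) (hsum : ∑ i, F i = 0) (hi : Avoids (F i) x)
    (hj : Avoids (F j) x) (hie : F i e ≠ 0) (hje : F j e ≠ 0) : i = j := by
  obtain ⟨A, hiA, hA⟩ := exists_isPatch hi
  by_contra hij
  have he : e ∈ innerEdges F A := ⟨i, hiA, j, hA.mem_of_mem hiA hj hie hje, hij, hie, hje⟩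
  exact Set.notMem_empty e (hG.innerEdges_eq_empty hxy hF hsum hA ▸ he)

/-- The faces of the contraction that avoid the contracted vertex are pairwise edge-disjoint and
generate the cycle space of `G - x - y`. -/
theorem mul_mem_cycleSpace (hG : IsMinimalCounterexample G) (hxy : G.Adj x y)
    (hS : S ∈ cycleSpace (restrictTo G {x, y}ᶜ)) (hT : T ∈ cycleSpace (restrictTo G {x, y}ᶜ)) :
    S * T ∈ cycleSpace (restrictTo G {x, y}ᶜ) := by
  obtain ⟨ι, _, F, hF, hsum⟩ := (hG.isMacLane_contractEdge hxy).exists_sum_eq_zero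
  obtain ⟨c, rfl, hc⟩ := hG.exists_coeff_avoids hxy hF hsum hS
  obtain ⟨d, rfl, hd⟩ := hG.exists_coeff_avoids hxy hF hsum hT
  have hmul : (∑ i, c i • F i) * ∑ i, d i • F i = ∑ i, (c i * d i) • F i := by
    ext e
    simp only [Pi.mul_apply, Finset.sum_apply, Pi.smul_apply, smul_eq_mul, Finset.sum_mul_sum]
    refine Finset.sum_congr rfl fun i _ => ?_
    rw [Finset.sum_eq_single i (fun j _ hji => ?_) (by simp)]
    · rw [mul_mul_mul_comm, ← pow_two (F i e), ZMod.pow_card]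
    · by_contra h
      have hci := left_ne_zero_of_mul h
      have hdj := right_ne_zero_of_mul h
      exact hji (hG.eq_of_avoids hxy hF hsum (hd j (left_ne_zero_of_mul hdj))
        (hc i (left_ne_zero_of_mul hci)) (right_ne_zero_of_mul hdj) (right_ne_zero_of_mul hci))
  rw [hmul]
  refine sum_mem fun i _ => ?_
  by_cases hi : c i = 0
  · simp [hi]
  · exact Submodule.smul_mem _ _ ((hc i hi).mem_cycleSpace_restrictTo (hF.mem i))

end IsMinimalCounterexample

end Theta6

/-! ### Graphs without theta subgraphs -/

namespace Theta6

section Cactus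

variable {V : Type*} {H : SimpleGraph V} {a b c u v w : V}

/-- A cactus: no two vertices are joined by three edge-disjoint walks. -/
def IsCactus (H : SimpleGraph V) : Prop :=
  ∀ ⦃a b : V⦄ (p q r : H.Walk a b), p.edges.Disjoint q.edges → p.edges.Disjoint r.edges →
    q.edges.Disjoint r.edges → a = b

theorem IsCactus.eq_of_disjoint_edges {C : H.Walk u u} (hH : IsCactus H) (hC : C.IsTrail)
    (ha : a ∈ C.support) (hb : b ∈ C.support) (r : H.Walk a b) (hr : C.edges.Disjoint r.edges) :
    a = b := by
  classical
  have hrot : ∀ e ∈ (C.rotate a ha).edges, e ∈ C.edges := fun e he =>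
    (C.rotate_edges a ha).mem_iff.1 he
  have hb' : b ∈ (C.rotate a ha).support := (C.mem_support_rotate_iff a ha).2 hb
  refine hH ((C.rotate a ha).takeUntil b hb') ((C.rotate a ha).dropUntil b hb').reverse r ?_ ?_ ?_
  · simpa using (hC.rotate ha).disjoint_edges_takeUntil_dropUntil hb'
  · exact fun e he => hr (hrot e (Walk.edges_takeUntil_subset_edges _ hb' he))
  · intro e he
    rw [Walk.edges_reverse, List.mem_reverse] at he
    exact hr (hrot e (Walk.edges_dropUntil_subset_edges _ hb' he))

theorem IsCactus.eq_of_adj_of_notMem_support {C : H.Walk u u} (hH : IsCactus H) (hC : C.IsTrail)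
    (ha : a ∈ C.support) (hb : b ∈ C.support) (hac : H.Adj a c) (hcb : H.Adj c b)
    (hc : c ∉ C.support) : a = b := by
  refine hH.eq_of_disjoint_edges hC ha hb (.cons hac (.cons hcb .nil)) ?_
  have hedge : ∀ e ∈ C.edges, c ∉ e := fun e he hce => hc (C.mem_support_of_mem_edges he hce)
  intro e he her
  simp only [Walk.edges_cons, Walk.edges_nil, List.mem_cons, List.not_mem_nil, or_false] at her
  obtain rfl | rfl := her <;> exact hedge _ he (by simp)

theorem IsCactus.eq_of_adj_of_mem_dropUntil [DecidableEq V] (hH : IsCactus H) {p : H.Walk u v}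
    (hp : p.IsPath) (hc : c ∈ p.support) (hw : w ∈ (p.dropUntil c hc).support)
    (huc : H.Adj u c) (huw : H.Adj u w) (hcs : c ≠ p.snd) (hws : w ≠ p.snd) : c = w := by
  have hdrop := Walk.edges_dropUntil_subset_edges p hc
  have htake := Walk.edges_takeUntil_subset_edges p hc
  have hseg := Walk.edges_takeUntil_subset_edges _ hw
  have huc' : s(u, c) ∉ p.edges := fun h => hcs (hp.eq_snd_of_mem_edges h)
  have huw' : s(u, w) ∉ p.edges := fun h => hws (hp.eq_snd_of_mem_edges h)
  have hdisj := hp.isTrail.disjoint_edges_takeUntil_dropUntil hc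
  by_contra hcw
  refine huc.ne (hH (Walk.cons huc .nil) (p.takeUntil c hc)
    (Walk.cons huw ((p.dropUntil c hc).takeUntil w hw).reverse) ?_ ?_ ?_)
  · simpa using fun h => huc' (htake h)
  · simp only [Walk.edges_cons, Walk.edges_nil, Walk.edges_reverse, List.singleton_disjoint,
      List.mem_cons, List.mem_reverse, not_or]
    exact ⟨fun h => hcw (Sym2.congr_right.1 h), fun h => huc' (hdrop (hseg h))⟩
  · simp only [Walk.edges_cons, Walk.edges_reverse, List.disjoint_cons_right,
      List.disjoint_reverse_right]
    exact ⟨fun h => huw' (htake h), fun e he he' => hdisj he (hseg he')⟩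

theorem mem_support_of_adj_of_maximal_path {p : H.Walk u v} (hp : p.IsPath)
    (hmax : ∀ u' v' (q : H.Walk u' v'), q.IsPath → q.length ≤ p.length) (hw : H.Adj u w) :
    w ∈ p.support := by
  by_contra h
  have := hmax _ _ (Walk.cons hw.symm p) (hp.cons h)
  rw [Walk.length_cons] at this
  omega

theorem IsCactus.eq_of_adj_of_maximal_path (hH : IsCactus H) {p : H.Walk u v} (hp : p.IsPath)
    (hmax : ∀ u' v' (q : H.Walk u' v'), q.IsPath → q.length ≤ p.length)
    (hc : H.Adj u c) (hw : H.Adj u w) (hcs : c ≠ p.snd) (hws : w ≠ p.snd) : c = w := by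
  classical
  by_contra hcw
  have hcp := mem_support_of_adj_of_maximal_path hp hmax hc
  have hwp := mem_support_of_adj_of_maximal_path hp hmax hw
  have hmem : ∀ {s t}, s ∈ p.support → ∀ ht : t ∈ p.support,
      s ∈ (p.takeUntil t ht).support ∨ s ∈ (p.dropUntil t ht).support := fun hs ht => by
    rwa [← Walk.mem_support_append_iff, Walk.take_spec]
  rcases hmem hwp hcp with hwc | hwc
  · rcases hmem hcp hwp with hcw' | hcw'
    · exact Walk.notMem_support_takeUntil_support_takeUntil_subset (Ne.symm hcw) hcp hwc hcw'
    · exact hcw (hH.eq_of_adj_of_mem_dropUntil hp hwp hcw' hw hc hws hcs).symm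
  · exact hcw (hH.eq_of_adj_of_mem_dropUntil hp hcp hwc hc hw hcs hws)

theorem IsCactus.exists_forall_adj_of_maximal_path (hH : IsCactus H) {p : H.Walk u v}
    (hp : p.IsPath) (hmax : ∀ u' v' (q : H.Walk u' v'), q.IsPath → q.length ≤ p.length) :
    ∃ a b, ∀ w, H.Adj u w → w = a ∨ w = b := by
  by_cases hc : ∃ c, H.Adj u c ∧ c ≠ p.snd
  · obtain ⟨c, hc, hcs⟩ := hc
    exact ⟨p.snd, c, fun w hw => or_iff_not_imp_left.2 fun hws =>
      hH.eq_of_adj_of_maximal_path hp hmax hw hc hws hcs⟩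
  · push Not at hc
    exact ⟨p.snd, p.snd, fun w hw => .inl (hc w hw)⟩

theorem isPath_reverse_append_cons {z : V} {t : H.Walk u z} {d : H.Walk c v} {hzc : H.Adj z c}
    (h : ((t.concat hzc).append d).IsPath) (huc : H.Adj u c) :
    (t.reverse.append (.cons huc d)).IsPath := by
  have hd : c :: d.support.tail = d.support := by cases d <;> rfl
  rw [Walk.isPath_def] at h ⊢
  rw [Walk.support_append, Walk.support_concat, List.append_assoc, List.singleton_append, hd] at h
  rw [Walk.support_append, Walk.support_reverse, Walk.support_cons, List.tail_cons]
  exact ((List.reverse_perm _).append_right _).nodup_iff.2 h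

/-- The cycle closes an initial segment of a longest path; the other end of the segment is the
start of a longest path as well. -/
theorem IsCactus.exists_isCycle [Finite V] (hH : IsCactus H)
    (hdeg : ∀ ⦃v w⦄, H.Adj v w → ∀ x, ∃ y, H.Adj v y ∧ y ≠ x) (hab : H.Adj a b) :
    ∃ (c : V) (C : H.Walk c c), C.IsCycle ∧ ∃ u ∈ C.support, ∃ z ∈ C.support, u ≠ z ∧
      (∃ a b, ∀ w, H.Adj u w → w = a ∨ w = b) ∧ ∃ a b, ∀ w, H.Adj z w → w = a ∨ w = b := by
  classical
  have : Nonempty V := ⟨a⟩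
  obtain ⟨u, v, p, hp, hmax⟩ := Walk.exists_isPath_forall_isPath_length_le_length H
  have hnil : ¬ p.Nil := fun h => by
    have := hmax a b hab.toWalk (by simp [hab.ne])
    simp [Walk.length_eq_zero_iff.2 h] at this
  obtain ⟨c, hc, hcs⟩ := hdeg (p.adj_snd hnil) p.snd
  have hcp := mem_support_of_adj_of_maximal_path hp hmax hc
  obtain ⟨z, t, hzc, ht⟩ : ∃ (z : V) (t : H.Walk u z) (h : H.Adj z c),
      t.concat h = p.takeUntil c hcp :=
    ⟨_, _, _, Walk.concat_dropLast (Walk.adj_penultimate (Walk.not_nil_of_ne hc.ne))⟩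
  have hcycle : (Walk.cons hc.symm (p.takeUntil c hcp)).IsCycle :=
    (Walk.cons_isCycle_iff _ _).2 ⟨hp.takeUntil hcp, fun h => hcs
      (hp.eq_snd_of_mem_edges (Sym2.eq_swap ▸ Walk.edges_takeUntil_subset_edges p hcp h))⟩
  have hsplit : (t.concat hzc).append (p.dropUntil c hcp) = p := by rw [ht, p.take_spec]
  have hq := isPath_reverse_append_cons (hsplit ▸ hp) hc
  refine ⟨c, _, hcycle, u, by simp, z, by simp [← ht, Walk.support_concat], ?_,
    hH.exists_forall_adj_of_maximal_path hp hmax,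
    hH.exists_forall_adj_of_maximal_path hq fun u' v' r hr => (hmax u' v' r hr).trans_eq ?_⟩
  · rintro rfl
    refine hcs (hp.eq_snd_of_mem_edges (Walk.edges_takeUntil_subset_edges p hcp ?_))
    simp [← ht, Walk.edges_concat]
  · rw [← congrArg Walk.length hsplit]
    simp only [Walk.length_append, Walk.length_concat, Walk.length_reverse, Walk.length_cons]
    omega

theorem exists_walk_forall_mem_edges {x y s t z : V} (hxy : H.Adj x y) (hs : s = x ∨ s = y)
    (ht : t = x ∨ t = y) (hus : H.Adj u s) (hzt : H.Adj z t) :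
    ∃ r : H.Walk u z, ∀ e ∈ r.edges, x ∈ e ∨ y ∈ e := by
  have hst : ∃ r : H.Walk s t, ∀ e ∈ r.edges, x ∈ e ∨ y ∈ e := by
    obtain rfl | rfl := hs <;> obtain rfl | rfl := ht
    · exact ⟨.nil, by simp⟩
    · exact ⟨hxy.toWalk, by simp⟩
    · exact ⟨hxy.symm.toWalk, by simp⟩
    · exact ⟨.nil, by simp⟩
  obtain ⟨r, hr⟩ := hst
  refine ⟨.cons hus (r.concat hzt.symm), fun e he => ?_⟩
  simp only [Walk.edges_cons, Walk.edges_concat, List.concat_eq_append, List.mem_cons,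
    List.mem_append, List.not_mem_nil, or_false] at he
  obtain rfl | he | rfl := he
  · obtain rfl | rfl := hs <;> simp
  · exact hr e he
  · obtain rfl | rfl := ht <;> simp

end Cactus

namespace IsMinimalCounterexample

variable {V : Type*} [Fintype V] {G : SimpleGraph V} {a b p q u v w x y z : V}

theorem isCactus (hG : IsMinimalCounterexample G) (hxy : G.Adj x y) :
    IsCactus (restrictTo G {x, y}ᶜ) := by
  intro a b p q r hpq hpr hqr
  obtain ⟨P, hP, hPb, hPe⟩ := exists_chain_boundary_eq_of_walk p
  obtain ⟨Q, hQ, hQb, hQe⟩ := exists_chain_boundary_eq_of_walk q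
  obtain ⟨R, hR, hRb, hRe⟩ := exists_chain_boundary_eq_of_walk r
  have hmul : ∀ {s t : List (Sym2 V)} {S T : EdgeChain V}, s.Disjoint t →
      (∀ e, S e ≠ 0 → e ∈ s) → (∀ e, T e ≠ 0 → e ∈ t) → S * T = 0 := fun hst hS hT => by
    funext e
    by_contra h
    exact hst (hS e (left_ne_zero_of_mul h)) (hT e (right_ne_zero_of_mul h))
  have hcycle : (P + Q) * (P + R) ∈ cycleSpace (restrictTo G {x, y}ᶜ) :=
    hG.mul_mem_cycleSpace hxy
      (mem_cycleSpace.2 ⟨add_mem hP hQ, by rw [map_add, hPb, hQb, ZModModule.add_self]⟩)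
      (mem_cycleSpace.2 ⟨add_mem hP hR, by rw [map_add, hPb, hRb, ZModModule.add_self]⟩)
  have hPP : P * P = P := by
    funext e
    rw [Pi.mul_apply, ← pow_two, ZMod.pow_card]
  rw [add_mul, mul_add, mul_add, hPP, hmul hpr hPe hRe, mul_comm Q, hmul hpq hPe hQe,
    hmul hqr hQe hRe, add_zero, add_zero, add_zero, mem_cycleSpace, hPb] at hcycle
  by_contra hab
  have := congrFun hcycle.2 a
  simp [vertexChain, hab] at this

theorem exists_adj_of_mem_support (hG : IsMinimalCounterexample G) {c : V}
    {C : (restrictTo G {x, y}ᶜ).Walk c c} (hC : C.IsCycle) (hv : v ∈ C.support)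
    (h : ∀ w, (restrictTo G {x, y}ᶜ).Adj v w → w = a ∨ w = b) :
    ∃ s, (s = x ∨ s = y) ∧ G.Adj v s := by
  obtain ⟨w, hw⟩ : (C.toSubgraph.neighborSet v).Nonempty :=
    Set.nonempty_of_ncard_ne_zero (by simp [hC.ncard_neighborSet_toSubgraph_eq_two hv])
  have hvw := C.toSubgraph.adj_sub hw
  obtain ⟨s, hs, hsa, hsb⟩ := hG.exists_adj_ne_ne hvw.1 a b
  have hsxy : s = x ∨ s = y := by
    by_contra hsxy
    exact (h s ⟨hs, hvw.2.1, hsxy⟩).elim hsa hsb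
  exact ⟨s, hsxy, hs⟩

/-- Two vertices of degree two in the cycle are joined by a path through `x` and `y`. Together with
the cycle it would be a theta in `G - p - q` for any edge `pq` away from the cycle. -/
theorem exists_isCycle_forall_adj (hG : IsMinimalCounterexample G) (hxy : G.Adj x y)
    (hab : (restrictTo G {x, y}ᶜ).Adj a b) :
    ∃ (c : V) (C : (restrictTo G {x, y}ᶜ).Walk c c), C.IsCycle ∧
      ∀ p q, (restrictTo G {x, y}ᶜ).Adj p q → p ∈ C.support ∨ q ∈ C.support := by
  obtain ⟨c, C, hC, u, hu, z, hz, huz, ⟨a, a', hua⟩, ⟨b, b', hzb⟩⟩ :=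
    (hG.isCactus hxy).exists_isCycle
      (fun v w hvw => hG.exists_restrictTo_compl_pair_adj hxy hvw.1 hvw.2.1) hab
  refine ⟨c, C, hC, fun p q hpq => ?_⟩
  by_contra! hCpq
  have hpqxy : ∀ s, s = x ∨ s = y → s ∈ ({p, q} : Set V)ᶜ := by
    rintro s (rfl | rfl) (rfl | rfl)
    exacts [hpq.2.1 (.inl rfl), hpq.2.2 (.inl rfl), hpq.2.1 (.inr rfl), hpq.2.2 (.inr rfl)]
  have hCpq' : ∀ v ∈ C.support, v ∈ ({p, q} : Set V)ᶜ := by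
    rintro v hv (rfl | rfl)
    exacts [hCpq.1 hv, hCpq.2 hv]
  obtain ⟨s, hs, hus⟩ := hG.exists_adj_of_mem_support hC hu hua
  obtain ⟨t, ht, hzt⟩ := hG.exists_adj_of_mem_support hC hz hzb
  obtain ⟨r, hr⟩ := exists_walk_forall_mem_edges
    (restrictTo_adj.2 ⟨hxy, hpqxy x (.inl rfl), hpqxy y (.inr rfl)⟩) hs ht
    ⟨hus, hCpq' u hu, hpqxy s hs⟩ ⟨hzt, hCpq' z hz, hpqxy t ht⟩
  have htransfer : ∀ e ∈ C.edges, e ∈ (restrictTo G {p, q}ᶜ).edgeSet := fun e he => by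
    induction e with | _ v w
    exact ⟨(C.adj_of_mem_edges he).1, hCpq' v (C.fst_mem_support_of_mem_edges he),
      hCpq' w (C.snd_mem_support_of_mem_edges he)⟩
  refine huz ((hG.isCactus hpq.1).eq_of_disjoint_edges (hC.transfer htransfer).isTrail
    (by simpa) (by simpa) r fun e he her => ?_)
  rw [Walk.edges_transfer] at he
  induction e with | _ v w
  have hvw := C.adj_of_mem_edges he
  simp only [restrictTo_adj, Set.mem_compl_iff, Set.mem_insert_iff, Set.mem_singleton_iff] at hvw
  have := hr _ her
  simp only [Sym2.mem_iff] at this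
  tauto

theorem ncard_neighborSet_restrictTo_le (hG : IsMinimalCounterexample G) (hxy : G.Adj x y)
    (v : V) : ((restrictTo G {x, y}ᶜ).neighborSet v).ncard ≤ 2 := by
  by_contra! hlt
  have hH := hG.isCactus hxy
  obtain ⟨a, b, -, ha, hb, -, hab, -⟩ := (Set.two_lt_ncard_iff (Set.toFinite _)).1 hlt
  obtain ⟨c, C, hC, htouch⟩ := hG.exists_isCycle_forall_adj hxy ha
  by_cases hv : v ∈ C.support
  · obtain ⟨w, hw, hwC⟩ : ∃ w, (restrictTo G {x, y}ᶜ).Adj v w ∧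
        w ∉ C.toSubgraph.neighborSet v :=
      Set.exists_mem_notMem_of_ncard_lt_ncard
        ((hC.ncard_neighborSet_toSubgraph_eq_two hv).trans_lt hlt)
    have hwe : s(v, w) ∉ C.edges := fun h => hwC (C.adj_toSubgraph_iff_mem_edges.2 h)
    by_cases hwC : w ∈ C.support
    · refine hw.ne (hH.eq_of_disjoint_edges hC.isTrail hv hwC hw.toWalk ?_)
      simpa using hwe
    · obtain ⟨r, hr, hrv⟩ := hG.exists_restrictTo_compl_pair_adj hxy hw.1.symm hw.2.2 v
      exact hrv (hH.eq_of_adj_of_notMem_support hC.isTrail hv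
        ((htouch w r hr).resolve_left hwC) hw hr hwC).symm
  · exact hab (hH.eq_of_adj_of_notMem_support hC.isTrail ((htouch v a ha).resolve_left hv)
      ((htouch v b hb).resolve_left hv) ha.symm hb hv)

end IsMinimalCounterexample

end Theta6

/-! ### MacLane's theorem -/

namespace Theta6

variable {V : Type*} [Fintype V] {G : SimpleGraph V} {v w x y : V}

theorem isMacLane_of_forall_not_adj (h : ∀ a b, ¬ G.Adj a b) : IsMacLane G := by
  refine ⟨Empty, inferInstance, fun e => e.elim, fun e => e.elim, fun S hS => ?_,
    fun _ e => e.elim⟩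
  obtain rfl : S = 0 := by
    funext e
    induction e with | _ a b => exact eq_zero_of_not_adj (mem_chains_of_mem_cycleSpace hS) (h a b)
  exact zero_mem _

namespace IsMinimalCounterexample

theorem ncard_neighborSet_diff_pair (hG : IsMinimalCounterexample G) (hxy : G.Adj x y)
    (hvw : G.Adj v w) (hvx : v ≠ x) (hvy : v ≠ y) : (G.neighborSet v \ {x, y}).ncard = 2 := by
  have hv : v ∈ ({x, y} : Set V)ᶜ := by simp [hvx, hvy]
  have heq : G.neighborSet v \ {x, y} = (restrictTo G {x, y}ᶜ).neighborSet v := by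
    ext u
    exact ⟨fun h => ⟨h.1, hv, h.2⟩, fun h => ⟨h.1, h.2.2⟩⟩
  obtain ⟨a, ha, -⟩ := hG.exists_restrictTo_compl_pair_adj hxy hvw hv v
  obtain ⟨b, hb, hba⟩ := hG.exists_restrictTo_compl_pair_adj hxy hvw hv a
  rw [heq]
  exact (hG.ncard_neighborSet_restrictTo_le hxy v).antisymm
    ((Set.one_lt_ncard_iff (Set.toFinite _)).2 ⟨b, a, hb, ha, hba⟩)

theorem three_le_ncard_neighborSet (hG : IsMinimalCounterexample G) (hvw : G.Adj v w) :
    3 ≤ (G.neighborSet v).ncard := by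
  obtain ⟨a, ha, haw, -⟩ := hG.exists_adj_ne_ne hvw w w
  obtain ⟨b, hb, hbw, hba⟩ := hG.exists_adj_ne_ne hvw w a
  exact (Set.two_lt_ncard_iff (Set.toFinite _)).2
    ⟨w, a, b, hvw, ha, hb, haw.symm, hbw.symm, hba.symm⟩

theorem adj_of_four_le_ncard_neighborSet (hG : IsMinimalCounterexample G)
    (hv : 4 ≤ (G.neighborSet v).ncard) (hxy : G.Adj x y) (hvx : v ≠ x) (hvy : v ≠ y) :
    (G.neighborSet v).ncard = 4 ∧ G.Adj v x ∧ G.Adj v y := by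
  obtain ⟨w, hw⟩ : (G.neighborSet v).Nonempty := Set.nonempty_of_ncard_ne_zero (by omega)
  have hdiff := hG.ncard_neighborSet_diff_pair hxy hw hvx hvy
  have hadd := Set.ncard_inter_add_ncard_sdiff_eq_ncard (G.neighborSet v) {x, y}
  have hinter : G.neighborSet v ∩ {x, y} = {x, y} :=
    Set.eq_of_subset_of_ncard_le Set.inter_subset_right (by rw [Set.ncard_pair hxy.ne]; omega)
  rw [hinter, Set.ncard_pair hxy.ne] at hadd
  have hsub := Set.inter_eq_right.1 hinter
  exact ⟨by omega, hsub (.inl rfl), hsub (.inr rfl)⟩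

theorem neighborSet_diff_singleton_eq (hG : IsMinimalCounterexample G)
    (hv : 4 ≤ (G.neighborSet v).ncard) (hvx : G.Adj v x) :
    G.neighborSet x \ {v} = G.neighborSet v \ {x} := by
  obtain ⟨w, hxw, hwv, -⟩ := hG.exists_adj_ne_ne hvx.symm v v
  obtain ⟨hcard, -, hvw⟩ := hG.adj_of_four_le_ncard_neighborSet hv hxw hvx.ne hwv.symm
  have hcardx := hG.ncard_neighborSet_diff_pair hvw hxw hvx.ne' hxw.ne
  refine Set.eq_of_subset_of_ncard_le (fun u ⟨hxu, huv⟩ => ?_) ?_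
  · exact ⟨(hG.adj_of_four_le_ncard_neighborSet hv hxu hvx.ne (Ne.symm huv)).2.2, hxu.ne'⟩
  have hw : w ∈ G.neighborSet x \ {v} := ⟨hxw, hwv⟩
  have hsucc := Set.ncard_sdiff_singleton_add_one hw
  rw [Set.sdiff_sdiff, Set.singleton_union, hcardx] at hsucc
  have := Set.ncard_sdiff_singleton_add_one (show x ∈ G.neighborSet v from hvx)
  omega

theorem ncard_neighborSet_le_three (hG : IsMinimalCounterexample G) (v : V) :
    (G.neighborSet v).ncard ≤ 3 := by
  classical
  by_contra! hv
  have hadj {r s : V} (hr : G.Adj v r) (hs : G.Adj v s) (hrs : r ≠ s) : G.Adj r s :=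
    ((hG.neighborSet_diff_singleton_eq hv hr).ge ⟨hs, hrs.symm⟩).1
  obtain ⟨w, hvw⟩ : (G.neighborSet v).Nonempty := Set.nonempty_of_ncard_ne_zero (by omega)
  obtain ⟨u, hwu, huv, -⟩ := hG.exists_adj_ne_ne hvw.symm v v
  obtain ⟨hcard, -⟩ := hG.adj_of_four_le_ncard_neighborSet hv hwu hvw.ne huv.symm
  refine (cliqueFree_iff_top_free (β := Fin 5)).2 hG.planar.free_completeGraph_five
    (insert v (G.neighborSet v).toFinset) ⟨?_, ?_⟩
  · rw [Finset.coe_insert, Set.coe_toFinset]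
    exact SimpleGraph.IsClique.insert (fun r hr s hs => hadj hr hs) fun r hr _ => hr
  · rw [Finset.card_insert_of_notMem (by simp), ← Set.ncard_eq_toFinset_card', hcard,
      Fintype.card_fin]

theorem ncard_neighborSet_inter_pair (hG : IsMinimalCounterexample G) (hxy : G.Adj x y)
    (hvw : G.Adj v w) (hvx : v ≠ x) (hvy : v ≠ y) : (G.neighborSet v ∩ {x, y}).ncard = 1 := by
  have hadd := Set.ncard_inter_add_ncard_sdiff_eq_ncard (G.neighborSet v) {x, y}
  have hle := hG.ncard_neighborSet_le_three v
  have hge := hG.three_le_ncard_neighborSet hvw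
  have hdiff := hG.ncard_neighborSet_diff_pair hxy hvw hvx hvy
  omega

theorem not_adj_of_adj_of_adj (hG : IsMinimalCounterexample G) (hxy : G.Adj x y)
    (hvx : G.Adj v x) : ¬ G.Adj v y := by
  intro hvy
  have hsub : {x, y} ⊆ G.neighborSet v := Set.pair_subset hvx hvy
  have hcard := hG.ncard_neighborSet_inter_pair hxy hvx hvx.ne hvy.ne
  rw [Set.inter_eq_right.2 hsub, Set.ncard_pair hxy.ne] at hcard
  omega

theorem adj_or_adj (hG : IsMinimalCounterexample G) (hxy : G.Adj x y) (hvw : G.Adj v w)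
    (hvx : v ≠ x) (hvy : v ≠ y) : G.Adj v x ∨ G.Adj v y := by
  obtain ⟨u, huv, rfl | rfl⟩ := Set.nonempty_of_ncard_ne_zero
    (hG.ncard_neighborSet_inter_pair hxy hvw hvx hvy ▸ one_ne_zero)
  exacts [.inl huv, .inr huv]

theorem adj_of_adj_of_adj (hG : IsMinimalCounterexample G) (hxy : G.Adj x y) (hxv : G.Adj x v)
    (hyw : G.Adj y w) : G.Adj v w := by
  by_cases hvy : v = y
  · exact hvy ▸ hyw
  have hvw : v ≠ w := fun h => hG.not_adj_of_adj_of_adj hxy hxv.symm (h ▸ hyw.symm)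
  exact (hG.adj_or_adj hyw hxv.symm hvy hvw).resolve_left
    (hG.not_adj_of_adj_of_adj hxy hxv.symm)

theorem false (hG : IsMinimalCounterexample G) : False := by
  classical
  obtain ⟨x, y, hxy⟩ : ∃ x y, G.Adj x y := by
    by_contra! hE
    exact hG.not_isMacLane (isMacLane_of_forall_not_adj hE)
  have hcard {v w : V} (h : G.Adj v w) : (G.neighborSet v).toFinset.card = 3 := by
    rw [← Set.ncard_eq_toFinset_card']
    exact (hG.ncard_neighborSet_le_three v).antisymm (hG.three_le_ncard_neighborSet h)
  refine hG.planar.free_completeBipartiteGraph_three_three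
    (completeBipartiteGraph_isContained_iff.2 ?_)
  refine ⟨(G.neighborSet x).toFinset, (G.neighborSet y).toFinset, ?_, ?_, ?_⟩
  · rw [hcard hxy, Fintype.card_fin]
  · rw [hcard hxy.symm, Fintype.card_fin]
  · intro v hv w hw
    exact hG.adj_of_adj_of_adj hxy (by simpa using hv) (by simpa using hw)

end IsMinimalCounterexample

theorem isMacLane_of_isPlanar (hp : IsPlanar G) : IsMacLane G := by
  induction hn : G.edgeSet.ncard using Nat.strong_induction_on generalizing G with | _ n ih
  by_contra hG
  exact IsMinimalCounterexample.false ⟨hp, hG, fun G' hp' hlt => ih _ (hn ▸ hlt) hp' rfl⟩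

end Theta6

/-! ### Euler's inequality for a face family -/

namespace Theta6

variable {V : Type*}

theorem ncard_edgeSet_le_finrank_chains [Finite V] (G : SimpleGraph V) :
    G.edgeSet.ncard ≤ Module.finrank (ZMod 2) (chains G) := by
  classical
  have := Fintype.ofFinite V
  let single (e : G.edgeSet) : chains G :=
    ⟨Pi.single e.1 1, fun _ he => Pi.single_eq_of_ne (ne_of_mem_of_not_mem e.2 he).symm 1⟩
  have indep : LinearIndependent (ZMod 2) single := .of_comp (chains G).subtype <|
    (Pi.linearIndependent_single_one (Sym2 V) (ZMod 2)).comp _ Subtype.val_injective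
  rw [Set.ncard_eq_toFinset_card', Set.toFinset_card]
  exact indep.fintype_card_le_finrank

variable [Fintype V] {G : SimpleGraph V}

theorem finrank_chains (G : SimpleGraph V) :
    Module.finrank (ZMod 2) (chains G) = Module.finrank (ZMod 2) (cycleSpace G) +
      Module.finrank (ZMod 2) ((chains G).map boundary) := by
  rw [← LinearMap.finrank_range_add_finrank_ker (boundary.domRestrict (chains G)),
    LinearMap.range_domRestrict, LinearMap.ker_domRestrict, add_comm, cycleSpace]
  congr 1
  have h := Submodule.finrank_map_subtype_eq (chains G)
    ((LinearMap.ker (boundary (V := V))).comap (chains G).subtype)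
  rw [Submodule.map_comap_subtype] at h
  exact h.symm

theorem finrank_boundary_lt_card [Nonempty V] (G : SimpleGraph V) :
    Module.finrank (ZMod 2) ((chains G).map boundary) < Fintype.card V := by
  classical
  rw [← Module.finrank_fintype_fun_eq_card (ZMod 2)]
  refine Submodule.finrank_lt fun htop => ?_
  obtain ⟨v⟩ := ‹Nonempty V›
  obtain ⟨S, hS, hSv⟩ : vertexChain v ∈ (chains G).map boundary := htop ▸ Submodule.mem_top
  have h := sum_boundary hS Finset.univ
  simp [hSv, vertexChain, Set.indicator_apply] at h

theorem ncard_edgeSet_lt_finrank_cycleSpace_add_card [Nonempty V] (G : SimpleGraph V) :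
    G.edgeSet.ncard < Module.finrank (ZMod 2) (cycleSpace G) + Fintype.card V := by
  have h₁ := ncard_edgeSet_le_finrank_chains G
  have h₂ := finrank_boundary_lt_card G
  rw [finrank_chains] at h₁
  omega

variable {ι : Type*} [Fintype ι] {F : ι → EdgeChain V}

/-- The edge sets of all faces of a plane drawing of `G`, the outer one included. Of Euler's
formula only the inequality that bounds the number of edges is kept. -/
structure IsFaceFamily (G : SimpleGraph V) (F : ι → EdgeChain V) : Prop
    extends IsSparseGenerating G F where
  sum_eq_zero : ∑ i, F i = 0
  coeff_eq : ∀ c : ι → ZMod 2, ∑ i, c i • F i = 0 → ∀ i j, c i = c j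
  euler : G.edgeSet.ncard + 2 ≤ Fintype.card ι + Fintype.card V

theorem IsMacLane.exists_linearIndependent (hG : IsMacLane G) :
    ∃ (ι : Type) (_ : Fintype ι) (F : ι → EdgeChain V), IsSparseGenerating G F ∧
      LinearIndependent (ZMod 2) F := by
  obtain ⟨ι, _, F, hF⟩ := hG
  obtain ⟨κ, a, ha, hspan, hli⟩ := exists_linearIndependent' (ZMod 2) F
  refine ⟨κ, Fintype.ofInjective a ha, F ∘ a, ⟨fun k => hF.mem (a k), hspan ▸ hF.le_span, ?_⟩, hli⟩
  intro e i j k hi hj hk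
  simpa only [ha.eq_iff] using hF.sparse e (a i) (a j) (a k) hi hj hk

theorem IsSparseGenerating.card_eq_finrank (hF : IsSparseGenerating G F)
    (hli : LinearIndependent (ZMod 2) F) :
    Fintype.card ι = Module.finrank (ZMod 2) (cycleSpace G) := by
  rw [← finrank_span_eq_card hli, le_antisymm hF.le_span
    (Submodule.span_le.2 (Set.range_subset_iff.2 hF.mem))]

/-- The sum of a sparse basis is the outer face. -/
theorem IsSparseGenerating.isFaceFamily_option [Nonempty V] (hF : IsSparseGenerating G F)
    (hli : LinearIndependent (ZMod 2) F) :
    IsFaceFamily G fun o : Option ι => o.elim (∑ i, F i) F where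
  toIsSparseGenerating := hF.optionElim_sum
  sum_eq_zero := sum_optionElim_sum F
  coeff_eq := by
    intro c hc
    rw [Fintype.sum_option] at hc
    have h : ∑ i, (c none + c (some i)) • F i = 0 := by
      simpa only [Option.elim, add_smul, Finset.sum_add_distrib, ← Finset.smul_sum] using hc
    have hnone : ∀ i, c none = c (some i) := fun i =>
      eq_of_add_eq_zero (Fintype.linearIndependent_iff.1 hli _ h i)
    rintro (_ | i) (_ | j) <;> simp [← hnone]
  euler := by
    have := ncard_edgeSet_lt_finrank_cycleSpace_add_card G
    rw [Fintype.card_option, hF.card_eq_finrank hli]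
    omega

theorem IsMacLane.exists_isFaceFamily [Nonempty V] (hG : IsMacLane G) :
    ∃ (ι : Type) (_ : Fintype ι) (F : ι → EdgeChain V), IsFaceFamily G F := by
  obtain ⟨ι, _, F, hF, hli⟩ := hG.exists_linearIndependent
  exact ⟨Option ι, inferInstance, _, hF.isFaceFamily_option hli⟩

end Theta6

/-! ### Short cycles -/

namespace Theta6

variable {V : Type*} {G : SimpleGraph V} {S T : EdgeChain V} {a b c d : V}

/-- The number of edges of an edge chain. -/
noncomputable def size (S : EdgeChain V) : ℕ := (Function.support S).ncard

/-- `IsPolygon S f` says that `S` is the edge set of the cycle `f 0, f 1, …, f (n - 1)`, where the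
indices are added modulo `n`. Concrete cycles are written `![a, b, c]`. -/
structure IsPolygon {n : ℕ} [NeZero n] (S : EdgeChain V) (f : Fin n → V) : Prop where
  three_le : 3 ≤ n
  injective : Function.Injective f
  eq : S = ∑ i, edgeChain (f i) (f (i + 1))

namespace IsPolygon

variable {n : ℕ} [NeZero n] {f : Fin n → V}

theorem edge_injective (h : IsPolygon S f) : Function.Injective fun i => s(f i, f (i + 1)) := by
  intro i j hij
  rcases Sym2.eq_iff.1 hij with ⟨hi, -⟩ | ⟨hi, hj⟩
  · exact h.injective hi
  · have htwo : (1 : Fin n) + 1 = 0 := by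
      rw [← add_eq_left (a := j), ← add_assoc, ← h.injective hi, h.injective hj]
    have := congrArg Fin.val htwo
    have := h.three_le
    rw [Fin.val_add, Fin.val_one', Nat.mod_eq_of_lt (by lia : 1 < n), Fin.val_zero,
      Nat.mod_eq_of_lt (by lia)] at *
    lia

theorem ne_zero (h : IsPolygon S f) (i : Fin n) : S s(f i, f (i + 1)) ≠ 0 := by
  rw [h.eq, Finset.sum_apply, Finset.sum_eq_single i
    (fun j _ hj => edgeChain_eq_zero fun heq => hj (h.edge_injective heq.symm)) (by simp)]
  simp

theorem ne_zero_iff (h : IsPolygon S f) {e : Sym2 V} :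
    S e ≠ 0 ↔ ∃ i, e = s(f i, f (i + 1)) := by
  refine ⟨fun he => ?_, by rintro ⟨i, rfl⟩; exact h.ne_zero i⟩
  rw [h.eq, Finset.sum_apply] at he
  exact (Finset.exists_ne_zero_of_sum_ne_zero he).imp fun i hi => edgeChain_ne_zero_iff.1 hi.2

theorem size_eq (h : IsPolygon S f) : size S = n := by
  have : Function.support S = Set.range fun i => s(f i, f (i + 1)) := by
    ext e
    simp [h.ne_zero_iff, eq_comm]
  rw [size, this, Set.ncard_range_of_injective h.edge_injective, Nat.card_eq_fintype_card,
    Fintype.card_fin]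

theorem nodup (h : IsPolygon S f) : (List.ofFn f).Nodup :=
  List.nodup_ofFn.2 h.injective

theorem eq_zero (h : IsPolygon S f) {x : V} (hx : x ∉ List.ofFn f) (y : V) : S s(x, y) = 0 := by
  by_contra hxy
  obtain ⟨i, hi⟩ := h.ne_zero_iff.1 hxy
  rcases Sym2.eq_iff.1 hi with ⟨rfl, -⟩ | ⟨rfl, -⟩ <;> exact hx (by simp)

theorem congr (h : IsPolygon S f) (h' : IsPolygon T f) : S = T :=
  h.eq.trans h'.eq.symm

theorem of_eq (h : IsPolygon S f) {g : Fin n → V} (hg : ∀ i, g i = f i) : IsPolygon S g :=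
  funext hg ▸ h

theorem rotate (h : IsPolygon S f) : IsPolygon S fun i => f (i + 1) where
  three_le := h.three_le
  injective := h.injective.comp (add_left_injective 1)
  eq := h.eq.trans (Fintype.sum_equiv (Equiv.addRight 1) _ _ fun _ => rfl).symm

theorem reverse (h : IsPolygon S f) : IsPolygon S fun i => f (-i) where
  three_le := h.three_le
  injective := h.injective.comp neg_injective
  eq := h.eq.trans <| Fintype.sum_equiv ((Equiv.addRight 1).trans (Equiv.neg _)) _ _ fun i => by
    simp [edgeChain_comm]

end IsPolygon

theorem sum_edgeChain_mem_cycleSpace [Fintype V] {n : ℕ} [NeZero n] {f : Fin n → V}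
    (h : ∀ i, G.Adj (f i) (f (i + 1))) : ∑ i, edgeChain (f i) (f (i + 1)) ∈ cycleSpace G := by
  refine mem_cycleSpace.2 ⟨sum_mem fun i _ => edgeChain_mem_chains (h i), ?_⟩
  rw [map_sum, Finset.sum_congr rfl fun i _ => boundary_edgeChain (h i).ne,
    Finset.sum_add_distrib, Fintype.sum_equiv (Equiv.addRight 1) (fun i => vertexChain (f (i + 1)))
      (fun i => vertexChain (f i)) fun _ => rfl, ZModModule.add_self]

theorem reachable_of_ne_zero [Fintype V] (hS : S ∈ cycleSpace G) (hab : S s(a, b) ≠ 0) :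
    (fromEdgeSet (Function.support S \ {s(a, b)})).Reachable b a := by
  classical
  set H := fromEdgeSet (Function.support S \ {s(a, b)}) with hH
  by_contra hba
  have hcross : ∀ v u, H.Reachable b v → ¬ H.Reachable b u → S s(v, u) ≠ 0 → v = b ∧ u = a := by
    intro v u hv hu hvu
    by_contra hne
    refine hu (hv.trans (Adj.reachable ((fromEdgeSet_adj _).2 ⟨⟨hvu, ?_⟩, ?_⟩)))
    · rintro heq
      rcases Sym2.eq_iff.1 heq with ⟨rfl, rfl⟩ | h
      exacts [hba hv, hne h]
    · exact (adj_of_ne_zero (mem_chains_of_mem_cycleSpace hS) hvu).ne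
  have hcut := sum_boundary (mem_chains_of_mem_cycleSpace hS) {v | H.Reachable b v}
  simp only [boundary_eq_zero hS, Pi.zero_apply, Finset.sum_const_zero] at hcut
  rw [Finset.sum_eq_single b, Finset.sum_eq_single a] at hcut
  · exact hab (by rw [Sym2.eq_swap, ← hcut])
  · exact fun u hu hua => by_contra fun h => hua (hcross b u .rfl (by simpa using hu) h).2
  · simp [hba]
  · exact fun v hv hvb => Finset.sum_eq_zero fun u hu =>
      by_contra fun h => hvb (hcross v u (by simpa using hv) (by simpa using hu) h).1
  · simp

theorem exists_cycle_of_ne_zero [Fintype V] (hS : S ∈ cycleSpace G) (hab : S s(a, b) ≠ 0) :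
    ∃ (n : ℕ) (f : Fin (n + 3) → V), Function.Injective f ∧ f 0 = a ∧ f 1 = b ∧
      ∀ i, S s(f i, f (i + 1)) ≠ 0 := by
  obtain ⟨w, hw⟩ := (reachable_of_ne_zero hS hab).exists_isPath
  have hle : fromEdgeSet (Function.support S \ {s(a, b)}) ≤ fromEdgeSet (Function.support S) :=
    fromEdgeSet_mono Set.sdiff_subset
  have hadj : (fromEdgeSet (Function.support S)).Adj a b :=
    (fromEdgeSet_adj _).2 ⟨hab, (adj_of_ne_zero (mem_chains_of_mem_cycleSpace hS) hab).ne⟩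
  set c := Walk.cons hadj (w.mapLe hle) with hc
  have hcycle : c.IsCycle := by
    refine Walk.cons_isCycle_iff _ _ |>.2 ⟨hw.mapLe hle, fun hmem => ?_⟩
    rw [Walk.edges_mapLe_eq_edges] at hmem
    simpa [hadj.ne] using w.edges_subset_edgeSet hmem
  obtain ⟨n, hn⟩ := Nat.exists_eq_add_of_le' hcycle.three_le_length
  refine ⟨n, fun i => c.getVert i, fun i j hij => ?_, ?_, ?_, fun i => ?_⟩
  · exact Fin.ext (hcycle.getVert_injOn' (by simp; lia) (by simp; lia) hij)
  · simp
  · simp [hc]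
  · have h := c.adj_getVert_succ (i := i) (by lia)
    have hi : c.getVert ↑(i + 1) = c.getVert (i + 1) := by
      rw [Fin.val_add_one]
      split_ifs with hlast
      · rw [hlast, Walk.getVert_zero, Fin.val_last, ← hn, Walk.getVert_length]
      · rfl
    rw [← hi] at h
    exact ((fromEdgeSet_adj _).1 h).1

theorem size_mono [Finite V] (h : Function.support S ⊆ Function.support T) : size S ≤ size T :=
  Set.ncard_le_ncard h

theorem size_add_size_add [Finite V] (h : Function.support S ⊆ Function.support T) :
    size S + size (T + S) = size T := by
  have hdiff : Function.support (T + S) = Function.support T \ Function.support S := by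
    ext e
    have := @h e
    by_cases hS : S e = 0
    · simp [hS]
    · simp [eq_one_of_ne_zero hS, eq_one_of_ne_zero (this hS), CharTwo.add_self_eq_zero]
  rw [size, size, size, hdiff, add_comm, Set.ncard_sdiff_add_ncard_of_subset h]

theorem IsPolygon.support_subset {n : ℕ} [NeZero n] {f : Fin n → V} (hS : IsPolygon S f)
    (hT : ∀ i, T s(f i, f (i + 1)) ≠ 0) : Function.support S ⊆ Function.support T := by
  intro e he
  obtain ⟨i, rfl⟩ := hS.ne_zero_iff.1 he
  exact hT i

theorem three_le_size [Fintype V] (hS : S ∈ cycleSpace G) (h : S ≠ 0) : 3 ≤ size S := by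
  obtain ⟨e, he⟩ := Function.ne_iff.1 h
  induction e with | _ a b
  obtain ⟨n, f, hf, -, -, hfS⟩ := exists_cycle_of_ne_zero hS he
  have hpoly : IsPolygon (∑ i, edgeChain (f i) (f (i + 1))) f := ⟨by lia, hf, rfl⟩
  calc 3 ≤ n + 3 := by lia
    _ = size (∑ i, edgeChain (f i) (f (i + 1))) := hpoly.size_eq.symm
    _ ≤ size S := size_mono (hpoly.support_subset hfS)

theorem eq_of_support_subset [Fintype V] (hS : S ∈ cycleSpace G) (hT : T ∈ cycleSpace G)
    (h0 : S ≠ 0) (h : Function.support S ⊆ Function.support T) (hsize : size T ≤ 5) : T = S := by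
  by_contra hne
  have := three_le_size (add_mem hT hS) (mt eq_of_add_eq_zero hne)
  have := three_le_size hS h0
  have := size_add_size_add h
  lia

theorem isPolygon_of_forall_ne_zero [Fintype V] (hT : T ∈ cycleSpace G) (hsize : size T ≤ 5)
    {n : ℕ} {f : Fin (n + 3) → V} (hf : Function.Injective f)
    (h : ∀ i, T s(f i, f (i + 1)) ≠ 0) : IsPolygon T f := by
  have hpoly : IsPolygon (∑ i, edgeChain (f i) (f (i + 1))) f := ⟨by lia, hf, rfl⟩
  have hadj i := adj_of_ne_zero (mem_chains_of_mem_cycleSpace hT) (h i)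
  rwa [eq_of_support_subset (sum_edgeChain_mem_cycleSpace hadj) hT
    (fun h0 => hpoly.ne_zero 0 (congrFun h0 _)) (hpoly.support_subset h) hsize]

theorem exists_isPolygon [Fintype V] (hT : T ∈ cycleSpace G) (hab : T s(a, b) ≠ 0) :
    (∃ c, IsPolygon T ![a, b, c]) ∨ (∃ c d, IsPolygon T ![a, b, c, d]) ∨
      (∃ c d e, IsPolygon T ![a, b, c, d, e]) ∨ 6 ≤ size T := by
  by_cases hsize : 6 ≤ size T
  · exact .inr (.inr (.inr hsize))
  obtain ⟨n, f, hf, rfl, rfl, hfT⟩ := exists_cycle_of_ne_zero hT hab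
  have h := isPolygon_of_forall_ne_zero hT (by lia) hf hfT
  have hn : n + 3 < 6 := by rw [← h.size_eq]; lia
  obtain rfl | rfl | rfl : n = 0 ∨ n = 1 ∨ n = 2 := by lia
  · refine .inl ⟨f 2, h.of_eq fun i => by fin_cases i <;> rfl⟩
  · refine .inr (.inl ⟨f 2, f 3, h.of_eq fun i => by fin_cases i <;> rfl⟩)
  · refine .inr (.inr (.inl ⟨f 2, f 3, f 4, h.of_eq fun i => by fin_cases i <;> rfl⟩))

namespace IsPolygon

theorem rotate₃ (h : IsPolygon S ![a, b, c]) : IsPolygon S ![b, c, a] :=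
  h.rotate.of_eq fun i => by fin_cases i <;> rfl

theorem reverse₃ (h : IsPolygon S ![a, b, c]) : IsPolygon S ![a, c, b] :=
  h.reverse.of_eq fun i => by fin_cases i <;> rfl

theorem rotate₄ (h : IsPolygon S ![a, b, c, d]) : IsPolygon S ![b, c, d, a] :=
  h.rotate.of_eq fun i => by fin_cases i <;> rfl

theorem reverse₄ (h : IsPolygon S ![a, b, c, d]) : IsPolygon S ![a, d, c, b] :=
  h.reverse.of_eq fun i => by fin_cases i <;> rfl

end IsPolygon

end Theta6

/-! ### Discharging: systems of faces -/

namespace Theta6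

variable {V : Type*} {G : SimpleGraph V}

theorem hasTheta6_of_nodup {a b c d e f : V} (hn : [a, b, c, d, e, f].Nodup) (hab : G.Adj a b)
    (hbc : G.Adj b c) (hcd : G.Adj c d) (hde : G.Adj d e) (hef : G.Adj e f) (hfa : G.Adj f a)
    (h : G.Adj a c ∨ G.Adj a d) : HasTheta6 G := by
  refine ⟨![a, b, c, d, e, f], ?_, fun i => ?_, ?_⟩
  · exact List.nodup_ofFn.1 hn
  · fin_cases i <;> assumption
  · rcases h with h | h
    · exact ⟨0, 2, by decide, by decide, by decide, h⟩
    · exact ⟨0, 3, by decide, by decide, by decide, h⟩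

variable {𝓕 : Finset (EdgeChain V)} {S T U P Q R : EdgeChain V} {a b c : V}

namespace IsPolygon

variable {d e : V}

theorem nodup₃ (h : IsPolygon S ![a, b, c]) : [a, b, c].Nodup := h.nodup

theorem nodup₄ (h : IsPolygon S ![a, b, c, d]) : [a, b, c, d].Nodup := h.nodup

theorem nodup₅ (h : IsPolygon S ![a, b, c, d, e]) : [a, b, c, d, e].Nodup := h.nodup

theorem eq₃ (h : IsPolygon S ![a, b, c]) :
    S = edgeChain a b + edgeChain b c + edgeChain c a := by
  rw [h.eq, Fin.sum_univ_three]
  rfl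

theorem eq₄ (h : IsPolygon S ![a, b, c, d]) :
    S = edgeChain a b + edgeChain b c + edgeChain c d + edgeChain d a := by
  rw [h.eq, Fin.sum_univ_four]
  rfl

theorem star_ne_zero_iff {n : ℕ} [NeZero n] {f : Fin n → V} (h : IsPolygon S f) (i : Fin n)
    {u : V} : S s(f i, u) ≠ 0 ↔ u = f (i + 1) ∨ u = f (i - 1) := by
  refine ⟨fun hu => ?_, ?_⟩
  · obtain ⟨j, hj⟩ := h.ne_zero_iff.1 hu
    rcases Sym2.eq_iff.1 hj with ⟨hij, rfl⟩ | ⟨hij, rfl⟩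
    · exact .inl (by rw [h.injective hij])
    · exact .inr (by rw [h.injective hij, add_sub_cancel_right])
  · rintro (rfl | rfl)
    · exact h.ne_zero i
    · simpa [Sym2.eq_swap] using h.ne_zero (i - 1)

end IsPolygon

/-- The charge that a face sends across each of its edges. -/
noncomputable def charge (S : EdgeChain V) : ℕ :=
  match size S with
  | 3 => 0
  | 4 => 2
  | 5 => 3
  | _ => 5

theorem two_le_charge (h : size S ≠ 3) : 2 ≤ charge S := by
  unfold charge
  split <;> lia

theorem charge_eq_five (h : 6 ≤ size S) : charge S = 5 := by
  unfold charge
  split <;> lia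

theorem IsPolygon.charge₅ {d e : V} (h : IsPolygon S ![a, b, c, d, e]) : charge S = 3 := by
  simp only [charge, h.size_eq]

/-- The face `T` lies on the other side of the edge `ab` of the face `S`. -/
structure IsAcross (𝓕 : Finset (EdgeChain V)) (S : EdgeChain V) (a b : V) (T : EdgeChain V) :
    Prop where
  left_mem : S ∈ 𝓕
  right_mem : T ∈ 𝓕
  ne : S ≠ T
  left_ne_zero : S s(a, b) ≠ 0
  right_ne_zero : T s(a, b) ≠ 0

namespace IsAcross

theorem symm (h : IsAcross 𝓕 S a b T) : IsAcross 𝓕 T a b S :=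
  ⟨h.right_mem, h.left_mem, h.ne.symm, h.right_ne_zero, h.left_ne_zero⟩

theorem swap (h : IsAcross 𝓕 S a b T) : IsAcross 𝓕 S b a T :=
  ⟨h.left_mem, h.right_mem, h.ne, Sym2.eq_swap ▸ h.left_ne_zero, Sym2.eq_swap ▸ h.right_ne_zero⟩

end IsAcross

/-- `S` is a triangular face `abc` with the faces `P`, `Q` and `R` across `ab`, `bc` and `ca`. -/
structure TriangleFace (𝓕 : Finset (EdgeChain V)) (S : EdgeChain V) (a b c : V)
    (P Q R : EdgeChain V) : Prop where
  isPolygon : IsPolygon S ![a, b, c]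
  across₁ : IsAcross 𝓕 S a b P
  across₂ : IsAcross 𝓕 S b c Q
  across₃ : IsAcross 𝓕 S c a R

namespace TriangleFace

theorem mem (h : TriangleFace 𝓕 S a b c P Q R) : S ∈ 𝓕 := h.across₁.left_mem

theorem size_eq (h : TriangleFace 𝓕 S a b c P Q R) : size S = 3 := h.isPolygon.size_eq

theorem rotate (h : TriangleFace 𝓕 S a b c P Q R) : TriangleFace 𝓕 S b c a Q R P :=
  ⟨h.isPolygon.rotate₃, h.across₂, h.across₃, h.across₁⟩

theorem reverse (h : TriangleFace 𝓕 S a b c P Q R) : TriangleFace 𝓕 S a c b R Q P :=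
  ⟨h.isPolygon.reverse₃, h.across₃.swap, h.across₂.swap, h.across₁.swap⟩

end TriangleFace

/-- `S` is a triangular face, and `K` contains every triangular face sharing an edge with `S`. -/
def IsClosedAt (𝓕 : Finset (EdgeChain V)) (K : Set (EdgeChain V)) (S : EdgeChain V) : Prop :=
  S ∈ 𝓕 ∧ size S = 3 ∧ ∀ e, ∀ T ∈ 𝓕, S e ≠ 0 → T e ≠ 0 → size T = 3 → T ∈ K

/-- `K` is a union of components of the graph whose vertices are the triangular faces, two of them
being adjacent if they share an edge. -/
def IsTriangleClosed (𝓕 : Finset (EdgeChain V)) (K : Set (EdgeChain V)) : Prop :=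
  ∀ S ∈ K, IsClosedAt 𝓕 K S

variable {K : Set (EdgeChain V)}

theorem IsTriangleClosed.mem (hK : IsTriangleClosed 𝓕 K) (hS : S ∈ K) (h : IsAcross 𝓕 S a b T)
    (hT : size T = 3) : T ∈ K :=
  (hK S hS).2.2 _ T h.right_mem h.left_ne_zero h.right_ne_zero hT

variable [Fintype V]

theorem exists_isPolygon_of_size_eq_three (hT : T ∈ cycleSpace G) (hab : T s(a, b) ≠ 0)
    (h : size T = 3) : ∃ c, IsPolygon T ![a, b, c] := by
  rcases exists_isPolygon hT hab with h' | ⟨_, _, h'⟩ | ⟨_, _, _, h'⟩ | h'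
  · exact h'
  · exact absurd (h.symm.trans h'.size_eq) (by decide)
  · exact absurd (h.symm.trans h'.size_eq) (by decide)
  · lia

theorem exists_isPolygon_or_charge_eq_five (hT : T ∈ cycleSpace G) (hab : T s(a, b) ≠ 0)
    (h : size T ≠ 3) : (∃ c d, IsPolygon T ![a, b, c, d]) ∨
      (∃ c d e, IsPolygon T ![a, b, c, d, e]) ∨ charge T = 5 := by
  rcases exists_isPolygon hT hab with ⟨_, h'⟩ | h' | h' | h'
  exacts [absurd h'.size_eq h, .inl h', .inr (.inl h'), .inr (.inr (charge_eq_five h'))]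

/-- The properties of the set `𝓕` of face boundaries of a plane drawing of a `Θ₆`-free graph that
the discharging argument uses. -/
structure FaceSystem (G : SimpleGraph V) (𝓕 : Finset (EdgeChain V)) : Prop where
  isPlanar : IsPlanar G
  not_hasTheta6 : ¬ HasTheta6 G
  mem_cycleSpace : ∀ S ∈ 𝓕, S ∈ cycleSpace G
  exists_ne : ∀ S ∈ 𝓕, ∀ e, S e ≠ 0 → ∃ T ∈ 𝓕, T ≠ S ∧ T e ≠ 0
  sparse : ∀ S ∈ 𝓕, ∀ T ∈ 𝓕, ∀ U ∈ 𝓕, ∀ e, S e ≠ 0 → T e ≠ 0 → U e ≠ 0 → S = T ∨ S = U ∨ T = U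
  eq_of_star : ∀ S ∈ 𝓕, ∀ T ∈ 𝓕, ∀ v a b, (∀ u, S s(v, u) ≠ 0 ↔ u = a ∨ u = b) →
    (∀ u, T s(v, u) ≠ 0 ↔ u = a ∨ u = b) → S = T
  sum_mem : ∀ l : List (EdgeChain V), l.length ≤ 5 → (∀ S ∈ l, S ∈ 𝓕) → l.sum ∈ 𝓕 → l.sum ∈ l

namespace FaceSystem

theorem adj (hF : FaceSystem G 𝓕) (hS : S ∈ 𝓕) (h : S s(a, b) ≠ 0) : G.Adj a b :=
  adj_of_ne_zero (mem_chains_of_mem_cycleSpace (hF.mem_cycleSpace S hS)) h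

theorem ne_zero (hF : FaceSystem G 𝓕) (hS : S ∈ 𝓕) : S ≠ 0 := by
  rintro rfl
  simpa using hF.sum_mem [] (by simp) (by simp) hS

theorem eq_of_isPolygon (hF : FaceSystem G 𝓕) (hS : S ∈ 𝓕) (hT : T ∈ 𝓕) {m n : ℕ} [NeZero m]
    [NeZero n] {f : Fin m → V} {g : Fin n → V} (hf : IsPolygon S f) (hg : IsPolygon T g)
    {i : Fin m} {j : Fin n} (h : f i = g j) (hnext : f (i + 1) = g (j + 1))
    (hprev : f (i - 1) = g (j - 1)) : S = T :=
  hF.eq_of_star S hS T hT (f i) _ _ (fun _ => hf.star_ne_zero_iff i) fun _ => by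
    rw [h, hg.star_ne_zero_iff, hnext, hprev]

theorem eq_of_isAcross (hF : FaceSystem G 𝓕) (h : IsAcross 𝓕 S a b T) (hU : U ∈ 𝓕)
    (hu : U s(a, b) ≠ 0) (hne : U ≠ S) : U = T := by
  have := hF.sparse S h.left_mem T h.right_mem U hU _ h.left_ne_zero h.right_ne_zero hu
  grind [h.ne]

theorem eq_zero_of_isAcross (hF : FaceSystem G 𝓕) (h : IsAcross 𝓕 S a b T) (hU : U ∈ 𝓕)
    (hS : U ≠ S) (hT : U ≠ T) : U s(a, b) = 0 :=
  not_not.1 fun hu => hT (hF.eq_of_isAcross h hU hu hS)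

theorem exists_isAcross (hF : FaceSystem G 𝓕) (hS : S ∈ 𝓕) (h : S s(a, b) ≠ 0) :
    ∃ T, IsAcross 𝓕 S a b T := by
  obtain ⟨T, hT, hne, hTe⟩ := hF.exists_ne S hS _ h
  exact ⟨T, hS, hT, hne.symm, h, hTe⟩

theorem exists_triangleFace (hF : FaceSystem G 𝓕) (hS : S ∈ 𝓕) (h : size S = 3) :
    ∃ a b c P Q R, TriangleFace 𝓕 S a b c P Q R := by
  obtain ⟨e, he⟩ := Function.ne_iff.1 (hF.ne_zero hS)
  induction e with | _ a b
  obtain ⟨c, hc⟩ := exists_isPolygon_of_size_eq_three (hF.mem_cycleSpace S hS) he h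
  obtain ⟨P, hP⟩ := hF.exists_isAcross hS (hc.ne_zero 0)
  obtain ⟨Q, hQ⟩ := hF.exists_isAcross hS (hc.ne_zero 1)
  obtain ⟨R, hR⟩ := hF.exists_isAcross hS (hc.ne_zero 2)
  exact ⟨a, b, c, P, Q, R, hc, hP, hQ, hR⟩

end FaceSystem

open Classical in
/-- The charge that the face `S` gets from the other faces. -/
noncomputable def received (𝓕 : Finset (EdgeChain V)) (S : EdgeChain V) : ℕ :=
  ∑ e with S e ≠ 0, ∑ T ∈ 𝓕 with T ≠ S ∧ T e ≠ 0, charge T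

theorem TriangleFace.charge_add_charge_add_charge_le_received
    (h : TriangleFace 𝓕 S a b c P Q R) : charge P + charge Q + charge R ≤ received 𝓕 S := by
  classical
  have hle {x y T} (hT : IsAcross 𝓕 S x y T) :
      charge T ≤ ∑ T ∈ 𝓕 with T ≠ S ∧ T s(x, y) ≠ 0, charge T :=
    Finset.single_le_sum (f := charge) (fun _ _ => Nat.zero_le _)
      (by simp [hT.right_mem, hT.ne.symm, hT.right_ne_zero])
  have hedges : Finset.univ.filter (fun e => S e ≠ 0) = {s(a, b), s(b, c), s(c, a)} := by
    ext e
    simp only [Finset.mem_filter_univ, h.isPolygon.ne_zero_iff, Fin.exists_fin_succ]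
    simp
  rw [received, hedges, Finset.sum_insert, Finset.sum_pair]
  · have := hle h.across₁
    have := hle h.across₂
    have := hle h.across₃
    lia
  all_goals have := h.isPolygon.nodup₃; grind

/-- `K` contains a nonempty triangle-closed set whose members receive at least charge three on
average. The set is given as a list to make sums over it easy to expand. -/
def HasBalancedBlock (𝓕 : Finset (EdgeChain V)) (K : Set (EdgeChain V)) : Prop :=
  ∃ l : List (EdgeChain V), l ≠ [] ∧ l.Nodup ∧ (∀ S ∈ l, S ∈ K) ∧
    IsTriangleClosed 𝓕 {S | S ∈ l} ∧ 3 * l.length ≤ (l.map (received 𝓕)).sum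

theorem TriangleFace.isClosedAt (hF : FaceSystem G 𝓕) (h : TriangleFace 𝓕 S a b c P Q R)
    (hS : S ∈ K) (hP : size P = 3 → P ∈ K) (hQ : size Q = 3 → Q ∈ K) (hR : size R = 3 → R ∈ K) :
    IsClosedAt 𝓕 K S := by
  refine ⟨h.mem, h.size_eq, fun e T hT he hTe hsize => ?_⟩
  by_cases hTS : T = S
  · rwa [hTS]
  obtain ⟨i, rfl⟩ := h.isPolygon.ne_zero_iff.1 he
  fin_cases i
  · obtain rfl := hF.eq_of_isAcross h.across₁ hT hTe hTS
    exact hP hsize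
  · obtain rfl := hF.eq_of_isAcross h.across₂ hT hTe hTS
    exact hQ hsize
  · obtain rfl := hF.eq_of_isAcross h.across₃ hT hTe hTS
    exact hR hsize

end Theta6

/-! ### Discharging: three triangles around a vertex -/

namespace Theta6

variable {V : Type*} [Fintype V] {G : SimpleGraph V} {𝓕 : Finset (EdgeChain V)}
  {A B C X Y Z P Q S : EdgeChain V} {c u v w s p q r : V}

/-- Three triangular faces `A = cuv`, `B = cvw` and `C = cwu` around the vertex `c`, with the faces
`X`, `Y` and `Z` across the rim edges `uv`, `vw` and `wu`. -/
structure Wheel (G : SimpleGraph V) (𝓕 : Finset (EdgeChain V)) (A B C : EdgeChain V)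
    (c u v w : V) (X Y Z : EdgeChain V) : Prop where
  faceSystem : FaceSystem G 𝓕
  face₁ : TriangleFace 𝓕 A c u v C X B
  face₂ : TriangleFace 𝓕 B c v w A Y C
  face₃ : TriangleFace 𝓕 C c w u B Z A

namespace Wheel

theorem rotate (h : Wheel G 𝓕 A B C c u v w X Y Z) : Wheel G 𝓕 B C A c v w u Y Z X :=
  ⟨h.faceSystem, h.face₂, h.face₃, h.face₁⟩

theorem reverse (h : Wheel G 𝓕 A B C c u v w X Y Z) : Wheel G 𝓕 A C B c v u w X Z Y :=
  ⟨h.faceSystem, h.face₁.reverse, h.face₃.reverse, h.face₂.reverse⟩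

theorem nodup (h : Wheel G 𝓕 A B C c u v w X Y Z) : [c, u, v, w].Nodup := by
  have := h.face₁.isPolygon.nodup₃
  have := h.face₂.isPolygon.nodup₃
  have := h.face₃.isPolygon.nodup₃
  grind

theorem faces_nodup (h : Wheel G 𝓕 A B C c u v w X Y Z) : [A, B, C].Nodup := by
  have := h.face₁.across₃.ne
  have := h.face₂.across₃.ne
  have := h.face₃.across₃.ne
  grind

theorem adj_spoke (h : Wheel G 𝓕 A B C c u v w X Y Z) : G.Adj c u :=
  h.faceSystem.adj h.face₁.mem h.face₁.across₁.left_ne_zero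

theorem adj_rim (h : Wheel G 𝓕 A B C c u v w X Y Z) : G.Adj u v :=
  h.faceSystem.adj h.face₁.mem h.face₁.across₂.left_ne_zero

theorem eq_zero_of_notMem (h : Wheel G 𝓕 A B C c u v w X Y Z) (hS : S ∈ 𝓕) (hn : S ∉ [A, B, C]) :
    S s(c, u) = 0 ∧ S s(c, v) = 0 ∧ S s(c, w) = 0 := by
  simp only [List.mem_cons, List.not_mem_nil, or_false, not_or] at hn
  obtain ⟨hA, hB, hC⟩ := hn
  exact ⟨h.faceSystem.eq_zero_of_isAcross h.face₁.across₁ hS hA hC,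
    h.faceSystem.eq_zero_of_isAcross h.face₂.across₁ hS hB hA,
    h.faceSystem.eq_zero_of_isAcross h.face₃.across₁ hS hC hB⟩

theorem notMem_of_ne_zero (h : Wheel G 𝓕 A B C c u v w X Y Z) (hs : [c, u, v, w, s].Nodup)
    (hS : S s(s, p) ≠ 0) : S ∉ [A, B, C] := by
  have hA := h.face₁.isPolygon.eq_zero (x := s) (by simp; grind) p
  have hB := h.face₂.isPolygon.eq_zero (x := s) (by simp; grind) p
  have hC := h.face₃.isPolygon.eq_zero (x := s) (by simp; grind) p
  grind

theorem notMem_of_size_ne_three (h : Wheel G 𝓕 A B C c u v w X Y Z) (hS : size S ≠ 3) :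
    S ∉ [A, B, C] := by
  have := h.face₁.size_eq
  have := h.face₂.size_eq
  have := h.face₃.size_eq
  grind

theorem mem_of_isPolygon₄ (h : Wheel G 𝓕 A B C c u v w X Y Z) (hX : IsPolygon X ![u, v, p, q]) :
    w ∈ [p, q] := by
  have hXmem := h.face₁.across₂.right_mem
  obtain ⟨hu, hv, -⟩ := h.eq_zero_of_notMem hXmem
    (h.notMem_of_size_ne_three (by rw [hX.size_eq]; decide))
  have hvp : X s(v, p) ≠ 0 := hX.ne_zero 1
  have hpq : X s(p, q) ≠ 0 := hX.ne_zero 2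
  have hqu : X s(q, u) ≠ 0 := hX.ne_zero 3
  by_contra hw
  have := hX.nodup₄
  have := h.nodup
  refine h.faceSystem.not_hasTheta6 (hasTheta6_of_nodup (by grind (splits := 20)) h.adj_spoke.symm
    h.rotate.rotate.adj_spoke h.rotate.adj_rim.symm (h.faceSystem.adj hXmem hvp)
    (h.faceSystem.adj hXmem hpq) (h.faceSystem.adj hXmem hqu) (.inr h.adj_rim))

theorem not_isPolygon₅ (h : Wheel G 𝓕 A B C c u v w X Y Z) (huw : X s(w, u) = 0)
    (hvw : X s(v, w) = 0) : ¬ IsPolygon X ![u, v, p, q, r] := by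
  intro hX
  have hXmem := h.face₁.across₂.right_mem
  obtain ⟨hu, hv, -⟩ := h.eq_zero_of_notMem hXmem
    (h.notMem_of_size_ne_three (by rw [hX.size_eq]; decide))
  have hvp : X s(v, p) ≠ 0 := hX.ne_zero 1
  have hru : X s(r, u) ≠ 0 := hX.ne_zero 4
  have hvp' := h.faceSystem.adj hXmem hvp
  have hpq' : G.Adj p q := h.faceSystem.adj hXmem (hX.ne_zero 2)
  have hqr' : G.Adj q r := h.faceSystem.adj hXmem (hX.ne_zero 3)
  have hru' := h.faceSystem.adj hXmem hru
  have := hX.nodup₅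
  have := h.nodup
  by_cases hq : q = c
  · exact h.faceSystem.not_hasTheta6 (hasTheta6_of_nodup (by grind (splits := 20))
      h.rotate.rotate.adj_rim.symm h.rotate.adj_rim.symm hvp' hpq' hqr' hru' (.inl h.adj_rim))
  · exact h.faceSystem.not_hasTheta6 (hasTheta6_of_nodup (by grind (splits := 20)) h.adj_spoke.symm
      h.rotate.adj_spoke hvp' hpq' hqr' hru' (.inl h.adj_rim))

theorem charge_eq_five (h : Wheel G 𝓕 A B C c u v w X Y Z) (hX : size X ≠ 3) (hY : X ≠ Y)
    (hZ : X ≠ Z) : charge X = 5 := by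
  have hXmem := h.face₁.across₂.right_mem
  have hn := h.notMem_of_size_ne_three hX
  have hvw : X s(v, w) = 0 :=
    h.faceSystem.eq_zero_of_isAcross h.face₂.across₂ hXmem (by grind) hY
  have hwu : X s(w, u) = 0 :=
    h.faceSystem.eq_zero_of_isAcross h.face₃.across₂ hXmem (by grind) hZ
  rcases exists_isPolygon_or_charge_eq_five (h.faceSystem.mem_cycleSpace X hXmem)
    h.face₁.across₂.right_ne_zero hX with ⟨p, q, hpq⟩ | ⟨p, q, r, hpqr⟩ | h5
  · have hvp : X s(v, p) ≠ 0 := hpq.ne_zero 1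
    have hqu : X s(q, u) ≠ 0 := hpq.ne_zero 3
    have := h.mem_of_isPolygon₄ hpq
    grind
  · exact absurd hpqr (h.not_isPolygon₅ hwu hvw)
  · exact h5

theorem charge_eq_five_of_eq (h : Wheel G 𝓕 A B C c u v w X X X) (hX : size X ≠ 3) :
    charge X = 5 := by
  have hXmem := h.faceSystem.mem_cycleSpace X h.face₁.across₂.right_mem
  have huvw (hle : size X ≤ 5) : size X = 3 := by
    refine (isPolygon_of_forall_ne_zero hXmem hle (f := ![u, v, w])
      (List.nodup_ofFn.1 h.nodup.tail) fun i => ?_).size_eq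
    fin_cases i
    exacts [h.face₁.across₂.right_ne_zero, h.face₂.across₂.right_ne_zero,
      h.face₃.across₂.right_ne_zero]
  exact Theta6.charge_eq_five (by by_contra hlt; exact hX (huvw (by lia)))

theorem nine_le_charge_add_charge_add_charge (h : Wheel G 𝓕 A B C c u v w X Y Z) (hX : size X ≠ 3)
    (hY : size Y ≠ 3) (hZ : size Z ≠ 3) : 9 ≤ charge X + charge Y + charge Z := by
  have := two_le_charge hX
  have := two_le_charge hY
  have := two_le_charge hZ
  by_cases hXY : X = Y
  · by_cases hXZ : X = Z
    · subst hXY hXZ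
      have := h.charge_eq_five_of_eq hX
      lia
    · have := h.rotate.rotate.charge_eq_five hZ (by grind) (by grind)
      lia
  · by_cases hXZ : X = Z
    · have := h.rotate.charge_eq_five hY (by grind) (by grind)
      lia
    · have := h.charge_eq_five hX hXY hXZ
      lia

section Attached

variable (h : Wheel G 𝓕 A B C c u v w X Y Z) (hs : IsPolygon Y ![v, w, s])
include h hs

theorem nodup_of_isPolygon : [c, u, v, w, s].Nodup := by
  have hc : s ≠ c := by
    rintro rfl
    exact h.face₂.across₂.ne (h.face₂.isPolygon.congr hs.rotate₃.rotate₃)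
  have hu : s ≠ u := by
    rintro rfl
    have hA : A = [B, C, Y].sum := by
      have htwo : (2 : EdgeChain V) = 0 := by rw [← one_add_one_eq_two, ZModModule.add_self]
      simp only [List.sum_cons, List.sum_nil, add_zero]
      rw [h.face₁.isPolygon.eq₃, h.face₂.isPolygon.eq₃, h.face₃.isPolygon.eq₃, hs.eq₃,
        edgeChain_comm v c, edgeChain_comm w c, edgeChain_comm s c]
      grind
    have hmem := h.faceSystem.sum_mem [B, C, Y] (by simp)
      (by simp [h.face₂.mem, h.face₃.mem, h.face₂.across₂.right_mem]) (hA ▸ h.face₁.mem)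
    rw [← hA] at hmem
    have hAY : A ≠ Y := by
      rintro rfl
      have := h.nodup
      exact h.face₁.across₁.left_ne_zero (hs.eq_zero (by simp; grind) s)
    have := h.faces_nodup
    grind
  have := hs.nodup₃
  have := h.nodup
  grind

theorem adj_of_isPolygon : G.Adj w s ∧ G.Adj s v :=
  have hY := h.face₂.across₂.right_mem
  ⟨h.faceSystem.adj hY (hs.ne_zero 1), h.faceSystem.adj hY (hs.ne_zero 2)⟩

variable (hP : IsAcross 𝓕 Y s v P)
include hP

theorem notMem_of_isAcross : P ∉ [A, B, C] :=
  h.notMem_of_ne_zero (h.nodup_of_isPolygon hs) hP.right_ne_zero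

theorem eq_zero_of_isAcross : P s(v, w) = 0 := by
  have hn := h.notMem_of_isAcross hs hP
  exact h.faceSystem.eq_zero_of_isAcross h.face₂.across₂ hP.right_mem (by grind) hP.ne.symm

theorem eq_of_isPolygon₃ (hr : IsPolygon P ![v, s, r]) : r = u := by
  obtain ⟨-, hcv, -⟩ := h.eq_zero_of_notMem hP.right_mem (h.notMem_of_isAcross hs hP)
  have hvw := h.eq_zero_of_isAcross hs hP
  have hrv : P s(r, v) ≠ 0 := hr.ne_zero 2
  have hrs : P s(s, r) ≠ 0 := hr.ne_zero 1
  by_contra hru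
  have := h.nodup_of_isPolygon hs
  have := hr.nodup₃
  exact h.faceSystem.not_hasTheta6 (hasTheta6_of_nodup (by grind (splits := 20))
    (h.faceSystem.adj hP.right_mem hrv).symm (h.faceSystem.adj hP.right_mem hrs).symm
    (h.adj_of_isPolygon hs).1.symm
    h.rotate.rotate.adj_spoke.symm h.adj_spoke h.adj_rim (.inr h.rotate.adj_rim))

theorem size_ne_three_of_isAcross (hX : size X ≠ 3) : size P ≠ 3 := by
  intro hP3
  obtain ⟨r, hr⟩ := exists_isPolygon_of_size_eq_three
    (h.faceSystem.mem_cycleSpace P hP.right_mem) hP.swap.right_ne_zero hP3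
  obtain rfl := h.eq_of_isPolygon₃ hs hP hr
  have hn := h.notMem_of_isAcross hs hP
  rw [h.faceSystem.eq_of_isAcross h.face₁.across₂ hP.right_mem (hr.ne_zero 2) (by grind)] at hP3
  exact hX hP3

theorem not_isPolygon₄_of_isAcross : ¬ IsPolygon P ![v, s, p, q] := by
  intro hpq
  obtain ⟨hcu, hcv, -⟩ := h.eq_zero_of_notMem hP.right_mem (h.notMem_of_isAcross hs hP)
  have hvw := h.eq_zero_of_isAcross hs hP
  have hpq_ne : P s(p, q) ≠ 0 := hpq.ne_zero 2
  have hqv : P s(q, v) ≠ 0 := hpq.ne_zero 3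
  have hws := (h.adj_of_isPolygon hs).1
  have hvs' : G.Adj v s := h.faceSystem.adj hP.right_mem (hpq.ne_zero 0)
  have hsp' : G.Adj s p := h.faceSystem.adj hP.right_mem (hpq.ne_zero 1)
  have hpq' := h.faceSystem.adj hP.right_mem hpq_ne
  have hqv' := h.faceSystem.adj hP.right_mem hqv
  have hpw : p ≠ w := by
    rintro rfl
    exact hP.ne.symm (h.faceSystem.eq_of_isPolygon hP.right_mem h.face₂.across₂.right_mem hpq
      hs.reverse₃ (i := 1) (j := 1) rfl rfl rfl)
  have := h.nodup_of_isPolygon hs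
  have := hpq.nodup₄
  refine h.faceSystem.not_hasTheta6 ?_
  by_cases hqu : q = u
  · subst hqu
    exact hasTheta6_of_nodup (by grind (splits := 20)) h.adj_spoke.symm
      h.rotate.rotate.adj_spoke h.rotate.adj_rim.symm hvs' hsp' hpq' (.inr h.adj_rim)
  by_cases hpu : p = u
  · subst hpu
    exact hasTheta6_of_nodup (by grind (splits := 20)) h.rotate.rotate.adj_spoke hws hvs'.symm
      hqv'.symm hpq'.symm h.adj_spoke.symm (.inr h.rotate.adj_spoke)
  by_cases hpc : p = c
  · subst hpc
    exact hasTheta6_of_nodup (by grind (splits := 20)) hqv'.symm hpq'.symm h.adj_spoke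
      h.rotate.rotate.adj_rim.symm hws hvs'.symm (.inr h.adj_rim.symm)
  · exact hasTheta6_of_nodup (by grind (splits := 20)) hsp' hpq' hqv' h.rotate.adj_spoke.symm
      h.rotate.rotate.adj_spoke hws (.inr hvs'.symm)

theorem not_isPolygon₅_of_isAcross (hwu : P s(w, u) = 0) : ¬ IsPolygon P ![v, s, p, q, r] := by
  intro hpqr
  obtain ⟨-, hcv, hcw⟩ := h.eq_zero_of_notMem hP.right_mem (h.notMem_of_isAcross hs hP)
  have hvw := h.eq_zero_of_isAcross hs hP
  have hpq : P s(p, q) ≠ 0 := hpqr.ne_zero 2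
  have hrv : P s(r, v) ≠ 0 := hpqr.ne_zero 4
  have hws := (h.adj_of_isPolygon hs).1
  have hvs' : G.Adj v s := h.faceSystem.adj hP.right_mem (hpqr.ne_zero 0)
  have hsp' : G.Adj s p := h.faceSystem.adj hP.right_mem (hpqr.ne_zero 1)
  have hpq' := h.faceSystem.adj hP.right_mem hpq
  have hqr' : G.Adj q r := h.faceSystem.adj hP.right_mem (hpqr.ne_zero 3)
  have hpw : p ≠ w := by
    rintro rfl
    exact hP.ne.symm (h.faceSystem.eq_of_isPolygon hP.right_mem h.face₂.across₂.right_mem hpqr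
      hs.reverse₃ (i := 1) (j := 1) rfl rfl rfl)
  have := h.nodup_of_isPolygon hs
  have := hpqr.nodup₅
  refine h.faceSystem.not_hasTheta6 ?_
  by_cases hqw : q = w
  · subst hqw
    exact hasTheta6_of_nodup (by grind (splits := 20)) hvs' hsp' hpq' h.rotate.rotate.adj_spoke.symm
      h.adj_spoke h.adj_rim (.inr h.rotate.adj_rim)
  · exact hasTheta6_of_nodup (by grind (splits := 20)) h.rotate.adj_rim hws hsp' hpq' hqr'
      (h.faceSystem.adj hP.right_mem hrv) (.inl hvs')

theorem three_le_charge_of_isAcross (hP3 : size P ≠ 3) : 3 ≤ charge P ∧ (P ≠ Z → charge P = 5) := by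
  rcases exists_isPolygon_or_charge_eq_five (h.faceSystem.mem_cycleSpace P hP.right_mem)
    hP.swap.right_ne_zero hP3 with ⟨p, q, hpq⟩ | ⟨p, q, r, hpqr⟩ | h5
  · exact absurd hpq (h.not_isPolygon₄_of_isAcross hs hP)
  · refine ⟨hpqr.charge₅.ge, fun hPZ => absurd hpqr ?_⟩
    have hn := h.notMem_of_isAcross hs hP
    exact h.not_isPolygon₅_of_isAcross hs hP
      (h.faceSystem.eq_zero_of_isAcross h.face₃.across₂ hP.right_mem (by grind) hPZ)
  · exact ⟨by lia, fun _ => h5⟩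

omit hP

theorem apex_eq {t : V} (ht : IsPolygon Z ![w, u, t]) : s = t := by
  by_contra hst
  have := h.nodup_of_isPolygon hs
  have := h.rotate.nodup_of_isPolygon ht
  exact h.faceSystem.not_hasTheta6 (hasTheta6_of_nodup (by grind [List.nodup_cons])
    (h.adj_of_isPolygon hs).1 (h.adj_of_isPolygon hs).2
    h.rotate.adj_spoke.symm h.adj_spoke
    (h.rotate.adj_of_isPolygon ht).1 (h.rotate.adj_of_isPolygon ht).2
    (.inr h.rotate.rotate.adj_spoke.symm))

end Attached

end Wheel

end Theta6

/-! ### Discharging: the blocks of triangles around a vertex -/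

namespace Theta6

namespace Wheel

variable {V : Type*} [Fintype V] {G : SimpleGraph V} {𝓕 : Finset (EdgeChain V)}
  {K : Set (EdgeChain V)} {A B C X Y Z P Q : EdgeChain V} {c u v w s : V}

theorem exists_isPolygon (h : Wheel G 𝓕 A B C c u v w X Y Z) (hY : size Y = 3) :
    ∃ s, IsPolygon Y ![v, w, s] :=
  exists_isPolygon_of_size_eq_three
    (h.faceSystem.mem_cycleSpace Y h.face₂.across₂.right_mem) h.face₂.across₂.right_ne_zero hY

theorem hasBalancedBlock_of_size_ne_three (h : Wheel G 𝓕 A B C c u v w X Y Z)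
    (hK : IsTriangleClosed 𝓕 K) (hA : A ∈ K) (hX : size X ≠ 3) (hY : size Y ≠ 3)
    (hZ : size Z ≠ 3) : HasBalancedBlock 𝓕 K := by
  have hF := h.faceSystem
  have hB := hK.mem hA h.face₁.across₃ h.face₂.size_eq
  have hC := hK.mem hA h.face₁.across₁ h.face₃.size_eq
  refine ⟨[A, B, C], by simp, h.faces_nodup, by simp [hA, hB, hC], ?_, ?_⟩
  · simp only [IsTriangleClosed, Set.mem_ofPred_eq, List.forall_mem_cons]
    exact ⟨h.face₁.isClosedAt hF (by simp) (by simp) (absurd · hX) (by simp),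
      h.face₂.isClosedAt hF (by simp) (by simp) (absurd · hY) (by simp),
      h.face₃.isClosedAt hF (by simp) (by simp) (absurd · hZ) (by simp), by simp⟩
  · have := h.face₁.charge_add_charge_add_charge_le_received
    have := h.face₂.charge_add_charge_add_charge_le_received
    have := h.face₃.charge_add_charge_add_charge_le_received
    have := h.nine_le_charge_add_charge_add_charge hX hY hZ
    simp only [List.length_cons, List.length_nil, List.map_cons, List.map_nil, List.sum_cons,
      List.sum_nil]
    lia

theorem twelve_le_charge_add_charge_add_charge_add_charge (h : Wheel G 𝓕 A B C c u v w X Y Z)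
    (hs : IsPolygon Y ![v, w, s]) (hP : IsAcross 𝓕 Y s v P) (hQ : IsAcross 𝓕 Y w s Q)
    (hX : size X ≠ 3) (hY : size Y = 3) (hZ : size Z ≠ 3) :
    12 ≤ charge X + charge Z + charge P + charge Q := by
  have := two_le_charge hX
  have := two_le_charge hZ
  obtain ⟨hP₁, hP₂⟩ := h.three_le_charge_of_isAcross hs hP (h.size_ne_three_of_isAcross hs hP hX)
  have hmirror := h.rotate.rotate.reverse
  have hs' := hs.rotate₃.reverse₃
  have := hmirror.three_le_charge_of_isAcross hs' hQ.swap
    (hmirror.size_ne_three_of_isAcross hs' hQ.swap hZ)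
  by_cases hXZ : X = Z
  · by_cases hPZ : P = Z
    · subst hXZ hPZ
      lia
    · have := hP₂ hPZ
      lia
  · have := h.charge_eq_five hX (by grind) hXZ
    have := h.rotate.rotate.charge_eq_five hZ (by grind) (by grind)
    lia

theorem hasBalancedBlock_of_size_eq_three (h : Wheel G 𝓕 A B C c u v w X Y Z)
    (hK : IsTriangleClosed 𝓕 K) (hA : A ∈ K) (hX : size X ≠ 3) (hY : size Y = 3)
    (hZ : size Z ≠ 3) : HasBalancedBlock 𝓕 K := by
  have hF := h.faceSystem
  have hB := hK.mem hA h.face₁.across₃ h.face₂.size_eq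
  have hC := hK.mem hA h.face₁.across₁ h.face₃.size_eq
  have hYK := hK.mem hB h.face₂.across₂ hY
  obtain ⟨s, hs⟩ := h.exists_isPolygon hY
  obtain ⟨P, hP⟩ := hF.exists_isAcross h.face₂.across₂.right_mem (hs.ne_zero 2)
  obtain ⟨Q, hQ⟩ := hF.exists_isAcross h.face₂.across₂.right_mem (hs.ne_zero 1)
  have hface : TriangleFace 𝓕 Y v w s B Q P := ⟨hs, h.face₂.across₂.symm, hQ, hP⟩
  have hmirror := h.rotate.rotate.reverse
  have hP3 := h.size_ne_three_of_isAcross hs hP hX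
  have hQ3 := hmirror.size_ne_three_of_isAcross hs.rotate₃.reverse₃ hQ.swap hZ
  have hnodup : [A, B, C, Y].Nodup := by
    have := h.notMem_of_ne_zero (h.nodup_of_isPolygon hs) (hs.ne_zero 2)
    have := h.faces_nodup
    grind
  refine ⟨[A, B, C, Y], by simp, hnodup, by simp [hA, hB, hC, hYK], ?_, ?_⟩
  · simp only [IsTriangleClosed, Set.mem_ofPred_eq, List.forall_mem_cons]
    exact ⟨h.face₁.isClosedAt hF (by simp) (by simp) (absurd · hX) (by simp),
      h.face₂.isClosedAt hF (by simp) (by simp) (by simp) (by simp),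
      h.face₃.isClosedAt hF (by simp) (by simp) (absurd · hZ) (by simp),
      hface.isClosedAt hF (by simp) (by simp) (absurd · hQ3) (absurd · hP3), by simp⟩
  · have := h.face₁.charge_add_charge_add_charge_le_received
    have := h.face₂.charge_add_charge_add_charge_le_received
    have := h.face₃.charge_add_charge_add_charge_le_received
    have := hface.charge_add_charge_add_charge_le_received
    have := h.twelve_le_charge_add_charge_add_charge_add_charge hs hP hQ hX hY hZ
    simp only [List.length_cons, List.length_nil, List.map_cons, List.map_nil, List.sum_cons,
      List.sum_nil]
    lia

theorem exists_triangleFace_triangleFace (h : Wheel G 𝓕 A B C c u v w X Y Z) (hY : size Y = 3)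
    (hZ : size Z = 3) :
    ∃ s P Q, TriangleFace 𝓕 Y v w s B Z P ∧ TriangleFace 𝓕 Z w u s C Q Y := by
  obtain ⟨s, hs⟩ := h.exists_isPolygon hY
  obtain ⟨t, ht⟩ := h.rotate.exists_isPolygon hZ
  obtain rfl := h.apex_eq hs ht
  obtain ⟨P, hP⟩ := h.faceSystem.exists_isAcross h.face₂.across₂.right_mem (hs.ne_zero 2)
  obtain ⟨Q, hQ⟩ := h.faceSystem.exists_isAcross h.face₃.across₂.right_mem (ht.ne_zero 1)
  have hYZ : Y ≠ Z := by
    have := h.nodup_of_isPolygon hs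
    rintro rfl
    exact hs.ne_zero 0 (ht.eq_zero (by simp; grind) w)
  have hYZs : IsAcross 𝓕 Y w s Z :=
    ⟨hP.left_mem, hQ.left_mem, hYZ, hs.ne_zero 1, by simpa [Sym2.eq_swap] using ht.ne_zero 2⟩
  exact ⟨s, P, Q, ⟨hs, h.face₂.across₂.symm, hYZs, hP⟩,
    ⟨ht, h.face₃.across₂.symm, hQ, hYZs.symm.swap⟩⟩

theorem hasBalancedBlock_of_size_eq_three_of_size_eq_three (h : Wheel G 𝓕 A B C c u v w X Y Z)
    (hK : IsTriangleClosed 𝓕 K) (hA : A ∈ K) (hX : size X ≠ 3) (hY : size Y = 3)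
    (hZ : size Z = 3) : HasBalancedBlock 𝓕 K := by
  have hF := h.faceSystem
  have hB := hK.mem hA h.face₁.across₃ h.face₂.size_eq
  have hC := hK.mem hA h.face₁.across₁ h.face₃.size_eq
  have hYK := hK.mem hB h.face₂.across₂ hY
  have hZK := hK.mem hC h.face₃.across₂ hZ
  obtain ⟨s, P, Q, hfaceY, hfaceZ⟩ := h.exists_triangleFace_triangleFace hY hZ
  have hs := hfaceY.isPolygon
  have ht := hfaceZ.isPolygon
  have hP := hfaceY.across₃
  have hQ := hfaceZ.across₂
  have hP3 := h.size_ne_three_of_isAcross hs hP hX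
  have hQ3 := h.reverse.size_ne_three_of_isAcross ht.rotate₃.reverse₃ hQ.swap hX
  have hnodup : [A, B, C, Y, Z].Nodup := by
    have := h.notMem_of_ne_zero (h.nodup_of_isPolygon hs) (hs.ne_zero 2)
    have := h.notMem_of_ne_zero (h.nodup_of_isPolygon hs) (ht.ne_zero 2)
    have := h.faces_nodup
    have := hfaceY.across₂.ne
    grind
  refine ⟨[A, B, C, Y, Z], by simp, hnodup, by simp [hA, hB, hC, hYK, hZK], ?_, ?_⟩
  · simp only [IsTriangleClosed, Set.mem_ofPred_eq, List.forall_mem_cons]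
    exact ⟨h.face₁.isClosedAt hF (by simp) (by simp) (absurd · hX) (by simp),
      h.face₂.isClosedAt hF (by simp) (by simp) (by simp) (by simp),
      h.face₃.isClosedAt hF (by simp) (by simp) (by simp) (by simp),
      hfaceY.isClosedAt hF (by simp) (by simp) (by simp) (absurd · hP3),
      hfaceZ.isClosedAt hF (by simp) (by simp) (absurd · hQ3) (by simp), by simp⟩
  · have := h.face₁.charge_add_charge_add_charge_le_received
    have := hfaceY.charge_add_charge_add_charge_le_received
    have := hfaceZ.charge_add_charge_add_charge_le_received
    have := h.charge_eq_five hX (by grind) (by grind)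
    have := (h.three_le_charge_of_isAcross hs hP hP3).2 (by grind [hfaceZ.size_eq])
    have := (h.reverse.three_le_charge_of_isAcross ht.rotate₃.reverse₃ hQ.swap hQ3).2 (by grind)
    simp only [List.length_cons, List.length_nil, List.map_cons, List.map_nil, List.sum_cons,
      List.sum_nil]
    lia

theorem exists_size_ne_three (h : Wheel G 𝓕 A B C c u v w X Y Z) :
    size X ≠ 3 ∨ size Y ≠ 3 ∨ size Z ≠ 3 := by
  by_contra! hXYZ
  obtain ⟨s, hs⟩ := h.exists_isPolygon hXYZ.2.1
  obtain ⟨t, ht⟩ := h.rotate.exists_isPolygon hXYZ.2.2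
  obtain rfl := h.apex_eq hs ht
  obtain ⟨t, hr⟩ := h.rotate.rotate.exists_isPolygon hXYZ.1
  obtain rfl := h.rotate.apex_eq ht hr
  have hA : A = [B, C, X, Y, Z].sum := by
    have htwo : (2 : EdgeChain V) = 0 := by rw [← one_add_one_eq_two, ZModModule.add_self]
    simp only [List.sum_cons, List.sum_nil, add_zero]
    rw [h.face₁.isPolygon.eq₃, h.face₂.isPolygon.eq₃, h.face₃.isPolygon.eq₃, hs.eq₃, ht.eq₃,
      hr.eq₃, edgeChain_comm v c, edgeChain_comm w c, edgeChain_comm u c, edgeChain_comm s v,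
      edgeChain_comm s w, edgeChain_comm s u]
    grind
  have hmem := h.faceSystem.sum_mem [B, C, X, Y, Z] (by simp)
    (by simp [h.face₂.mem, h.face₃.mem, h.face₁.across₂.right_mem, h.face₂.across₂.right_mem,
      h.face₃.across₂.right_mem]) (hA ▸ h.face₁.mem)
  rw [← hA] at hmem
  have := h.notMem_of_ne_zero (h.nodup_of_isPolygon hs) (hs.ne_zero 2)
  have := h.notMem_of_ne_zero (h.nodup_of_isPolygon hs) (ht.ne_zero 2)
  have := h.face₁.across₂.ne
  have := h.faces_nodup
  grind

theorem hasBalancedBlock (h : Wheel G 𝓕 A B C c u v w X Y Z) (hK : IsTriangleClosed 𝓕 K)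
    (hA : A ∈ K) : HasBalancedBlock 𝓕 K := by
  have hB := hK.mem hA h.face₁.across₃ h.face₂.size_eq
  have hC := hK.mem hA h.face₁.across₁ h.face₃.size_eq
  by_cases hX : size X = 3 <;> by_cases hY : size Y = 3 <;> by_cases hZ : size Z = 3
  · have := h.exists_size_ne_three
    tauto
  · exact h.rotate.rotate.hasBalancedBlock_of_size_eq_three_of_size_eq_three hK hC hZ hX hY
  · exact h.rotate.hasBalancedBlock_of_size_eq_three_of_size_eq_three hK hB hY hZ hX
  · exact h.rotate.rotate.hasBalancedBlock_of_size_eq_three hK hC hZ hX hY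
  · exact h.hasBalancedBlock_of_size_eq_three_of_size_eq_three hK hA hX hY hZ
  · exact h.hasBalancedBlock_of_size_eq_three hK hA hX hY hZ
  · exact h.rotate.hasBalancedBlock_of_size_eq_three hK hB hY hZ hX
  · exact h.hasBalancedBlock_of_size_ne_three hK hA hX hY hZ

end Wheel

end Theta6

/-! ### Discharging: triangles with little charge -/

namespace Theta6

variable {V : Type*} {G : SimpleGraph V} {𝓕 : Finset (EdgeChain V)}
  {K : Set (EdgeChain V)} {I X T R U S : EdgeChain V} {a b p q u v w : V}

namespace TriangleFace

theorem nodup_of_isPolygon (h : TriangleFace 𝓕 I u v w X T R) (ht : IsPolygon T ![v, w, b]) :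
    [u, v, w, b].Nodup := by
  have := h.isPolygon.nodup₃
  have := ht.nodup₃
  have hbu : b ≠ u := by
    rintro rfl
    exact h.across₂.ne (h.isPolygon.congr ht.rotate₃.rotate₃)
  grind

theorem ne_of_isPolygon (h : TriangleFace 𝓕 I u v w X T R) (ht : IsPolygon T ![v, w, b])
    (hr : IsPolygon R ![w, u, a]) : T ≠ R := by
  have := h.rotate.nodup_of_isPolygon hr
  rintro rfl
  exact ht.ne_zero 0 (hr.eq_zero (by simp; grind) w)

variable [Fintype V]

theorem adj (hF : FaceSystem G 𝓕) (h : TriangleFace 𝓕 I u v w X T R) : G.Adj u v :=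
  hF.adj h.mem h.across₁.left_ne_zero

theorem adj_of_isPolygon (hF : FaceSystem G 𝓕) (h : TriangleFace 𝓕 I u v w X T R)
    (ht : IsPolygon T ![v, w, b]) : G.Adj w b ∧ G.Adj b v :=
  ⟨hF.adj h.across₂.right_mem (ht.ne_zero 1), hF.adj h.across₂.right_mem (ht.ne_zero 2)⟩

section

variable (hF : FaceSystem G 𝓕) (h : TriangleFace 𝓕 I u v w X T R)
  (ht : IsPolygon T ![v, w, b]) (hr : IsPolygon R ![w, u, a])

include hF h ht hr

theorem hasBalancedBlock_of_apex_eq (hab : a = b) (hK : IsTriangleClosed 𝓕 K) (hI : I ∈ K) :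
    HasBalancedBlock 𝓕 K := by
  subst hab
  obtain ⟨Y, hY⟩ := hF.exists_isAcross h.across₂.right_mem (ht.ne_zero 2)
  obtain ⟨Z, hZ⟩ := hF.exists_isAcross h.across₃.right_mem (hr.ne_zero 1)
  have hTR : IsAcross 𝓕 T w a R := ⟨h.across₂.right_mem, h.across₃.right_mem,
    h.ne_of_isPolygon ht hr, ht.ne_zero 1, Sym2.eq_swap ▸ hr.ne_zero 2⟩
  have hwheel : Wheel G 𝓕 I T R w u v a X Y Z := ⟨hF, h.rotate.rotate,
    ⟨ht.reverse₃.rotate₃.rotate₃, h.across₂.symm.swap, hY.swap, hTR.swap⟩,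
    ⟨hr.reverse₃, hTR.symm, hZ.swap, h.across₃.symm.swap⟩⟩
  exact hwheel.hasBalancedBlock hK hI

theorem hasBalancedBlock_of_size_eq_three (hX : size X = 3) (hK : IsTriangleClosed 𝓕 K)
    (hI : I ∈ K) : HasBalancedBlock 𝓕 K := by
  obtain ⟨d, hd⟩ := exists_isPolygon_of_size_eq_three
    (hF.mem_cycleSpace X h.across₁.right_mem) h.across₁.right_ne_zero hX
  by_cases hab : a = b
  · exact h.hasBalancedBlock_of_apex_eq hF ht hr hab hK hI
  by_cases hda : d = a
  · exact h.rotate.hasBalancedBlock_of_apex_eq hF hr hd hda hK hI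
  by_cases hdb : b = d
  · exact h.rotate.rotate.hasBalancedBlock_of_apex_eq hF hd ht hdb hK hI
  have := h.nodup_of_isPolygon ht
  have := h.rotate.nodup_of_isPolygon hr
  have := h.rotate.rotate.nodup_of_isPolygon hd
  have ⟨hwb, hbv⟩ := h.adj_of_isPolygon hF ht
  have ⟨hua, haw⟩ := h.rotate.adj_of_isPolygon hF hr
  have ⟨hvd, hdu⟩ := h.rotate.rotate.adj_of_isPolygon hF hd
  exact absurd (hasTheta6_of_nodup (by grind [List.nodup_cons]) hdu.symm hvd.symm hbv.symm
    hwb.symm haw.symm hua.symm (.inl (h.adj hF))) hF.not_hasTheta6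

theorem eq_or_eq_of_isPolygon₄ (hX : IsPolygon X ![u, v, p, q]) : a = p ∨ a = q := by
  have hwp : p ≠ w := by
    rintro rfl
    exact hX.ne_zero 1 (hF.eq_zero_of_isAcross h.across₂ h.across₁.right_mem h.across₁.ne.symm
      (ne_of_apply_ne size (by rw [hX.size_eq, ht.size_eq]; decide)))
  have hwq : q ≠ w := by
    rintro rfl
    exact hX.ne_zero 3 (hF.eq_zero_of_isAcross h.across₃ h.across₁.right_mem h.across₁.ne.symm
      (ne_of_apply_ne size (by rw [hX.size_eq, hr.size_eq]; decide)))
  have := h.rotate.nodup_of_isPolygon hr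
  have := hX.nodup₄
  have ⟨hua, haw⟩ := h.rotate.adj_of_isPolygon hF hr
  have hvp : G.Adj v p := hF.adj h.across₁.right_mem (hX.ne_zero 1)
  have hpq : G.Adj p q := hF.adj h.across₁.right_mem (hX.ne_zero 2)
  have hqu : G.Adj q u := hF.adj h.across₁.right_mem (hX.ne_zero 3)
  by_contra! hn
  exact hF.not_hasTheta6 (hasTheta6_of_nodup (by grind [List.nodup_cons]) hua haw
    (h.rotate.adj hF).symm hvp hpq hqu (.inr (h.adj hF)))

theorem eq_and_eq_of_isPolygon₄ (hab : a ≠ b) (hX : IsPolygon X ![u, v, p, q]) :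
    p = b ∧ q = a := by
  have ha := h.eq_or_eq_of_isPolygon₄ hF ht hr hX
  have hb := h.rotate.reverse.eq_or_eq_of_isPolygon₄ hF hr.reverse₃.rotate₃.rotate₃
    ht.reverse₃.rotate₃.rotate₃ hX.reverse₄.rotate₄.rotate₄.rotate₄
  suffices ¬ (p = a ∧ q = b) by grind
  rintro ⟨rfl, rfl⟩
  have huv := h.adj hF
  have hvw := h.rotate.adj hF
  have hwu := h.rotate.rotate.adj hF
  have ⟨hwq, hqv⟩ := h.adj_of_isPolygon hF ht
  have ⟨hup, hpw⟩ := h.rotate.adj_of_isPolygon hF hr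
  have hvp : G.Adj v p := hF.adj h.across₁.right_mem (hX.ne_zero 1)
  have hpq : G.Adj p q := hF.adj h.across₁.right_mem (hX.ne_zero 2)
  have hqu : G.Adj q u := hF.adj h.across₁.right_mem (hX.ne_zero 3)
  classical
  have hclique : G.IsNClique 5 ({u, v, w, p, q} : Finset V) :=
    ((is3Clique_triple_iff.2 ⟨hpw.symm, hwq, hpq⟩).insert
      (by simp [hvw, hvp, hqv.symm])).insert (by simp [huv, hwu.symm, hup, hqu.symm])
  exact (cliqueFree_iff_top_free (β := Fin 5)).2 hF.isPlanar.free_completeGraph_five _ hclique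

theorem size_ne_three_of_isPolygon₄ (hX : IsPolygon X ![u, v, b, a]) (hU : IsAcross 𝓕 R a w U) :
    size U ≠ 3 := by
  intro hsize
  obtain ⟨z, hz⟩ := exists_isPolygon_of_size_eq_three (hF.mem_cycleSpace U hU.right_mem)
    hU.swap.right_ne_zero hsize
  have hI := h.nodup_of_isPolygon ht
  have hR := h.rotate.nodup_of_isPolygon hr
  have hXn := hX.nodup₄
  have hzn := hz.nodup₃
  have hUI : U ≠ I := by
    rintro rfl
    exact hU.right_ne_zero (h.isPolygon.eq_zero (by simp; grind) w)
  have hUT : U ≠ T := by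
    rintro rfl
    exact hU.right_ne_zero (ht.eq_zero (by simp; grind) w)
  have hzv : z ≠ v := by
    rintro rfl
    exact hz.ne_zero 2 (hF.eq_zero_of_isAcross h.across₂ hU.right_mem hUI hUT)
  have hzu : z ≠ u := by
    rintro rfl
    exact hU.ne (hr.congr hz.reverse₃)
  have hzb : z ≠ b := by
    rintro rfl
    have hsum : [R, U, T, X].sum = I := by
      have htwo : (2 : EdgeChain V) = 0 := by rw [← one_add_one_eq_two, ZModModule.add_self]
      simp only [List.sum_cons, List.sum_nil, add_zero]
      rw [h.isPolygon.eq₃, ht.eq₃, hr.eq₃, hz.eq₃, hX.eq₄, edgeChain_comm a w, edgeChain_comm z a,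
        edgeChain_comm z w, edgeChain_comm z v, edgeChain_comm a u]
      grind
    have := hF.sum_mem [R, U, T, X] (by simp) (by simp [h.across₁.right_mem, h.across₂.right_mem,
      h.across₃.right_mem, hU.right_mem]) (hsum ▸ h.mem)
    rw [hsum] at this
    simp [h.across₁.ne, h.across₂.ne, h.across₃.ne, hUI.symm] at this
  have ⟨hwb, hbv⟩ := h.adj_of_isPolygon hF ht
  have ⟨hua, _⟩ := h.rotate.adj_of_isPolygon hF hr
  have hwz : G.Adj w z := (hF.adj hU.right_mem (hz.ne_zero 2)).symm
  have hza : G.Adj z a := (hF.adj hU.right_mem (hz.ne_zero 1)).symm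
  exact hF.not_hasTheta6 (hasTheta6_of_nodup (by grind [List.nodup_cons]) hwz hza hua.symm
    (h.adj hF) hbv.symm hwb.symm (.inr (h.rotate.rotate.adj hF)))

theorem hasBalancedBlock_of_isPolygon₄ (hX : IsPolygon X ![u, v, b, a])
    (hK : IsTriangleClosed 𝓕 K) (hI : I ∈ K) : HasBalancedBlock 𝓕 K := by
  obtain ⟨U, hU⟩ := hF.exists_isAcross h.across₃.right_mem (hr.ne_zero 2)
  obtain ⟨W, hW⟩ := hF.exists_isAcross h.across₂.right_mem (ht.ne_zero 1)
  have hXsize : size X ≠ 3 := by rw [hX.size_eq]; decide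
  have hUsize : size U ≠ 3 := h.size_ne_three_of_isPolygon₄ hF ht hr hX hU
  have hWsize : size W ≠ 3 := h.rotate.reverse.size_ne_three_of_isPolygon₄ hF
    hr.reverse₃.rotate₃.rotate₃ ht.reverse₃.rotate₃.rotate₃
    hX.reverse₄.rotate₄.rotate₄.rotate₄ hW.swap
  have hTX : T ≠ X := ne_of_apply_ne size (by rw [hX.size_eq, ht.size_eq]; decide)
  have hRX : R ≠ X := ne_of_apply_ne size (by rw [hX.size_eq, hr.size_eq]; decide)
  have hT : TriangleFace 𝓕 T v w b I W X := ⟨ht, h.across₂.symm, hW,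
    ⟨h.across₂.right_mem, h.across₁.right_mem, hTX, ht.ne_zero 2, Sym2.eq_swap ▸ hX.ne_zero 1⟩⟩
  have hR : TriangleFace 𝓕 R w u a I X U := ⟨hr, h.across₃.symm,
    ⟨h.across₃.right_mem, h.across₁.right_mem, hRX, hr.ne_zero 1, Sym2.eq_swap ▸ hX.ne_zero 3⟩, hU⟩
  have hTK : T ∈ K := hK.mem hI h.across₂ ht.size_eq
  have hRK : R ∈ K := hK.mem hI h.across₃ hr.size_eq
  refine ⟨[I, T, R], by simp, ?_, by simp [hI, hTK, hRK], ?_, ?_⟩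
  · simp [h.across₂.ne, h.across₃.ne, h.ne_of_isPolygon ht hr]
  · simp only [IsTriangleClosed, Set.mem_ofPred_eq, List.forall_mem_cons]
    exact ⟨h.isClosedAt hF (by simp) (absurd · hXsize) (by simp) (by simp),
      hT.isClosedAt hF (by simp) (by simp) (absurd · hWsize) (absurd · hXsize),
      hR.isClosedAt hF (by simp) (by simp) (absurd · hXsize) (absurd · hUsize), by simp⟩
  · have := h.charge_add_charge_add_charge_le_received
    have := hT.charge_add_charge_add_charge_le_received
    have := hR.charge_add_charge_add_charge_le_received
    have := two_le_charge hXsize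
    have := two_le_charge hUsize
    have := two_le_charge hWsize
    simp only [List.length_cons, List.length_nil, List.map_cons, List.map_nil, List.sum_cons,
      List.sum_nil]
    lia

end

theorem hasBalancedBlock_of_charge_le_two (hF : FaceSystem G 𝓕)
    (h : TriangleFace 𝓕 I u v w X T R) (hT : size T = 3) (hR : size R = 3) (hX : charge X ≤ 2)
    (hK : IsTriangleClosed 𝓕 K) (hI : I ∈ K) : HasBalancedBlock 𝓕 K := by
  obtain ⟨b, ht⟩ := exists_isPolygon_of_size_eq_three
    (hF.mem_cycleSpace T h.across₂.right_mem) h.across₂.right_ne_zero hT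
  obtain ⟨a, hr⟩ := exists_isPolygon_of_size_eq_three
    (hF.mem_cycleSpace R h.across₃.right_mem) h.across₃.right_ne_zero hR
  by_cases hab : a = b
  · exact h.hasBalancedBlock_of_apex_eq hF ht hr hab hK hI
  by_cases hX₃ : size X = 3
  · exact h.hasBalancedBlock_of_size_eq_three hF ht hr hX₃ hK hI
  rcases exists_isPolygon_or_charge_eq_five (hF.mem_cycleSpace X h.across₁.right_mem)
    h.across₁.right_ne_zero hX₃ with ⟨p, q, hx⟩ | ⟨p, q, r, hx⟩ | hx
  · obtain ⟨rfl, rfl⟩ := h.eq_and_eq_of_isPolygon₄ hF ht hr hab hx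
    exact h.hasBalancedBlock_of_isPolygon₄ hF ht hr hx hK hI
  · exact absurd hx.charge₅ (by lia)
  · lia

end TriangleFace

theorem IsTriangleClosed.hasBalancedBlock_of_received_lt_three [Fintype V] (hF : FaceSystem G 𝓕)
    (hK : IsTriangleClosed 𝓕 K) (hI : I ∈ K) (hlt : received 𝓕 I < 3) : HasBalancedBlock 𝓕 K := by
  obtain ⟨hmem, hsize, -⟩ := hK I hI
  obtain ⟨u, v, w, X, Y, Z, h⟩ := hF.exists_triangleFace hmem hsize
  have hsum := h.charge_add_charge_add_charge_le_received
  have hcharge (S : EdgeChain V) : size S = 3 ∨ 2 ≤ charge S :=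
    or_iff_not_imp_left.2 two_le_charge
  have : (size Y = 3 ∧ size Z = 3 ∧ charge X ≤ 2) ∨ (size Z = 3 ∧ size X = 3 ∧ charge Y ≤ 2) ∨
      (size X = 3 ∧ size Y = 3 ∧ charge Z ≤ 2) := by
    have := hcharge X
    have := hcharge Y
    have := hcharge Z
    lia
  rcases this with ⟨hY, hZ, hX⟩ | ⟨hZ, hX, hY⟩ | ⟨hX, hY, hZ⟩
  · exact h.hasBalancedBlock_of_charge_le_two hF hY hZ hX hK hI
  · exact h.rotate.hasBalancedBlock_of_charge_le_two hF hZ hX hY hK hI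
  · exact h.rotate.rotate.hasBalancedBlock_of_charge_le_two hF hX hY hZ hK hI

end Theta6

/-! ### Discharging: counting the faces -/

namespace Theta6

variable {V : Type*} {G : SimpleGraph V} {𝓕 𝒮 : Finset (EdgeChain V)}

theorem IsTriangleClosed.sdiff [DecidableEq (EdgeChain V)] {𝒯 : Finset (EdgeChain V)}
    (h𝒮 : IsTriangleClosed 𝓕 𝒮) (h𝒯 : IsTriangleClosed 𝓕 𝒯) :
    IsTriangleClosed 𝓕 ↑(𝒮 \ 𝒯) := by
  intro S hS
  rw [Finset.coe_sdiff] at hS ⊢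
  obtain ⟨hmem, hsize, hclosed⟩ := h𝒮 S hS.1
  exact ⟨hmem, hsize, fun e T hT hSe hTe hTsize => ⟨hclosed e T hT hSe hTe hTsize,
    fun hT𝒯 => hS.2 ((h𝒯 T hT𝒯).2.2 e S hmem hTe hSe hsize)⟩⟩

variable [Fintype V]

theorem IsTriangleClosed.three_mul_card_le_sum_received (hF : FaceSystem G 𝓕)
    (h : IsTriangleClosed 𝓕 𝒮) : 3 * 𝒮.card ≤ ∑ S ∈ 𝒮, received 𝓕 S := by
  classical
  induction 𝒮 using Finset.strongInduction with | _ 𝒮 ih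
  by_cases! hall : ∀ S ∈ 𝒮, 3 ≤ received 𝓕 S
  · simpa [mul_comm] using 𝒮.card_nsmul_le_sum (received 𝓕) 3 hall
  obtain ⟨I, hI, hlt⟩ := hall
  obtain ⟨l, hne, hnodup, hsub, hclosed, hsum⟩ :=
    h.hasBalancedBlock_of_received_lt_three hF hI hlt
  have hl : l.toFinset ⊆ 𝒮 := fun S hS => hsub S (List.mem_toFinset.1 hS)
  have hlt : 𝒮 \ l.toFinset ⊂ 𝒮 :=
    Finset.sdiff_ssubset hl ((List.toFinset_nonempty_iff l).2 hne)
  have hrest := ih _ hlt (h.sdiff (by rwa [List.coe_toFinset]))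
  have hcard := Finset.card_sdiff_add_card_eq_card hl
  have hsplit := Finset.sum_sdiff (f := received 𝓕) hl
  rw [List.toFinset_card_of_nodup hnodup] at hcard
  rw [List.sum_toFinset _ hnodup] at hsplit
  lia

theorem size_eq_card_filter (S : EdgeChain V) :
    size S = (Finset.univ.filter fun e => S e ≠ 0).card := by
  rw [size, ← Set.ncard_coe_finset]
  simp only [Finset.coe_filter_univ, Function.support]

theorem sum_received_le (hF : FaceSystem G 𝓕) (h : 𝒮 ⊆ 𝓕) :
    ∑ S ∈ 𝒮, received 𝓕 S ≤ ∑ T ∈ 𝓕, charge T * size T := by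
  classical
  have hcard {T : EdgeChain V} (hT : T ∈ 𝓕) {e : Sym2 V} (he : T e ≠ 0) :
      {S ∈ 𝒮 | S ≠ T ∧ S e ≠ 0}.card ≤ 1 := by
    refine Finset.card_le_one.2 fun S hS U hU => ?_
    simp only [Finset.mem_filter] at hS hU
    grind [hF.sparse T hT S (h hS.1) U (h hU.1) e he hS.2.2 hU.2.2]
  calc ∑ S ∈ 𝒮, received 𝓕 S
      = ∑ e, ∑ S ∈ 𝒮 with S e ≠ 0, ∑ T ∈ 𝓕 with T ≠ S ∧ T e ≠ 0, charge T :=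
        Finset.sum_comm' (by simp)
    _ = ∑ e, ∑ T ∈ 𝓕 with T e ≠ 0, ∑ S ∈ 𝒮 with S ≠ T ∧ S e ≠ 0, charge T :=
        Finset.sum_congr rfl fun e _ => Finset.sum_comm' (by simp; grind)
    _ ≤ ∑ e, ∑ T ∈ 𝓕 with T e ≠ 0, charge T := by
        refine Finset.sum_le_sum fun e _ => Finset.sum_le_sum fun T hT => ?_
        obtain ⟨hT, he⟩ := Finset.mem_filter.1 hT
        rw [Finset.sum_const, smul_eq_mul]
        exact mul_le_of_le_one_left (Nat.zero_le _) (hcard hT he)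
    _ = ∑ T ∈ 𝓕, ∑ e with T e ≠ 0, charge T := Finset.sum_comm' (by simp [and_comm])
    _ = ∑ T ∈ 𝓕, charge T * size T := Finset.sum_congr rfl fun T _ => by
        rw [Finset.sum_const, smul_eq_mul, mul_comm, size_eq_card_filter]

namespace FaceSystem

theorem three_mul_card_triangles_le (hF : FaceSystem G 𝓕) :
    3 * {S ∈ 𝓕 | size S = 3}.card ≤ ∑ T ∈ 𝓕, charge T * size T := by
  have hclosed : IsTriangleClosed 𝓕 ↑{S ∈ 𝓕 | size S = 3} := fun S hS => by
    obtain ⟨hS, hsize⟩ := Finset.mem_filter.1 hS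
    exact ⟨hS, hsize, fun e T hT _ _ h => Finset.mem_filter.2 ⟨hT, h⟩⟩
  exact (hclosed.three_mul_card_le_sum_received hF).trans
    (sum_received_le hF (Finset.filter_subset _ _))

theorem sum_size_le (hF : FaceSystem G 𝓕) : ∑ T ∈ 𝓕, size T ≤ 2 * G.edgeSet.ncard := by
  classical
  have hcard (e : Sym2 V) : {T ∈ 𝓕 | T e ≠ 0}.card ≤ 2 := by
    by_contra! hlt
    obtain ⟨S, T, U, hS, hT, hU, hST, hSU, hTU⟩ := Finset.two_lt_card_iff.1 hlt
    simp only [Finset.mem_filter] at hS hT hU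
    grind [hF.sparse S hS.1 T hT.1 U hU.1 e hS.2 hT.2 hU.2]
  calc ∑ T ∈ 𝓕, size T = ∑ T ∈ 𝓕, ∑ e with T e ≠ 0, 1 := by
        simp only [size_eq_card_filter, Finset.sum_const, smul_eq_mul, mul_one]
    _ = ∑ e ∈ G.edgeSet.toFinset, ∑ T ∈ 𝓕 with T e ≠ 0, 1 := Finset.sum_comm' fun T e => by
        have := fun hT => mem_edgeSet_of_ne_zero
          (mem_chains_of_mem_cycleSpace (hF.mem_cycleSpace T hT)) (e := e)
        simp; tauto
    _ ≤ ∑ e ∈ G.edgeSet.toFinset, 2 := Finset.sum_le_sum fun e _ => by simpa using hcard e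
    _ = 2 * G.edgeSet.ncard := by
        rw [Finset.sum_const, smul_eq_mul, mul_comm, Set.ncard_eq_toFinset_card']

theorem card_le (hF : FaceSystem G 𝓕) : 18 * 𝓕.card ≤ 11 * G.edgeSet.ncard := by
  classical
  have htriangles := hF.three_mul_card_triangles_le
  have hsize := hF.sum_size_le
  have hsum : ∑ T ∈ 𝓕, (36 + charge T * size T) ≤
      ∑ T ∈ 𝓕, (11 * size T + if size T = 3 then 3 else 0) := by
    refine Finset.sum_le_sum fun T hT => ?_
    have := three_le_size (hF.mem_cycleSpace T hT) (hF.ne_zero hT)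
    unfold charge
    split <;> grind
  simp only [Finset.sum_add_distrib, ← Finset.mul_sum, Finset.sum_const, ← Finset.sum_filter,
    smul_eq_mul] at hsum
  lia

end FaceSystem

end Theta6

/-! ### The faces of a graph without separating vertices -/

namespace Theta6

variable {V : Type*} [Fintype V] {G : SimpleGraph V} {a b d v : V}

namespace IsFaceFamily

variable {ι : Type*} [Fintype ι] {F : ι → EdgeChain V} {i j : ι}

theorem card_le_length (hF : IsFaceFamily G F) {l : List ι} (hl : (l.map F).sum = 0)
    [DecidableEq ι] (hi : Odd (l.count i)) : Fintype.card ι ≤ l.length := by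
  have hsum : ∑ k, (l.count k : ZMod 2) • F k = 0 := by
    rw [← hl, Finset.sum_list_map_count]
    simp only [Nat.cast_smul_eq_nsmul]
    exact (Finset.sum_subset (Finset.subset_univ _)
      fun k _ hk => by simp [List.count_eq_zero.2 (mt List.mem_toFinset.2 hk)]).symm
  have hmem (k : ι) : k ∈ l.toFinset := by
    have := hF.coeff_eq _ hsum k i
    rw [(ZMod.natCast_eq_one_iff_odd).2 hi] at this
    exact List.mem_toFinset.2 (List.count_pos_iff.1 ((ZMod.natCast_eq_one_iff_odd).1 this).pos)
  rw [← Finset.card_univ, ← Finset.eq_univ_iff_forall.2 hmem]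
  exact l.toFinset_card_le

theorem injective (hF : IsFaceFamily G F) (h : 3 ≤ Fintype.card ι) : Function.Injective F := by
  classical
  intro i j hij
  by_contra hne
  have := hF.card_le_length (l := [i, j]) (i := i) (by simp [hij, ZModModule.add_self])
    (by simp [hne])
  exact absurd (h.trans this) (by simp)

theorem mem_of_sum_eq (hF : IsFaceFamily G F) {l : List ι} (hl : l.length + 2 ≤ Fintype.card ι)
    (h : (l.map F).sum = F i) : i ∈ l := by
  classical
  by_contra hi
  have := hF.card_le_length (l := i :: l) (i := i) (by simp [h, ZModModule.add_self])
    (by simp [List.count_eq_zero.2 hi])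
  simp only [List.length_cons] at this
  lia

theorem eq_of_star (hF : IsFaceFamily G F) (hd : G.Adj v d) (hda : d ≠ a) (hdb : d ≠ b)
    (h : (G.deleteIncidenceSet v).Reachable a d)
    (hi : ∀ u, F i s(v, u) ≠ 0 ↔ u = a ∨ u = b) (hj : ∀ u, F j s(v, u) ≠ 0 ↔ u = a ∨ u = b) :
    i = j := by
  classical
  by_contra hij
  have ha : F i s(v, a) ≠ 0 := (hi a).2 (.inl rfl)
  have havoids : Avoids (∑ k, (if k = i ∨ k = j then (1 : ZMod 2) else 0) • F k) v := fun u => by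
    have hiff : F i s(v, u) ≠ 0 ↔ F j s(v, u) ≠ 0 := (hi u).trans (hj u).symm
    have heq : F i s(v, u) = F j s(v, u) := by
      by_cases h0 : F i s(v, u) = 0
      · rw [h0, of_not_not (mt hiff.2 (not_not.2 h0))]
      · rw [eq_one_of_ne_zero h0, eq_one_of_ne_zero (hiff.1 h0)]
    simp only [ite_smul, one_smul, zero_smul]
    rw [← Finset.sum_filter, (by ext; simp : ({k | k = i ∨ k = j} : Finset ι) = {i, j}),
      Finset.sum_pair hij, Pi.add_apply, heq, CharTwo.add_self_eq_zero]
  obtain ⟨k, hk, hkd⟩ := hF.exists_of_reachable havoids (G.deleteIncidenceSet_le v)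
    (by simp [deleteIncidenceSet_adj])
    (adj_of_ne_zero (mem_chains_of_mem_cycleSpace (hF.mem i)) ha) hd h ⟨i, by simp, ha⟩
  grind

theorem faceSystem [DecidableEq (EdgeChain V)] (hF : IsFaceFamily G F) (h : 7 ≤ Fintype.card ι)
    (hp : IsPlanar G) (ht : ¬ HasTheta6 G)
    (hd : ∀ v a b, ∃ d, G.Adj v d ∧ d ≠ a ∧ d ≠ b)
    (hr : ∀ v a b, a ≠ v → b ≠ v → (G.deleteIncidenceSet v).Reachable a b) :
    FaceSystem G (Finset.univ.image F) where
  isPlanar := hp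
  not_hasTheta6 := ht
  mem_cycleSpace := by simpa using hF.mem
  exists_ne := by
    simp only [Finset.forall_mem_image, Finset.exists_mem_image, Finset.mem_univ, forall_const,
      true_and]
    intro i e he
    obtain ⟨j, hj, hje⟩ := exists_ne_of_sum_eq_zero hF.sum_eq_zero he
    exact ⟨j, (hF.injective (by lia)).ne hj, hje⟩
  sparse := by
    simp only [Finset.forall_mem_image, Finset.mem_univ, forall_const]
    intro i j k e hi hj hk
    rcases hF.sparse e i j k hi hj hk with rfl | rfl | rfl <;> simp
  eq_of_star := by
    simp only [Finset.forall_mem_image, Finset.mem_univ, forall_const]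
    intro i j v a b hi hj
    obtain ⟨d, hvd, hda, hdb⟩ := hd v a b
    have hva : G.Adj v a :=
      adj_of_ne_zero (mem_chains_of_mem_cycleSpace (hF.mem i)) ((hi a).2 (.inl rfl))
    rw [hF.eq_of_star hvd hda hdb (hr v a d hva.ne' hvd.ne') hi hj]
  sum_mem := by
    intro l hl hmem hsum
    obtain ⟨l, rfl⟩ : l ∈ Set.range (List.map F) := by
      rw [Set.range_list_map]
      simpa using hmem
    obtain ⟨i, -, hi⟩ := Finset.mem_image.1 hsum
    rw [List.length_map] at hl
    rw [← hi]
    exact List.mem_map_of_mem (hF.mem_of_sum_eq (by lia) hi.symm)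

end IsFaceFamily

end Theta6

/-! ### Induction on the number of vertices -/

namespace Theta6

variable {V : Type*} {G : SimpleGraph V} {A B : Set V} {a b p q s : V}

/-- The edge bound `e ≤ (18 n - 27) / 7` for a finite graph, multiplied out so that it is an
inequality of natural numbers without subtraction. -/
def EdgeBound (G : SimpleGraph V) : Prop :=
  7 * G.edgeSet.ncard + 27 ≤ 18 * Nat.card V

theorem ncard_edgeSet_le_induce_add [Finite V] {T : Set (Sym2 V)}
    (h : ∀ a b, G.Adj a b → (a ∈ A ∧ b ∈ A) ∨ s(a, b) ∈ T) :
    G.edgeSet.ncard ≤ (G.induce A).edgeSet.ncard + T.ncard := by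
  have hsub : G.edgeSet ⊆ Sym2.map Subtype.val '' (G.induce A).edgeSet ∪ T := by
    rintro ⟨a, b⟩ hab
    exact (h a b hab).imp_left fun ⟨ha, hb⟩ => ⟨s(⟨a, ha⟩, ⟨b, hb⟩), hab, rfl⟩
  calc G.edgeSet.ncard
    _ ≤ (Sym2.map Subtype.val '' (G.induce A).edgeSet).ncard + T.ncard :=
      (Set.ncard_le_ncard hsub).trans (Set.ncard_union_le _ _)
    _ ≤ _ := Nat.add_le_add_right (Set.ncard_image_le (Set.toFinite _)) _

theorem ncard_edgeSet_le_induce_add_induce [Finite V]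
    (h : ∀ a b, G.Adj a b → (a ∈ A ∧ b ∈ A) ∨ (a ∈ B ∧ b ∈ B)) :
    G.edgeSet.ncard ≤ (G.induce A).edgeSet.ncard + (G.induce B).edgeSet.ncard :=
  (ncard_edgeSet_le_induce_add (T := Sym2.map Subtype.val '' (G.induce B).edgeSet)
    fun a b hab => (h a b hab).imp_right fun ⟨ha, hb⟩ => ⟨s(⟨a, ha⟩, ⟨b, hb⟩), hab, rfl⟩).trans
    (Nat.add_le_add_left (Set.ncard_image_le (Set.toFinite _)) _)

theorem edgeBound_of_card_le_four (h2 : 2 ≤ Nat.card V) (h4 : Nat.card V ≤ 4) : EdgeBound G := by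
  have : Finite V := Nat.finite_of_card_ne_zero (by lia)
  have := Fintype.ofFinite V
  classical
  have hle := G.card_edgeFinset_le_card_choose_two
  rw [← Set.ncard_coe_finset, coe_edgeFinset, ← Nat.card_eq_fintype_card] at hle
  rw [EdgeBound]
  interval_cases Nat.card V <;> simp only [Nat.choose] at hle <;> lia

theorem edgeBound_of_adj_imp [Finite V] (h : EdgeBound (G.induce {s}ᶜ))
    (hs : ∀ d, G.Adj s d → d = a ∨ d = b) : EdgeBound G := by
  have hle : G.edgeSet.ncard ≤ (G.induce {s}ᶜ).edgeSet.ncard + ({s(s, a), s(s, b)} : Set _).ncard :=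
    ncard_edgeSet_le_induce_add fun x y hxy => by
      have := hs x
      have := hs y
      have := hxy.symm
      grind
  have hpair := Set.ncard_insert_le s(s, a) {s(s, b)}
  have hcard := Set.ncard_add_ncard_compl {s}
  rw [Set.ncard_singleton] at hpair hcard
  rw [EdgeBound, Nat.card_coe_set_eq] at h
  rw [EdgeBound]
  lia

theorem edgeBound_of_not_reachable [Finite V]
    (ih : ∀ A : Set V, A.Nontrivial → A ≠ .univ → EdgeBound (G.induce A)) (hp : p ≠ s) (hq : q ≠ s)
    (h : ¬ (G.deleteIncidenceSet s).Reachable p q) : EdgeBound G := by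
  set A : Set V := {x | x ≠ s ∧ (G.deleteIncidenceSet s).Reachable p x}
  have hsA : s ∉ A := fun hs => hs.1 rfl
  have hpA : p ∈ A := ⟨hp, .rfl⟩
  have hqA : q ∉ A := fun hq => h hq.2
  have hclosed (x y) (hxy : G.Adj x y) (hy : y ≠ s) (hx : x ∈ A) : y ∈ A :=
    ⟨hy, hx.2.trans (deleteIncidenceSet_adj.2 ⟨hxy, hx.1, hy⟩).reachable⟩
  have hle :
      G.edgeSet.ncard ≤ (G.induce (insert s A)).edgeSet.ncard + (G.induce Aᶜ).edgeSet.ncard :=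
    ncard_edgeSet_le_induce_add_induce fun x y hxy => by
      have := hclosed x y hxy
      have := hclosed y x hxy.symm
      grind
  have hleft := ih (insert s A) ⟨s, by simp, p, by simp [hpA], hp.symm⟩
    (Set.ne_univ_iff_exists_notMem _ |>.2 ⟨q, by simp [hq, hqA]⟩)
  have hright := ih Aᶜ ⟨s, hsA, q, hqA, hq.symm⟩
    (Set.ne_univ_iff_exists_notMem _ |>.2 ⟨p, not_not.2 hpA⟩)
  have hcard := Set.ncard_add_ncard_compl A
  rw [EdgeBound, Nat.card_coe_set_eq] at hleft hright
  rw [Set.ncard_insert_of_notMem hsA] at hleft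
  rw [EdgeBound]
  lia

theorem edgeBound_of_reachable [Fintype V] (hn : 5 ≤ Fintype.card V) (hp : IsPlanar G)
    (ht : ¬ HasTheta6 G) (hd : ∀ v a b, ∃ d, G.Adj v d ∧ d ≠ a ∧ d ≠ b)
    (hr : ∀ v a b, a ≠ v → b ≠ v → (G.deleteIncidenceSet v).Reachable a b) : EdgeBound G := by
  classical
  have : Nonempty V := Fintype.card_pos_iff.1 (by lia)
  rw [EdgeBound, Nat.card_eq_fintype_card]
  obtain ⟨ι, _, F, hF⟩ := (isMacLane_of_isPlanar hp).exists_isFaceFamily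
  have heuler := hF.euler
  by_cases hι : 7 ≤ Fintype.card ι
  · have := (hF.faceSystem hι hp ht hd hr).card_le
    rw [Finset.card_image_of_injective _ (hF.injective (by lia)), Finset.card_univ] at this
    lia
  · lia

theorem edgeBound_of_isPlanar [Finite V] [Nontrivial V] (hp : IsPlanar G) (ht : ¬ HasTheta6 G) :
    EdgeBound G := by
  induction h : Nat.card V using Nat.strong_induction_on generalizing V with | _ n ih
  have ih (A : Set V) (hA : A.Nontrivial) (hA' : A ≠ .univ) : EdgeBound (G.induce A) := by
    have := hA.coe_sort
    have hlt : Nat.card A < n := by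
      rw [← h, Nat.card_coe_set_eq]
      exact Set.ncard_lt_card hA'
    have hle : G.induce A ⊑ G := ⟨(Embedding.induce A).toCopy⟩
    exact ih _ hlt (hp.of_isContained hle) (mt (HasTheta6.of_isContained hle) ht) rfl
  rcases le_or_gt (Nat.card V) 4 with h4 | h4
  · exact edgeBound_of_card_le_four Finite.one_lt_card h4
  by_cases hd : ∀ v a b, ∃ d, G.Adj v d ∧ d ≠ a ∧ d ≠ b
  · by_cases hr : ∀ v a b, a ≠ v → b ≠ v → (G.deleteIncidenceSet v).Reachable a b
    · have := Fintype.ofFinite V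
      exact edgeBound_of_reachable (by rwa [Nat.card_eq_fintype_card] at h4) hp ht hd hr
    · push Not at hr
      obtain ⟨v, a, b, ha, hb, hab⟩ := hr
      exact edgeBound_of_not_reachable ih ha hb hab
  · push Not at hd
    obtain ⟨v, a, b, hv⟩ := hd
    have hcompl : ({v}ᶜ : Set V).Nontrivial := by
      have := Set.ncard_add_ncard_compl {v}
      rw [Set.ncard_singleton] at this
      exact Set.one_lt_ncard_iff_nontrivial.1 (by lia)
    exact edgeBound_of_adj_imp (ih _ hcompl (by simp)) fun d hd => by
      have := hv d hd
      tauto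

end Theta6

/-- Every `n`-vertex (`n ≥ 2`) planar graph containing no Theta graph on
6 vertices as a subgraph has at most `18n/7 - 27/7` edges. -/
theorem theta6_planar_weak_bound {V : Type*} [Fintype V] (n : ℕ)
    (G : SimpleGraph V) (hcard : Fintype.card V = n) (hn : 2 ≤ n)
    (hplanar : IsPlanar G) (hfree : ¬ HasTheta6 G) :
    (G.edgeSet.ncard : ℚ) ≤ 18 / 7 * n - 27 / 7 := by
  subst hcard
  have : Nontrivial V := Fintype.one_lt_card_iff_nontrivial.1 hn
  have hbound := Theta6.edgeBound_of_isPlanar hplanar hfree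
  rw [Theta6.EdgeBound, Nat.card_eq_fintype_card] at hbound
  have hcast : (7 * G.edgeSet.ncard + 27 : ℚ) ≤ 18 * Fintype.card V := by exact_mod_cast hbound
  linarith
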